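/- Let ε > 0 be fixed and let k ≥ 2 be an even integer; set Θ_k := 2 − 1/(5k−2). There exist constants C = C(ε,k) > 0 and B = B(ε,k) > 0 such that the following holds. Let d ≥ 2 be an integer, let N ≥ 2 be real, and let N_1, …, N_40 ≥ 1/2 be reals with N_1 ⋯ N_40 ≤ N^{Θ_k−ε}. For each j = 1, …, 40, let a_j : ℕ → ℂ be one of the three functions n ↦ 1, n ↦ μ(n), or n ↦ log n, and assume that a_j is n ↦ 1 or n ↦ log n for every j with N_j > N^{1/10}. Then ∫_{−∞}^{∞} Σ*_{χ mod d} |Π_{j=1}^{40} Σ_{N_j < n ≤ 2N_j} a_j(n) χ(n) n^{−1/2−it}| dt/(t²+1) ≤ C · ((N+d)^k N^{1−(k−1)Θ_k/2}/d) · (log(dN))^B. -/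

import Mathlib

open MeasureTheory Real Complex Finset

/-- The sum of `f` over all primitive Dirichlet characters modulo `d`
(a finite sum, since there are finitely many Dirichlet characters modulo `d`). -/
noncomputable def sumPrimitive (d : ℕ) (f : DirichletCharacter ℂ d → ℝ) : ℝ :=
  ∑ᶠ χ ∈ {χ : DirichletCharacter ℂ d | χ.IsPrimitive}, f χ

/-! By Cauchy-Schwarz it is enough to write the product as `A * B` and to bound the mean squares of
`A` and `B`. Orthogonality of characters and the Lorentz weight give `≪ d + X` for a Dirichlet
polynomial of length `X`; logarithms and divisor functions are absorbed by the `ε` in the exponent.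
If the total length is `Λ ^ 5`, then either the factors can be shared out so that `A` and `B` have
length at most `Λ ^ 3`, or one factor is longer than `Λ ^ 3`, or two comparable factors longer than
`Λ` together exceed `Λ ^ 3`. In the last two cases the factors involved have monotone weights.
Expanding `χ` by Gauss sums then gives a fourth moment bound for their sums over short intervals,
and cutting the region under a hyperbola into rectangles turns it into a mean square bound `≪ d * s`
with `s ≈ Λ ^ 3 / N`, while the complementary product has length at most `Λ ^ 2`. For
`Λ ≈ N ^ (Θ / 5)` every case yields the bound `√s * (N + d)`. -/

/-! ### Orthogonality of characters and the large sieve to a single modulus -/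

section LargeSieve

variable {ι : Type*} {d : ℕ}

lemma conj_dirichletCharacter_apply (χ : DirichletCharacter ℂ d) {a : ZMod d} (ha : IsUnit a) :
    starRingEnd ℂ (χ a) = χ a⁻¹ := by
  have hstar := MulChar.star_apply' χ a
  rw [← starRingEnd_apply, MulChar.inv_apply_eq_inv'] at hstar
  rw [hstar]
  refine inv_eq_of_mul_eq_one_right ?_
  rw [← map_mul, ZMod.mul_inv_of_unit a ha, map_one]

lemma sum_conj_mul_dirichletCharacter [NeZero d] (a b : ZMod d) :
    ∑ χ : DirichletCharacter ℂ d, starRingEnd ℂ (χ a) * χ b =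
      if IsUnit a ∧ a = b then (d.totient : ℂ) else 0 := by
  by_cases ha : IsUnit a
  · simp_rw [conj_dirichletCharacter_apply _ ha,
      DirichletCharacter.sum_char_inv_mul_char_eq ℂ ha, ha, true_and]
  · simp [MulChar.map_nonunit _ ha, ha]

lemma sum_norm_sq_sum_mul_dirichletCharacter [NeZero d] (W : ZMod d → ℂ) :
    ∑ χ : DirichletCharacter ℂ d, ‖∑ r, W r * χ r‖ ^ 2 =
      d.totient * ∑ r with IsUnit r, ‖W r‖ ^ 2 := by
  have expand (χ : DirichletCharacter ℂ d) : ((‖∑ r, W r * χ r‖ ^ 2 : ℝ) : ℂ) =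
      ∑ a, ∑ b, starRingEnd ℂ (W a) * W b * (starRingEnd ℂ (χ a) * χ b) := by
    rw [ofReal_pow, ← conj_mul', map_sum, sum_mul_sum]
    refine sum_congr rfl fun a _ => sum_congr rfl fun b _ => ?_
    rw [map_mul]
    ring
  apply ofReal_injective
  rw [ofReal_sum]
  simp_rw [expand]
  rw [sum_comm, ofReal_mul, ofReal_sum, mul_sum, sum_filter]
  refine sum_congr rfl fun a _ => ?_
  rw [sum_comm]
  simp_rw [← mul_sum, sum_conj_mul_dirichletCharacter]
  by_cases ha : IsUnit a
  · simp only [ha, true_and, mul_ite, mul_zero, sum_ite_eq, mem_univ, if_true]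
    rw [conj_mul', mul_comm, ofReal_natCast, ofReal_pow]
  · simp [ha]

lemma sum_norm_sq_dirichletCharacter_le [NeZero d] (S : Finset ι) (w : ι → ℂ) (f : ι → ℕ) :
    ∑ χ : DirichletCharacter ℂ d, ‖∑ i ∈ S, w i * χ (f i)‖ ^ 2
      ≤ d * ∑ r : ZMod d, (∑ i ∈ S with (f i : ZMod d) = r, ‖w i‖) ^ 2 := by
  set W : ZMod d → ℂ := fun r => ∑ i ∈ S with (f i : ZMod d) = r, w i
  have sort_by_class (χ : DirichletCharacter ℂ d) :
      ∑ i ∈ S, w i * χ (f i) = ∑ r : ZMod d, W r * χ r := by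
    rw [← sum_fiberwise S (fun i => (f i : ZMod d))]
    refine sum_congr rfl fun r _ => ?_
    rw [sum_mul]
    exact sum_congr rfl fun i hi => by rw [(mem_filter.mp hi).2]
  simp_rw [sort_by_class, sum_norm_sq_sum_mul_dirichletCharacter]
  gcongr
  · exact Nat.totient_le d
  · refine (sum_le_sum_of_subset_of_nonneg (filter_subset _ _) fun _ _ _ => by positivity).trans ?_
    gcongr with r
    exact norm_sum_le _ _

lemma injOn_sub_div_of_natCast_eq (d A : ℕ) (r : ZMod d) :
    Set.InjOn (fun m => (m - A - 1) / d) {m : ℕ | A < m ∧ (m : ZMod d) = r} := by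
  rintro m ⟨hm, hmr⟩ m' ⟨hm', hmr'⟩ hdiv
  have hmod : m ≡ m' [MOD d] := (ZMod.natCast_eq_natCast_iff _ _ _).mp (hmr.trans hmr'.symm)
  have hmod' : m - A - 1 ≡ m' - A - 1 [MOD d] := by
    apply Nat.ModEq.add_right_cancel' (A + 1)
    rwa [show m - A - 1 + (A + 1) = m by omega, show m' - A - 1 + (A + 1) = m' by omega]
  have hq := Nat.div_add_mod (m - A - 1) d
  have hq' := Nat.div_add_mod (m' - A - 1) d
  dsimp only at hdiv
  rw [hdiv, hmod', hq'] at hq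
  omega

lemma card_Ioc_filter_natCast_eq_le (d A Z : ℕ) (r : ZMod d) :
    #{m ∈ Ioc A (A + Z) | ((m : ℕ) : ZMod d) = r} ≤ Z / d + 1 := by
  rw [← card_range (Z / d + 1)]
  refine card_le_card_of_injOn (fun m => (m - A - 1) / d) (fun m hm => ?_)
    ((injOn_sub_div_of_natCast_eq d A r).mono fun m hm => ?_)
  · simp only [coe_filter, Set.mem_ofPred_eq, mem_Ioc] at hm
    simp only [coe_range, Set.mem_Iio, Nat.lt_succ_iff]
    exact Nat.div_le_div_right (by omega)
  · simp only [coe_filter, Set.mem_ofPred_eq, mem_Ioc] at hm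
    exact ⟨hm.1.1, hm.2⟩

lemma sum_filter_natCast_eq_le [NeZero d] {S : Finset ι} {f : ι → ℕ} {g : ι → ℝ} {A Z : ℕ}
    (hf : ∀ i ∈ S, f i ∈ Ioc A (A + Z)) (hg : ∀ i, 0 ≤ g i) {W : ℝ} (hW : 0 ≤ W)
    (hfib : ∀ m ∈ Ioc A (A + Z), ∑ i ∈ S with f i = m, g i ≤ W) (r : ZMod d) :
    ∑ i ∈ S with (f i : ZMod d) = r, g i ≤ W * (Z / d + 1) := by
  have hmaps : ∀ i ∈ S.filter (fun i => (f i : ZMod d) = r),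
      f i ∈ (Ioc A (A + Z)).filter (fun m : ℕ => (m : ZMod d) = r) := fun i hi =>
    mem_filter.mpr ⟨hf i (mem_filter.mp hi).1, (mem_filter.mp hi).2⟩
  rw [← sum_fiberwise_of_maps_to hmaps]
  calc _ ≤ ∑ m ∈ Ioc A (A + Z) with ((m : ℕ) : ZMod d) = r, W := by
        refine sum_le_sum fun m hm => le_trans ?_ (hfib m (mem_filter.mp hm).1)
        refine sum_le_sum_of_subset_of_nonneg (fun i hi => ?_) (fun _ _ _ => hg _)
        simp only [mem_filter] at hi ⊢
        exact ⟨hi.1.1, hi.2⟩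
    _ = W * #{m ∈ Ioc A (A + Z) | ((m : ℕ) : ZMod d) = r} := by
        rw [sum_const, nsmul_eq_mul, mul_comm]
    _ ≤ W * ((Z / d + 1 : ℕ) : ℝ) := by
        gcongr
        exact card_Ioc_filter_natCast_eq_le d A Z r
    _ ≤ _ := by
        push_cast
        gcongr
        exact Nat.cast_div_le

lemma sum_norm_sq_dirichletCharacter_le_of_fiber_le [NeZero d] {S : Finset ι} {w : ι → ℂ}
    {f : ι → ℕ} {A Z : ℕ} (hf : ∀ i ∈ S, f i ∈ Ioc A (A + Z)) {W : ℝ} (hW : 0 ≤ W)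
    (hfib : ∀ m ∈ Ioc A (A + Z), ∑ i ∈ S with f i = m, ‖w i‖ ≤ W) :
    ∑ χ : DirichletCharacter ℂ d, ‖∑ i ∈ S, w i * χ (f i)‖ ^ 2 ≤ W ^ 2 * (Z + d) * Z := by
  have hd : (d : ℝ) ≠ 0 := Nat.cast_ne_zero.mpr (NeZero.ne d)
  have htotal : ∑ i ∈ S, ‖w i‖ ≤ W * Z := by
    rw [← sum_fiberwise_of_maps_to hf]
    refine (sum_le_sum hfib).trans_eq ?_
    rw [sum_const, Nat.card_Ioc, add_tsub_cancel_left, nsmul_eq_mul, mul_comm]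
  calc ∑ χ : DirichletCharacter ℂ d, ‖∑ i ∈ S, w i * χ (f i)‖ ^ 2
      ≤ d * ∑ r : ZMod d, (∑ i ∈ S with (f i : ZMod d) = r, ‖w i‖) ^ 2 :=
        sum_norm_sq_dirichletCharacter_le S w f
    _ ≤ d * ∑ r : ZMod d, (W * (Z / d + 1)) * ∑ i ∈ S with (f i : ZMod d) = r, ‖w i‖ := by
        gcongr with r
        rw [sq]
        gcongr
        exact sum_filter_natCast_eq_le hf (fun _ => norm_nonneg _) hW hfib r
    _ = d * ((W * (Z / d + 1)) * ∑ i ∈ S, ‖w i‖) := by rw [← mul_sum, sum_fiberwise]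
    _ ≤ d * ((W * (Z / d + 1)) * (W * Z)) := by gcongr
    _ = W ^ 2 * (Z + d) * Z := by field_simp

end LargeSieve

/-! ### The divisor bound -/

lemma natCast_add_one_le_two_rpow_pow {η K : ℝ} (hK : 1 ≤ K)
    (hKη : 1 ≤ K * (η * Real.log 2)) (v : ℕ) : (v + 1 : ℝ) ≤ K * ((2 : ℝ) ^ η) ^ v := by
  calc (v + 1 : ℝ) ≤ K * (1 + v * (η * Real.log 2)) := by
        nlinarith [(Nat.cast_nonneg v : (0 : ℝ) ≤ v)]
    _ ≤ K * Real.exp (v * (η * Real.log 2)) := by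
        gcongr
        linarith [Real.add_one_le_exp (v * (η * Real.log 2))]
    _ = K * ((2 : ℝ) ^ η) ^ v := by
        rw [Real.rpow_def_of_pos two_pos, ← Real.exp_nat_mul, mul_comm η]

lemma two_le_rpow_of_ceil_le {η : ℝ} (hη : 0 < η) {p : ℕ} (hp : ⌈(2 : ℝ) ^ (1 / η)⌉₊ ≤ p) :
    (2 : ℝ) ≤ (p : ℝ) ^ η := by
  have hle : (2 : ℝ) ^ (1 / η) ≤ p := (Nat.le_ceil _).trans (by exact_mod_cast hp)
  calc (2 : ℝ) = ((2 : ℝ) ^ (1 / η)) ^ η := by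
        rw [← Real.rpow_mul two_pos.le, one_div_mul_cancel hη.ne', Real.rpow_one]
    _ ≤ _ := by gcongr

lemma card_divisors_le_rpow {η : ℝ} (hη : 0 < η) :
    ∃ C : ℝ, 1 ≤ C ∧ ∀ n : ℕ, 1 ≤ n → (#n.divisors : ℝ) ≤ C * (n : ℝ) ^ η := by
  have hηlog : 0 < η * Real.log 2 := mul_pos hη (Real.log_pos one_lt_two)
  set P := ⌈(2 : ℝ) ^ (1 / η)⌉₊
  set K : ℝ := max 1 (1 / (η * Real.log 2))
  have hK : 1 ≤ K := le_max_left _ _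
  have hKη : 1 ≤ K * (η * Real.log 2) := (div_le_iff₀ hηlog).mp (le_max_right _ _)
  refine ⟨K ^ P, one_le_pow₀ hK, fun n hn => ?_⟩
  have hn0 : n ≠ 0 := by omega
  have local_factor : ∀ p ∈ n.primeFactors, ((n.factorization p : ℝ) + 1) ≤
      (if p < P then K else 1) * ((p : ℝ) ^ n.factorization p) ^ η := by
    intro p hp
    rw [← Real.rpow_natCast_mul p.cast_nonneg, mul_comm (_ : ℝ) η,
      Real.rpow_mul_natCast p.cast_nonneg]
    split_ifs with h
    · refine (natCast_add_one_le_two_rpow_pow hK hKη _).trans ?_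
      gcongr
      exact_mod_cast (Nat.prime_of_mem_primeFactors hp).two_le
    · have htwo : ((n.factorization p : ℝ) + 1) ≤ 2 ^ n.factorization p := by
        exact_mod_cast Nat.lt_two_pow_self (n := n.factorization p)
      rw [one_mul]
      exact htwo.trans (by gcongr; exact two_le_rpow_of_ceil_le hη (not_lt.mp h))
  have hcard : #{p ∈ n.primeFactors | p < P} ≤ P := by
    calc _ ≤ #(range P) := card_le_card fun p hp => mem_range.mpr (mem_filter.mp hp).2
      _ = P := card_range P
  have hprod : ∏ p ∈ n.primeFactors, (p : ℝ) ^ n.factorization p = n := by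
    exact_mod_cast Nat.prod_factorization_pow_eq_self hn0
  rw [Nat.card_divisors hn0]
  push_cast
  calc ∏ p ∈ n.primeFactors, ((n.factorization p : ℝ) + 1)
      ≤ ∏ p ∈ n.primeFactors, (if p < P then K else 1) * ((p : ℝ) ^ n.factorization p) ^ η :=
        prod_le_prod (fun _ _ => by positivity) local_factor
    _ = K ^ #{p ∈ n.primeFactors | p < P} * (n : ℝ) ^ η := by
        rw [prod_mul_distrib, Real.finsetProd_rpow _ _ (fun _ _ => by positivity), hprod,
          prod_ite, prod_const, prod_const_one, mul_one]
    _ ≤ K ^ P * (n : ℝ) ^ η := by gcongr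

lemma card_filter_mul_eq_le_card_divisors {ι : Type*} {S : Finset ι} {a b : ι → ℕ}
    (hab : Set.InjOn (fun i => (a i, b i)) S) {m : ℕ} (hm : m ≠ 0) :
    #{i ∈ S | a i * b i = m} ≤ #m.divisors := by
  refine card_le_card_of_injOn a (fun i hi => ?_) (fun i hi j hj hij => ?_)
  · rw [mem_coe, Nat.mem_divisors]
    exact ⟨⟨b i, (mem_filter.mp hi).2.symm⟩, hm⟩
  · obtain ⟨hiS, him⟩ := mem_filter.mp hi
    obtain ⟨hjS, hjm⟩ := mem_filter.mp hj
    have ha : a i ≠ 0 := left_ne_zero_of_mul (him ▸ hm)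
    refine hab hiS hjS (Prod.ext hij (mul_left_cancel₀ ha ?_))
    rw [him, hij, hjm]

/-! ### The Lorentz weight -/

/-- The weight `(t² + 1/4)⁻¹`, which majorizes `(t² + 1)⁻¹`. The shift `1/4` is chosen so that its
Fourier transform `2π exp (-|y| / 2)` at `y = log m - log n` combines with `(mn) ^ (-1/2)` to
`2π / max m n`. -/
noncomputable def lorentzWeight (t : ℝ) : ℝ := (t ^ 2 + 1 / 4)⁻¹

lemma lorentzWeight_nonneg (t : ℝ) : 0 ≤ lorentzWeight t := by
  unfold lorentzWeight
  positivity

lemma inv_sq_add_one_le_lorentzWeight (t : ℝ) : (t ^ 2 + 1)⁻¹ ≤ lorentzWeight t :=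
  inv_anti₀ (by positivity) (by linarith)

@[fun_prop]
lemma continuous_lorentzWeight : Continuous lorentzWeight :=
  Continuous.inv₀ (by fun_prop) fun t => by positivity

lemma integrable_lorentzWeight : Integrable lorentzWeight := by
  refine (integrable_inv_one_add_sq.const_mul 4).mono'
    continuous_lorentzWeight.aestronglyMeasurable (.of_forall fun t => ?_)
  rw [Real.norm_of_nonneg (lorentzWeight_nonneg t), lorentzWeight, ← one_div, ← one_div,
    mul_one_div, div_le_div_iff₀ (by positivity) (by positivity)]
  nlinarith [sq_nonneg t]

section Fourier

open FourierTransform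

lemma eqOn_Ioi_cexp_smul_exp_neg_abs (ξ : ℝ) :
    Set.EqOn (fun x : ℝ => cexp (↑(-2 * π * x * ξ) * I) • (rexp (-π * |x|) : ℂ))
      (fun x : ℝ => cexp ((-π - 2 * π * ξ * I) * x)) (Set.Ioi 0) := by
  intro x hx
  simp only [smul_eq_mul, abs_of_pos (Set.mem_Ioi.mp hx)]
  push_cast
  rw [← Complex.exp_add]
  ring_nf

lemma eqOn_Iic_cexp_smul_exp_neg_abs (ξ : ℝ) :
    Set.EqOn (fun x : ℝ => cexp (↑(-2 * π * x * ξ) * I) • (rexp (-π * |x|) : ℂ))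
      (fun x : ℝ => cexp ((π - 2 * π * ξ * I) * x)) (Set.Iic 0) := by
  intro x hx
  simp only [smul_eq_mul, abs_of_nonpos (Set.mem_Iic.mp hx)]
  push_cast
  rw [← Complex.exp_add]
  ring_nf

lemma re_neg_pi_sub_neg (ξ : ℝ) : (-π - 2 * π * ξ * I : ℂ).re < 0 := by
  simp [Real.pi_pos]

lemma re_pi_sub_pos (ξ : ℝ) : 0 < (π - 2 * π * ξ * I : ℂ).re := by
  simp [Real.pi_pos]

lemma integrableOn_Ioi_cexp_smul_exp_neg_abs (ξ : ℝ) :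
    IntegrableOn (fun x : ℝ => cexp (↑(-2 * π * x * ξ) * I) • (rexp (-π * |x|) : ℂ))
      (Set.Ioi 0) :=
  (integrableOn_exp_mul_complex_Ioi (re_neg_pi_sub_neg ξ) 0).congr_fun
    (eqOn_Ioi_cexp_smul_exp_neg_abs ξ).symm measurableSet_Ioi

lemma integrableOn_Iic_cexp_smul_exp_neg_abs (ξ : ℝ) :
    IntegrableOn (fun x : ℝ => cexp (↑(-2 * π * x * ξ) * I) • (rexp (-π * |x|) : ℂ))
      (Set.Iic 0) :=
  (integrableOn_exp_mul_complex_Iic (re_pi_sub_pos ξ) 0).congr_fun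
    (eqOn_Iic_cexp_smul_exp_neg_abs ξ).symm measurableSet_Iic

lemma integrable_exp_neg_pi_mul_abs : Integrable fun x : ℝ => (rexp (-π * |x|) : ℂ) := by
  have h := (integrableOn_Iic_cexp_smul_exp_neg_abs 0).union
    (integrableOn_Ioi_cexp_smul_exp_neg_abs 0)
  rw [Set.Iic_union_Ioi, integrableOn_univ] at h
  simpa using h

lemma fourier_exp_neg_pi_mul_abs (ξ : ℝ) :
    𝓕 (fun x : ℝ => (rexp (-π * |x|) : ℂ)) ξ = ((2 * π)⁻¹ * lorentzWeight ξ : ℝ) := by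
  rw [fourier_real_eq_integral_exp_smul, ← intervalIntegral.integral_Iic_add_Ioi
      (integrableOn_Iic_cexp_smul_exp_neg_abs ξ) (integrableOn_Ioi_cexp_smul_exp_neg_abs ξ),
    setIntegral_congr_fun measurableSet_Iic (eqOn_Iic_cexp_smul_exp_neg_abs ξ),
    setIntegral_congr_fun measurableSet_Ioi (eqOn_Ioi_cexp_smul_exp_neg_abs ξ),
    integral_exp_mul_complex_Iic (re_pi_sub_pos ξ),
    integral_exp_mul_complex_Ioi (re_neg_pi_sub_neg ξ)]
  have h_pos : (π - 2 * π * ξ * I : ℂ) ≠ 0 := fun h => by simpa [h] using re_pi_sub_pos ξ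
  have h_neg : (-π - 2 * π * ξ * I : ℂ) ≠ 0 := fun h => by simpa [h] using re_neg_pi_sub_neg ξ
  have h_weight : ((ξ : ℂ) ^ 2 + 1 / 4) ≠ 0 := by
    have : ((ξ ^ 2 + 1 / 4 : ℝ) : ℂ) ≠ 0 := ofReal_ne_zero.mpr (by positivity)
    simpa using this
  have hπ : (π : ℂ) ≠ 0 := ofReal_ne_zero.mpr Real.pi_ne_zero
  have h_prod : ((π - 2 * π * ξ * I) * (-π - 2 * π * ξ * I) : ℂ) =
      -4 * π ^ 2 * (ξ ^ 2 + 1 / 4) := by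
    linear_combination (-4 * π ^ 2 * ξ ^ 2 : ℂ) * (-1 : ℂ) * I_sq
  have h_sum : (1 : ℂ) / (π - 2 * π * ξ * I) + -1 / (-π - 2 * π * ξ * I)
      = (-2 * π) / (-4 * π ^ 2 * (ξ ^ 2 + 1 / 4)) := by
    rw [div_add_div _ _ h_pos h_neg, h_prod]
    ring
  simp only [lorentzWeight, ofReal_zero, mul_zero, Complex.exp_zero]
  push_cast
  rw [h_sum]
  field_simp [h_weight]
  norm_num

lemma integral_cexp_mul_lorentzWeight (y : ℝ) :
    ∫ t : ℝ, cexp (I * t * y) * (lorentzWeight t : ℂ) = 2 * π * rexp (-|y| / 2) := by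
  have hπ : (π : ℂ) ≠ 0 := ofReal_ne_zero.mpr Real.pi_ne_zero
  have hcont : Continuous fun x : ℝ => (rexp (-π * |x|) : ℂ) := by fun_prop
  have hF : 𝓕 (fun x : ℝ => (rexp (-π * |x|) : ℂ)) =
      fun ξ : ℝ => (((2 * π)⁻¹ * lorentzWeight ξ : ℝ) : ℂ) := funext fourier_exp_neg_pi_mul_abs
  have hF_int : Integrable (𝓕 fun x : ℝ => (rexp (-π * |x|) : ℂ)) := by
    rw [hF]
    exact (integrable_lorentzWeight.const_mul _).ofReal
  have inversion := congrFun
    (hcont.fourierInv_fourier_eq integrable_exp_neg_pi_mul_abs hF_int) (y / (2 * π))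
  have habs : -π * |y / (2 * π)| = -|y| / 2 := by
    rw [abs_div, abs_of_pos Real.two_pi_pos]
    field_simp
  rw [fourierInv_eq', hF, habs] at inversion
  rw [← inversion, ← integral_const_mul]
  refine integral_congr_ae (.of_forall fun t => ?_)
  have hphase : (↑(2 * π * inner ℝ t (y / (2 * π))) * I : ℂ) = I * t * y := by
    simp only [inner, RCLike.re_to_real, star_trivial]
    push_cast
    field_simp
  simp only [smul_eq_mul, hphase]
  push_cast
  field_simp

end Fourier

lemma natCast_cpow_half_line {n : ℕ} (hn : 1 ≤ n) (t : ℝ) :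
    (n : ℂ) ^ (-(1 / 2 : ℂ) - I * t) =
      rexp (-Real.log n / 2) * cexp (-I * t * Real.log n) := by
  rw [cpow_def_of_ne_zero (by exact_mod_cast (by omega : n ≠ 0)), ← natCast_log]
  push_cast
  rw [← Complex.exp_add]
  ring_nf

lemma exp_neg_log_half_mul_exp_neg_abs_log_sub {m n : ℕ} (hm : 1 ≤ m) (hn : 1 ≤ n) :
    rexp (-Real.log m / 2) * rexp (-Real.log n / 2) * rexp (-|Real.log n - Real.log m| / 2) =
      ((max m n : ℕ) : ℝ)⁻¹ := by
  wlog h : m ≤ n generalizing m n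
  · rw [max_comm, ← this hn hm (le_of_not_ge h), abs_sub_comm, mul_comm (rexp _) (rexp _)]
  have hm0 : (0 : ℝ) < m := by exact_mod_cast hm
  have hn0 : (0 : ℝ) < n := by exact_mod_cast hn
  have hlog : Real.log m ≤ Real.log n := Real.log_le_log hm0 (by exact_mod_cast h)
  rw [max_eq_right h, abs_of_nonneg (sub_nonneg.mpr hlog), ← Real.exp_add, ← Real.exp_add,
    show -Real.log m / 2 + -Real.log n / 2 + -(Real.log n - Real.log m) / 2 = -Real.log n by ring,
    Real.exp_neg, Real.exp_log hn0]

lemma integral_cpow_half_line_mul_conj {m n : ℕ} (hm : 1 ≤ m) (hn : 1 ≤ n) :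
    ∫ t : ℝ, (m : ℂ) ^ (-(1 / 2 : ℂ) - I * t) *
      starRingEnd ℂ ((n : ℂ) ^ (-(1 / 2 : ℂ) - I * t)) * (lorentzWeight t : ℂ) =
      ((2 * π * ((max m n : ℕ) : ℝ)⁻¹ : ℝ) : ℂ) := by
  have phases (t : ℝ) : (m : ℂ) ^ (-(1 / 2 : ℂ) - I * t) *
      starRingEnd ℂ ((n : ℂ) ^ (-(1 / 2 : ℂ) - I * t)) * (lorentzWeight t : ℂ) =
      ((rexp (-Real.log m / 2) * rexp (-Real.log n / 2) : ℝ) : ℂ) *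
        (cexp (I * t * (Real.log n - Real.log m : ℝ)) * (lorentzWeight t : ℂ)) := by
    have hexp : cexp (I * t * (Real.log n - Real.log m : ℝ)) =
        cexp (-I * t * Real.log m) * cexp (- -I * t * Real.log n) := by
      rw [← Complex.exp_add]
      push_cast
      ring_nf
    rw [natCast_cpow_half_line hm, natCast_cpow_half_line hn, map_mul, ← Complex.exp_conj, hexp]
    simp only [map_mul, map_neg, conj_I, conj_ofReal]
    push_cast
    ring
  simp_rw [phases]
  rw [integral_const_mul, integral_cexp_mul_lorentzWeight,
    ← exp_neg_log_half_mul_exp_neg_abs_log_sub hm hn]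
  push_cast
  ring

lemma continuous_natCast_cpow_half_line {n : ℕ} (hn : 1 ≤ n) :
    Continuous fun t : ℝ => (n : ℂ) ^ (-(1 / 2 : ℂ) - I * t) :=
  Continuous.const_cpow (by fun_prop) (Or.inl (by exact_mod_cast (by omega : n ≠ 0)))

lemma norm_natCast_cpow_half_line_le_one {n : ℕ} (hn : 1 ≤ n) (t : ℝ) :
    ‖(n : ℂ) ^ (-(1 / 2 : ℂ) - I * t)‖ ≤ 1 := by
  rw [norm_natCast_cpow_of_pos (by omega)]
  exact Real.rpow_le_one_of_one_le_of_nonpos (by exact_mod_cast hn) (by simp)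

/-! ### Mean squares of Dirichlet polynomials -/

section MeanSquare

variable {ι κ : Type*}

/-- The Dirichlet polynomial `∑ i ∈ S, w i * (f i) ^ (-s)` on the critical line `s = 1/2 + it`. The
index set is arbitrary, so that products need not be rearranged into sums over integers. -/
noncomputable def halfLinePoly (S : Finset ι) (w : ι → ℂ) (f : ι → ℕ) (t : ℝ) : ℂ :=
  ∑ i ∈ S, w i * (f i : ℂ) ^ (-(1 / 2 : ℂ) - I * t)

/-- The family `F` has Lorentz-weighted mean square at most `q`. Integrability is part of the
notion, since the integral of a non-integrable function is `0`. -/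
def LorentzMeanSquareLE (T : Finset κ) (F : κ → ℝ → ℂ) (q : ℝ) : Prop :=
  Integrable (fun t : ℝ => ∑ χ ∈ T, ‖F χ t‖ ^ 2 * lorentzWeight t) ∧
    ∫ t : ℝ, ∑ χ ∈ T, ‖F χ t‖ ^ 2 * lorentzWeight t ≤ q

lemma continuous_halfLinePoly {S : Finset ι} (w : ι → ℂ) {f : ι → ℕ} (hf : ∀ i ∈ S, 1 ≤ f i) :
    Continuous (halfLinePoly S w f) :=
  continuous_finsetSum _ fun i hi =>
    continuous_const.mul (continuous_natCast_cpow_half_line (hf i hi))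

lemma halfLinePoly_mul_halfLinePoly (S₁ : Finset ι) (S₂ : Finset κ) (w₁ : ι → ℂ)
    (w₂ : κ → ℂ) (f₁ : ι → ℕ) (f₂ : κ → ℕ) (t : ℝ) :
    halfLinePoly S₁ w₁ f₁ t * halfLinePoly S₂ w₂ f₂ t =
      halfLinePoly (S₁ ×ˢ S₂) (fun p => w₁ p.1 * w₂ p.2) (fun p => f₁ p.1 * f₂ p.2) t := by
  simp only [halfLinePoly]
  rw [sum_mul_sum, ← sum_product']
  refine sum_congr rfl fun p _ => ?_
  rw [Nat.cast_mul, natCast_mul_natCast_cpow]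
  ring

lemma integrable_norm_sq_halfLinePoly_mul_lorentzWeight {S : Finset ι} (w : ι → ℂ) {f : ι → ℕ}
    (hf : ∀ i ∈ S, 1 ≤ f i) :
    Integrable fun t : ℝ => ‖halfLinePoly S w f t‖ ^ 2 * lorentzWeight t := by
  have hcont := continuous_halfLinePoly w hf
  refine (integrable_lorentzWeight.const_mul ((∑ i ∈ S, ‖w i‖) ^ 2)).mono'
    (Continuous.aestronglyMeasurable (by fun_prop)) (.of_forall fun t => ?_)
  have hw := lorentzWeight_nonneg t
  rw [Real.norm_of_nonneg (by positivity)]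
  gcongr
  refine norm_sum_le_of_le _ fun i hi => ?_
  rw [norm_mul]
  exact mul_le_of_le_one_right (norm_nonneg _) (norm_natCast_cpow_half_line_le_one (hf i hi) t)

lemma integrable_cpow_half_line_mul_conj {m n : ℕ} (hm : 1 ≤ m) (hn : 1 ≤ n) (c : ℂ) :
    Integrable fun t : ℝ => c * ((m : ℂ) ^ (-(1 / 2 : ℂ) - I * t) *
      starRingEnd ℂ ((n : ℂ) ^ (-(1 / 2 : ℂ) - I * t)) * (lorentzWeight t : ℂ)) := by
  have hcm := continuous_natCast_cpow_half_line hm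
  have hcn := (continuous_natCast_cpow_half_line hn).star
  have hcont : Continuous fun t : ℝ => (m : ℂ) ^ (-(1 / 2 : ℂ) - I * t) *
      starRingEnd ℂ ((n : ℂ) ^ (-(1 / 2 : ℂ) - I * t)) * (lorentzWeight t : ℂ) :=
    (hcm.mul hcn).mul (continuous_ofReal.comp continuous_lorentzWeight)
  refine (integrable_lorentzWeight.mono' hcont.aestronglyMeasurable
    (.of_forall fun t => ?_)).const_mul c
  have hw := lorentzWeight_nonneg t
  rw [norm_mul, norm_mul, RCLike.norm_conj, norm_real, Real.norm_of_nonneg hw]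
  exact mul_le_of_le_one_left hw (mul_le_one₀ (norm_natCast_cpow_half_line_le_one hm t)
    (norm_nonneg _) (norm_natCast_cpow_half_line_le_one hn t))

lemma integral_norm_sq_halfLinePoly {S : Finset ι} (w : ι → ℂ) {f : ι → ℕ}
    (hf : ∀ i ∈ S, 1 ≤ f i) :
    ((∫ t : ℝ, ‖halfLinePoly S w f t‖ ^ 2 * lorentzWeight t : ℝ) : ℂ) =
      ∑ i ∈ S, ∑ j ∈ S, w i * starRingEnd ℂ (w j) *
        ((2 * π * ((max (f i) (f j) : ℕ) : ℝ)⁻¹ : ℝ) : ℂ) := by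
  have expand (t : ℝ) : ((‖halfLinePoly S w f t‖ ^ 2 * lorentzWeight t : ℝ) : ℂ) =
      ∑ i ∈ S, ∑ j ∈ S, w i * starRingEnd ℂ (w j) * ((f i : ℂ) ^ (-(1 / 2 : ℂ) - I * t) *
        starRingEnd ℂ ((f j : ℂ) ^ (-(1 / 2 : ℂ) - I * t)) * (lorentzWeight t : ℂ)) := by
    rw [ofReal_mul, ofReal_pow, ← mul_conj', halfLinePoly, map_sum, sum_mul_sum, sum_mul]
    refine sum_congr rfl fun i _ => ?_
    rw [sum_mul]
    refine sum_congr rfl fun j _ => ?_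
    rw [map_mul]
    ring
  have hint := fun i (hi : i ∈ S) j (hj : j ∈ S) =>
    integrable_cpow_half_line_mul_conj (hf i hi) (hf j hj) (w i * starRingEnd ℂ (w j))
  rw [← integral_complex_ofReal]
  simp_rw [expand]
  rw [integral_finsetSum _ fun i hi => integrable_finsetSum _ (hint i hi)]
  refine sum_congr rfl fun i hi => ?_
  rw [integral_finsetSum _ (hint i hi)]
  refine sum_congr rfl fun j hj => ?_
  rw [integral_const_mul, integral_cpow_half_line_mul_conj (hf i hi) (hf j hj)]

lemma exists_sum_Icc_eq_inv (K : ℕ) : ∃ c : ℕ → ℝ, (∀ k, 0 ≤ c k) ∧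
    ∀ M, 1 ≤ M → M ≤ K → ∑ k ∈ Icc M K, c k = (M : ℝ)⁻¹ := by
  refine ⟨fun k => if k = K then (k : ℝ)⁻¹ else (k * (k + 1) : ℝ)⁻¹,
    fun k => by dsimp only; split_ifs <;> positivity, fun M hM hMK => ?_⟩
  induction hMK using Nat.decreasingInduction with
  | self => simp
  | of_succ M hMK ih =>
    have hM0 : (M : ℝ) ≠ 0 := by exact_mod_cast (by omega : M ≠ 0)
    rw [← insert_Icc_succ_left_eq_Icc hMK.le, sum_insert (by simp), Nat.succ_eq_succ,
      Nat.succ_eq_add_one, ih (by omega), if_neg hMK.ne]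
    push_cast
    field_simp [hM0]
    ring

lemma sum_mul_conj_mul_inv_max {S : Finset ι} (w : ι → ℂ) {f : ι → ℕ} {K : ℕ}
    (hf : ∀ i ∈ S, f i ∈ Icc 1 K) {c : ℕ → ℝ}
    (hc : ∀ M, 1 ≤ M → M ≤ K → ∑ k ∈ Icc M K, c k = (M : ℝ)⁻¹) :
    ∑ i ∈ S, ∑ j ∈ S, w i * starRingEnd ℂ (w j) * ((((max (f i) (f j) : ℕ) : ℝ)⁻¹ : ℝ) : ℂ) =
      ((∑ k ∈ Icc 1 K, c k * ‖∑ i ∈ S with f i ≤ k, w i‖ ^ 2 : ℝ) : ℂ) := by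
  have inv_max (i) (hi : i ∈ S) (j) (hj : j ∈ S) : ((max (f i) (f j) : ℕ) : ℝ)⁻¹ =
      ∑ k ∈ Icc 1 K, if f i ≤ k ∧ f j ≤ k then c k else 0 := by
    obtain ⟨hi1, hiK⟩ := mem_Icc.mp (hf i hi)
    obtain ⟨-, hjK⟩ := mem_Icc.mp (hf j hj)
    rw [← hc _ (le_max_of_le_left hi1) (max_le hiK hjK), ← sum_filter]
    congr 1
    ext k
    simp only [mem_Icc, mem_filter, max_le_iff]
    omega
  have expand (k : ℕ) : ((c k * ‖∑ i ∈ S with f i ≤ k, w i‖ ^ 2 : ℝ) : ℂ) =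
      ∑ i ∈ S, ∑ j ∈ S, w i * starRingEnd ℂ (w j) *
        ((if f i ≤ k ∧ f j ≤ k then c k else 0 : ℝ) : ℂ) := by
    rw [ofReal_mul, ofReal_pow, ← mul_conj', map_sum, sum_mul_sum, mul_sum, sum_filter]
    refine sum_congr rfl fun i _ => ?_
    rw [mul_sum, sum_filter]
    split_ifs with hi
    · refine sum_congr rfl fun j _ => ?_
      split_ifs <;> simp_all [mul_comm]
    · simp [hi]
  rw [ofReal_sum]
  simp_rw [expand]
  rw [sum_comm (s := Icc 1 K)]
  refine sum_congr rfl fun i hi => ?_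
  rw [sum_comm (s := Icc 1 K)]
  refine sum_congr rfl fun j hj => ?_
  rw [inv_max i hi j hj, ofReal_sum, mul_sum]

lemma LorentzMeanSquareLE.mono {T : Finset κ} {F : κ → ℝ → ℂ} {q q' : ℝ}
    (h : LorentzMeanSquareLE T F q) (hq : q ≤ q') : LorentzMeanSquareLE T F q' :=
  ⟨h.1, h.2.trans hq⟩

lemma LorentzMeanSquareLE.congr {T : Finset κ} {F G : κ → ℝ → ℂ} {q : ℝ}
    (h : LorentzMeanSquareLE T F q) (hFG : ∀ χ ∈ T, ∀ t, G χ t = F χ t) :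
    LorentzMeanSquareLE T G q := by
  have heq : (fun t : ℝ => ∑ χ ∈ T, ‖G χ t‖ ^ 2 * lorentzWeight t) =
      fun t : ℝ => ∑ χ ∈ T, ‖F χ t‖ ^ 2 * lorentzWeight t :=
    funext fun t => sum_congr rfl fun χ hχ => by rw [hFG χ hχ t]
  unfold LorentzMeanSquareLE
  rwa [heq]

lemma lorentzMeanSquareLE_halfLinePoly (T : Finset κ) {S : Finset ι} {w : κ → ι → ℂ} {f : ι → ℕ}
    {Z B : ℝ} (hZ : 0 < Z) (hf : ∀ i ∈ S, Z ≤ f i)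
    (hB : ∀ k : ℕ, ∑ χ ∈ T, ‖∑ i ∈ S with f i ≤ k, w χ i‖ ^ 2 ≤ B) :
    LorentzMeanSquareLE T (fun χ => halfLinePoly S (w χ) f) (2 * π * (B / Z)) := by
  have hB0 : 0 ≤ B := (sum_nonneg fun _ _ => by positivity).trans (hB 0)
  have hceil : 1 ≤ ⌈Z⌉₊ := Nat.ceil_pos.mpr hZ
  have hf_ceil : ∀ i ∈ S, ⌈Z⌉₊ ≤ f i := fun i hi => Nat.ceil_le.mpr (hf i hi)
  have hf1 : ∀ i ∈ S, 1 ≤ f i := fun i hi => hceil.trans (hf_ceil i hi)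
  have hint := fun χ (_ : χ ∈ T) => integrable_norm_sq_halfLinePoly_mul_lorentzWeight (w χ) hf1
  refine ⟨integrable_finsetSum _ hint, ?_⟩
  set K := max ⌈Z⌉₊ (S.sup f)
  have hfK : ∀ i ∈ S, f i ∈ Icc 1 K := fun i hi =>
    mem_Icc.mpr ⟨hf1 i hi, (le_sup hi).trans (le_max_right _ _)⟩
  obtain ⟨c, hc0, hc⟩ := exists_sum_Icc_eq_inv K
  have hsquare (χ : κ) : ∫ t : ℝ, ‖halfLinePoly S (w χ) f t‖ ^ 2 * lorentzWeight t =
      2 * π * ∑ k ∈ Icc 1 K, c k * ‖∑ i ∈ S with f i ≤ k, w χ i‖ ^ 2 := by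
    apply ofReal_injective
    rw [integral_norm_sq_halfLinePoly _ hf1, ofReal_mul, ← sum_mul_conj_mul_inv_max _ hfK hc]
    simp_rw [ofReal_mul _ (_⁻¹), mul_left_comm _ ((2 * π : ℝ) : ℂ), ← mul_sum]
  have hvanish (k : ℕ) (hk1 : k ∈ Icc 1 K) (hk : k ∉ Icc ⌈Z⌉₊ K) :
      c k * ∑ χ ∈ T, ‖∑ i ∈ S with f i ≤ k, w χ i‖ ^ 2 = 0 := by
    have hlt : k < ⌈Z⌉₊ := by
      simp only [mem_Icc] at hk1 hk
      omega
    rw [filter_false_of_mem fun i hi => (hlt.trans_le (hf_ceil i hi)).not_ge]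
    simp
  rw [integral_finsetSum _ hint]
  simp_rw [hsquare]
  rw [← mul_sum, sum_comm]
  simp_rw [← mul_sum]
  gcongr
  calc ∑ k ∈ Icc 1 K, c k * ∑ χ ∈ T, ‖∑ i ∈ S with f i ≤ k, w χ i‖ ^ 2
      = ∑ k ∈ Icc ⌈Z⌉₊ K, c k * ∑ χ ∈ T, ‖∑ i ∈ S with f i ≤ k, w χ i‖ ^ 2 :=
        (sum_subset (Icc_subset_Icc_left hceil) hvanish).symm
    _ ≤ ∑ k ∈ Icc ⌈Z⌉₊ K, c k * B := by
        gcongr with k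
        exacts [hc0 k, hB k]
    _ = B / ⌈Z⌉₊ := by rw [← sum_mul, hc _ hceil (le_max_left _ _), inv_mul_eq_div]
    _ ≤ B / Z := by
        gcongr
        exact Nat.le_ceil Z

lemma LorentzMeanSquareLE.integral_norm_mul_le {T : Finset κ} {F G : κ → ℝ → ℂ} {p q : ℝ}
    (hp : 0 < p) (hq : 0 < q) (hF : LorentzMeanSquareLE T F p) (hG : LorentzMeanSquareLE T G q) :
    ∫ t : ℝ, (∑ χ ∈ T, ‖F χ t * G χ t‖) / (t ^ 2 + 1) ≤ √(p * q) := by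
  set l := √(q / p) with hl
  have hl0 : 0 < l := Real.sqrt_pos.mpr (by positivity)
  -- AM-GM with the parameter `l` that balances the two mean squares
  have amgm (x y : ℝ) : x * y ≤ l / 2 * x ^ 2 + 1 / (2 * l) * y ^ 2 := by
    have : l / 2 * x ^ 2 + 1 / (2 * l) * y ^ 2 - x * y = 1 / (2 * l) * (l * x - y) ^ 2 := by
      field_simp
      ring
    linarith [show 0 ≤ 1 / (2 * l) * (l * x - y) ^ 2 by positivity]
  have pointwise (t : ℝ) : (∑ χ ∈ T, ‖F χ t * G χ t‖) / (t ^ 2 + 1) ≤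
      l / 2 * (∑ χ ∈ T, ‖F χ t‖ ^ 2 * lorentzWeight t) +
        1 / (2 * l) * ∑ χ ∈ T, ‖G χ t‖ ^ 2 * lorentzWeight t := by
    rw [mul_sum, mul_sum, ← sum_add_distrib, sum_div]
    refine sum_le_sum fun χ _ => ?_
    rw [norm_mul, div_eq_mul_inv, ← mul_assoc, ← mul_assoc, ← add_mul]
    gcongr
    exacts [amgm _ _, inv_sq_add_one_le_lorentzWeight t]
  have hl_p : l * p = √(p * q) := by
    rw [hl, show p * q = q / p * p ^ 2 by field_simp, Real.sqrt_mul (by positivity),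
      Real.sqrt_sq hp.le]
  have hl_q : q = l * √(p * q) := by
    rw [hl, ← Real.sqrt_mul (by positivity), show q / p * (p * q) = q ^ 2 by field_simp,
      Real.sqrt_sq hq.le]
  calc ∫ t : ℝ, (∑ χ ∈ T, ‖F χ t * G χ t‖) / (t ^ 2 + 1)
      ≤ ∫ t : ℝ, (l / 2 * (∑ χ ∈ T, ‖F χ t‖ ^ 2 * lorentzWeight t) +
          1 / (2 * l) * ∑ χ ∈ T, ‖G χ t‖ ^ 2 * lorentzWeight t) :=
        integral_mono_of_nonneg (.of_forall fun t => by positivity)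
          ((hF.1.const_mul (l / 2)).add (hG.1.const_mul (1 / (2 * l)))) (.of_forall pointwise)
    _ = l / 2 * (∫ t : ℝ, ∑ χ ∈ T, ‖F χ t‖ ^ 2 * lorentzWeight t) +
          1 / (2 * l) * ∫ t : ℝ, ∑ χ ∈ T, ‖G χ t‖ ^ 2 * lorentzWeight t := by
        rw [integral_add (hF.1.const_mul _) (hG.1.const_mul _), integral_const_mul,
          integral_const_mul]
    _ ≤ l / 2 * p + 1 / (2 * l) * q := by gcongr; exacts [hF.2, hG.2]
    _ = √(p * q) := by
        rw [show 1 / (2 * l) * q = √(p * q) / 2 by nth_rewrite 1 [hl_q]; field_simp,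
          show l / 2 * p = √(p * q) / 2 by rw [← hl_p]; ring, add_halves]

end MeanSquare

/-! ### Gauss sums and exponential sums -/

section GaussSum

variable {d : ℕ} [NeZero d] {χ : DirichletCharacter ℂ d}

open ZMod in
lemma natCast_mul_apply_eq_gaussSum_mul_sum (hχ : χ.IsPrimitive) (x : ZMod d) :
    d * χ x = gaussSum χ stdAddChar * ∑ h, χ⁻¹ h * stdAddChar (-(h * x)) := by
  have hdft : 𝓕 (χ : ZMod d → ℂ) = fun k => χ⁻¹ (-k) * gaussSum χ stdAddChar :=
    funext fun k => hχ.fourierTransform_eq_inv_mul_gaussSum k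
  have hinv := congrFun (dft_dft (χ : ZMod d → ℂ)) (-x)
  simp only [neg_neg, smul_eq_mul] at hinv
  rw [← hinv, hdft, dft_apply, ← Equiv.sum_comp (Equiv.neg _), mul_sum]
  refine sum_congr rfl fun h _ => ?_
  simp only [Equiv.neg_apply, neg_neg, mul_neg, smul_eq_mul, neg_mul]
  ring

lemma norm_sq_gaussSum (hχ : χ.IsPrimitive) : ‖gaussSum χ (ZMod.stdAddChar (N := d))‖ ^ 2 = d := by
  have h := natCast_mul_apply_eq_gaussSum_mul_sum hχ 1
  have hconj : ∑ h, χ⁻¹ h * ZMod.stdAddChar (-(h * 1)) =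
      starRingEnd ℂ (gaussSum χ ZMod.stdAddChar) := by
    refine Eq.trans ?_ (star_gaussSum_eq χ ZMod.stdAddChar).symm
    simp only [gaussSum, mul_one, AddChar.inv_apply]
  rw [hconj, mul_conj', map_one, mul_one] at h
  exact_mod_cast h.symm

lemma norm_sq_sum_mul_dirichletCharacter_mul_natCast {ι : Type*} (hχ : χ.IsPrimitive)
    (S : Finset ι) (w : ι → ℂ) (f : ι → ZMod d) :
    ‖∑ i ∈ S, w i * χ (f i)‖ ^ 2 * d =
      ‖∑ h, χ⁻¹ h * ∑ i ∈ S, w i * ZMod.stdAddChar (-(h * f i))‖ ^ 2 := by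
  have hd : (d : ℝ) ≠ 0 := by exact_mod_cast NeZero.ne d
  have hexpand : d * ∑ i ∈ S, w i * χ (f i) = gaussSum χ ZMod.stdAddChar *
      ∑ h, χ⁻¹ h * ∑ i ∈ S, w i * ZMod.stdAddChar (-(h * f i)) := by
    simp_rw [mul_sum, mul_left_comm (d : ℂ), natCast_mul_apply_eq_gaussSum_mul_sum hχ, mul_sum]
    rw [sum_comm]
    exact sum_congr rfl fun h _ => sum_congr rfl fun i _ => by ring
  have hnorm := congrArg (‖·‖ ^ 2) hexpand
  simp only [norm_mul, mul_pow, norm_sq_gaussSum hχ, Complex.norm_natCast] at hnorm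
  apply mul_left_cancel₀ hd
  linarith

end GaussSum

section ExponentialSums

lemma norm_sum_Ioc_pow_le {z : ℂ} (hz : ‖z‖ = 1) {c : ℝ} (hc : 0 < c) (hzc : c ≤ ‖z - 1‖)
    (a b : ℕ) : ‖∑ n ∈ Ioc a b, z ^ n‖ ≤ 2 / c := by
  rcases le_total b a with hba | hab
  · rw [Ioc_eq_empty_of_le hba, sum_empty, norm_zero]
    positivity
  have hz1 : z ≠ 1 := by
    rintro rfl
    simp only [sub_self, norm_zero] at hzc
    linarith
  have hnum : ‖z ^ (b + 1) - z ^ (a + 1)‖ ≤ 2 :=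
    (norm_sub_le _ _).trans (by simp [hz, one_add_one_eq_two])
  rw [← Ico_add_one_add_one_eq_Ioc, geom_sum_Ico hz1 (by omega), norm_div]
  gcongr

lemma norm_sum_Ioc_monotone_mul_le {w : ℕ → ℝ} (hw : Monotone w) (hw0 : 0 ≤ w 0) {g : ℕ → ℂ}
    {M : ℝ} {a b : ℕ} (hg : ∀ a', a ≤ a' → ‖∑ n ∈ Ioc a' b, g n‖ ≤ M) :
    ‖∑ n ∈ Ioc a b, (w n : ℂ) * g n‖ ≤ w b * M := by
  rcases lt_or_ge b a with hba | hab
  · rw [Ioc_eq_empty_of_le hba.le, sum_empty, norm_zero]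
    exact mul_nonneg (hw0.trans (hw b.zero_le)) ((norm_nonneg _).trans (hg a le_rfl))
  have abel : ‖∑ n ∈ Ioc a b, (w n : ℂ) * g n - w a * ∑ n ∈ Ioc a b, g n‖ ≤ (w b - w a) * M := by
    induction hab using Nat.decreasingInduction with
    | self => simp
    | of_succ a hab ih =>
      have hstep : 0 ≤ w (a + 1) - w a := sub_nonneg.mpr (hw a.le_succ)
      have hsplit : ∑ n ∈ Ioc a b, (w n : ℂ) * g n - w a * ∑ n ∈ Ioc a b, g n =
          (∑ n ∈ Ioc (a + 1) b, (w n : ℂ) * g n - w (a + 1) * ∑ n ∈ Ioc (a + 1) b, g n) +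
            ((w (a + 1) - w a : ℝ) : ℂ) * ∑ n ∈ Ioc a b, g n := by
        rw [← insert_Ioc_add_one_left_eq_Ioc hab, sum_insert (by simp), sum_insert (by simp)]
        push_cast
        ring
      rw [hsplit]
      calc _ ≤ (w b - w (a + 1)) * M + (w (a + 1) - w a) * M := by
            refine norm_add_le_of_le (ih fun a' ha' => hg a' (by omega)) ?_
            rw [norm_mul, norm_real, Real.norm_of_nonneg hstep]
            exact mul_le_mul_of_nonneg_left (hg a le_rfl) hstep
        _ = (w b - w a) * M := by ring
  have hwa : 0 ≤ w a := hw0.trans (hw a.zero_le)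
  calc ‖∑ n ∈ Ioc a b, (w n : ℂ) * g n‖
      ≤ (w b - w a) * M + ‖(w a : ℂ) * ∑ n ∈ Ioc a b, g n‖ := by
        rw [← sub_add_cancel (∑ n ∈ Ioc a b, (w n : ℂ) * g n) (w a * ∑ n ∈ Ioc a b, g n)]
        exact norm_add_le_of_le abel le_rfl
    _ ≤ (w b - w a) * M + w a * M := by
        rw [norm_mul, norm_real, Real.norm_of_nonneg hwa]
        gcongr
        exact hg a le_rfl
    _ = w b * M := by ring

variable {d : ℕ} [NeZero d]

lemma four_mul_natAbs_valMinAbs_div_le_norm_stdAddChar_sub_one (x : ZMod d) :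
    4 * (x.valMinAbs.natAbs : ℝ) / d ≤ ‖ZMod.stdAddChar x - 1‖ := by
  have hd : (0 : ℝ) < d := by exact_mod_cast NeZero.pos d
  have hx : (2 : ℝ) * x.valMinAbs.natAbs ≤ d := by
    exact_mod_cast (by have := x.natAbs_valMinAbs_le; omega : 2 * x.valMinAbs.natAbs ≤ d)
  have habs : |2 * π * x.valMinAbs / d / 2| = π / 2 * (2 * x.valMinAbs.natAbs / d) := by
    rw [abs_div, abs_div, abs_mul, Nat.cast_natAbs, Int.cast_abs, abs_of_pos hd,
      abs_of_pos two_pi_pos, abs_two]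
    ring
  have hsin : 2 / π * |2 * π * x.valMinAbs / d / 2| ≤ |Real.sin (2 * π * x.valMinAbs / d / 2)| := by
    apply Real.mul_abs_le_abs_sin
    rw [habs]
    exact mul_le_of_le_one_right pi_div_two_pos.le ((div_le_one hd).mpr hx)
  have hchar : ZMod.stdAddChar x = cexp (I * ((2 * π * x.valMinAbs / d : ℝ) : ℂ)) := by
    conv_lhs => rw [← x.coe_valMinAbs, ZMod.stdAddChar_coe]
    congr 1
    push_cast
    ring
  rw [hchar, norm_exp_I_mul_ofReal_sub_one, norm_mul, Real.norm_two]
  calc 4 * (x.valMinAbs.natAbs : ℝ) / d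
      = 2 * (2 / π * |2 * π * x.valMinAbs / d / 2|) := by
        rw [habs]
        field_simp [Real.pi_ne_zero]
        ring
    _ ≤ 2 * |Real.sin (2 * π * x.valMinAbs / d / 2)| := by gcongr

lemma norm_sum_Ioc_monotone_mul_stdAddChar_le {x : ZMod d} (hx : x ≠ 0) {w : ℕ → ℝ}
    (hw : Monotone w) (hw0 : 0 ≤ w 0) (a b : ℕ) :
    ‖∑ n ∈ Ioc a b, (w n : ℂ) * ZMod.stdAddChar (-(x * (n : ZMod d)))‖ ≤
      w b * min ((b - a : ℕ) : ℝ) (d / x.valMinAbs.natAbs) := by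
  have hd : (0 : ℝ) < d := by exact_mod_cast NeZero.pos d
  have hx0 : (0 : ℝ) < x.valMinAbs.natAbs := by
    exact_mod_cast Int.natAbs_pos.mpr (x.valMinAbs_eq_zero.not.mpr hx)
  have hz : ‖ZMod.stdAddChar (-x)‖ = 1 := AddChar.norm_apply _ _
  have hzc : 4 * (x.valMinAbs.natAbs : ℝ) / d ≤ ‖ZMod.stdAddChar (-x) - 1‖ := by
    simpa only [ZMod.natAbs_valMinAbs_neg] using
      four_mul_natAbs_valMinAbs_div_le_norm_stdAddChar_sub_one (-x)
  have hpow (n : ℕ) : ZMod.stdAddChar (-(x * (n : ZMod d))) = ZMod.stdAddChar (-x) ^ n := by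
    rw [← AddChar.map_nsmul_eq_pow, nsmul_eq_mul, mul_neg, mul_comm]
  simp_rw [hpow]
  refine norm_sum_Ioc_monotone_mul_le hw hw0 fun a' ha' => le_min ?_ ?_
  · calc ‖∑ n ∈ Ioc a' b, ZMod.stdAddChar (-x) ^ n‖
        ≤ ∑ n ∈ Ioc a' b, 1 := norm_sum_le_of_le _ fun n _ => by rw [norm_pow, hz, one_pow]
      _ ≤ ((b - a : ℕ) : ℝ) := by
        rw [sum_const, Nat.card_Ioc, nsmul_one]
        exact_mod_cast Nat.sub_le_sub_left ha' b
  · calc ‖∑ n ∈ Ioc a' b, ZMod.stdAddChar (-x) ^ n‖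
        ≤ 2 / (4 * (x.valMinAbs.natAbs : ℝ) / d) :=
          norm_sum_Ioc_pow_le hz (by positivity) hzc a' b
      _ ≤ d / x.valMinAbs.natAbs := by
        rw [div_div_eq_mul_div, div_le_div_iff₀ (by positivity) hx0]
        nlinarith [mul_pos hd hx0]

lemma norm_sum_Ioc_monotone_mul_stdAddChar_le_of_le_half {h : ℕ} (h1 : 1 ≤ h) (hle : h ≤ d / 2)
    {x : ZMod d} (hx : x = h ∨ x = -h) {w : ℕ → ℝ} (hw : Monotone w) (hw0 : 0 ≤ w 0) (a b : ℕ) :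
    ‖∑ n ∈ Ioc a b, (w n : ℂ) * ZMod.stdAddChar (-(x * (n : ZMod d)))‖ ≤
      w b * min ((b - a : ℕ) : ℝ) (d / h) := by
  have habs : x.valMinAbs.natAbs = h := by
    rcases hx with rfl | rfl <;>
      simp only [ZMod.natAbs_valMinAbs_neg, ZMod.valMinAbs_natCast_of_le_half hle,
        Int.natAbs_natCast]
  have hx0 : x ≠ 0 := fun hx0 => by
    rw [hx0, ZMod.valMinAbs_zero, Int.natAbs_zero] at habs
    omega
  exact habs ▸ norm_sum_Ioc_monotone_mul_stdAddChar_le hx0 hw hw0 a b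

end ExponentialSums

/-! ### Fourth moments of character sums -/

section FourthMoment

lemma one_add_log_le_mul_rpow {η x : ℝ} (hη : 0 < η) (hx : 1 ≤ x) :
    1 + Real.log x ≤ (1 + 1 / η) * x ^ η := by
  have hlog := Real.log_le_rpow_div (by linarith : 0 ≤ x) hη
  have hone := Real.one_le_rpow hx hη.le
  rw [add_mul, one_mul, one_div, inv_mul_eq_div]
  linarith

lemma sum_Icc_inv_le_one_add_log (n : ℕ) : ∑ m ∈ Icc 1 n, (m : ℝ)⁻¹ ≤ 1 + Real.log n := by
  simpa [harmonic_eq_sum_Icc] using harmonic_le_one_add_log n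

variable {d : ℕ}

lemma min_sq_div_le_ite {m : ℕ} (hm : 1 ≤ m) (y : ℝ) :
    min y ((d : ℝ) ^ 2 / m) ≤ if (m - 1) / d = 0 then y else d / ((m - 1) / d : ℕ) := by
  split_ifs with hq
  · exact min_le_left _ _
  · have hqm : (((m - 1) / d : ℕ) : ℝ) * d ≤ m := by
      exact_mod_cast (Nat.div_mul_le_self _ _).trans m.pred_le
    refine (min_le_right _ _).trans ?_
    rw [div_le_div_iff₀ (by exact_mod_cast hm) (by exact_mod_cast Nat.pos_of_ne_zero hq), sq,
      mul_assoc, mul_comm (d : ℝ) ((m - 1) / d : ℕ)]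
    gcongr

lemma sum_min_sq_div_le [NeZero d] {y : ℝ} (hy : 0 ≤ y) (r : ZMod d) :
    ∑ m ∈ Icc 1 (d ^ 2) with ((m : ℕ) : ZMod d) = r, min y ((d : ℝ) ^ 2 / m) ≤
      y + d * (1 + Real.log d) := by
  have hd : 0 < d := NeZero.pos d
  set g : ℕ → ℝ := fun q => if q = 0 then y else d / q
  have hg (q : ℕ) : 0 ≤ g q := by
    simp only [g]
    split_ifs <;> positivity
  set A := {m ∈ Icc 1 (d ^ 2) | ((m : ℕ) : ZMod d) = r} with hA
  have hle (m : ℕ) (hm : m ∈ A) : min y ((d : ℝ) ^ 2 / m) ≤ g ((m - 0 - 1) / d) :=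
    min_sq_div_le_ite (mem_Icc.mp (mem_filter.mp hm).1).1 y
  have hinj : Set.InjOn (fun m => (m - 0 - 1) / d) (A : Set ℕ) :=
    (injOn_sub_div_of_natCast_eq d 0 r).mono fun m hm => by
      simp only [hA, coe_filter, Set.mem_ofPred_eq, mem_Icc] at hm
      exact ⟨hm.1.1, hm.2⟩
  have himage : A.image (fun m => (m - 0 - 1) / d) ⊆ range d := by
    refine image_subset_iff.mpr fun m hm => ?_
    simp only [hA, mem_filter, mem_Icc] at hm
    rw [mem_range, Nat.div_lt_iff_lt_mul hd, ← sq]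
    omega
  calc ∑ m ∈ A, min y ((d : ℝ) ^ 2 / m)
      ≤ ∑ m ∈ A, g ((m - 0 - 1) / d) := sum_le_sum hle
    _ = ∑ q ∈ A.image fun m => (m - 0 - 1) / d, g q := (sum_image hinj).symm
    _ ≤ ∑ q ∈ range (d + 1), g q :=
        sum_le_sum_of_subset_of_nonneg (himage.trans (range_subset_range.mpr d.le_succ))
          fun _ _ _ => hg _
    _ = d * ∑ m ∈ Icc 1 d, (m : ℝ)⁻¹ + y := by
        rw [sum_range_succ', range_eq_Ico, sum_Ico_add' g 0 d 1, zero_add, mul_sum,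
          Ico_add_one_right_eq_Icc]
        refine congrArg₂ _ (sum_congr rfl fun m hm => ?_) rfl
        exact if_neg (by have := (mem_Icc.mp hm).1; omega)
    _ ≤ y + d * (1 + Real.log d) := by
        rw [add_comm]
        gcongr
        exact sum_Icc_inv_le_one_add_log d

variable {H : ℕ} {L Y D : ℝ} {κ : ℕ → ℂ}

lemma norm_mul_le_mul_min_sq_div {z w : ℂ} {m n : ℕ} (hY : 0 ≤ Y) (hL : 0 ≤ L)
    (hz : ‖z‖ ≤ L * min Y (d / m)) (hw : ‖w‖ ≤ L * min Y (d / n)) :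
    ‖z * w‖ ≤ L ^ 2 * min (Y ^ 2) ((d : ℝ) ^ 2 / (m * n : ℕ)) := by
  calc ‖z * w‖ ≤ (L * min Y (d / m)) * (L * min Y (d / n)) := by
        rw [norm_mul]
        gcongr
    _ = L ^ 2 * (min Y (d / m) * min Y (d / n)) := by ring
    _ ≤ L ^ 2 * min (Y ^ 2) ((d : ℝ) ^ 2 / (m * n : ℕ)) := by
        gcongr
        refine le_min ?_ ?_
        · rw [sq]
          gcongr <;> exact min_le_left _ _
        · rw [Nat.cast_mul, sq, ← div_mul_div_comm]
          gcongr <;> exact min_le_right _ _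

lemma sum_norm_mul_filter_natCast_mul_eq_le [NeZero d] (hH : H ≤ d) (hY : 0 ≤ Y)
    (hD : ∀ m ∈ Icc 1 (d ^ 2), (#m.divisors : ℝ) ≤ D)
    (hκ : ∀ h ∈ Icc 1 H, ‖κ h‖ ≤ L * min Y (d / h)) (hL : 0 ≤ L) (r : ZMod d) :
    ∑ p ∈ Icc 1 H ×ˢ Icc 1 H with ((p.1 * p.2 : ℕ) : ZMod d) = r, ‖κ p.1 * κ p.2‖ ≤
      L ^ 2 * (D * (Y ^ 2 + d * (1 + Real.log d))) := by
  set P := {p ∈ Icc 1 H ×ˢ Icc 1 H | ((p.1 * p.2 : ℕ) : ZMod d) = r} with hP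
  set A := {m ∈ Icc 1 (d ^ 2) | ((m : ℕ) : ZMod d) = r} with hA
  have hD0 : 0 ≤ D := (Nat.cast_nonneg _).trans
    (hD 1 (mem_Icc.mpr ⟨le_rfl, one_le_pow₀ (NeZero.one_le)⟩))
  have hmaps : ∀ p ∈ P, p.1 * p.2 ∈ A := fun p hp => by
    simp only [hP, hA, mem_filter, mem_product, mem_Icc] at hp ⊢
    exact ⟨⟨Nat.mul_pos hp.1.1.1 hp.1.2.1, sq d ▸
      Nat.mul_le_mul (hp.1.1.2.trans hH) (hp.1.2.2.trans hH)⟩, hp.2⟩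
  have hpair (p : ℕ × ℕ) (hp : p ∈ P) :
      ‖κ p.1 * κ p.2‖ ≤ L ^ 2 * min (Y ^ 2) ((d : ℝ) ^ 2 / (p.1 * p.2 : ℕ)) :=
    have hp' := mem_product.mp (mem_filter.mp hp).1
    norm_mul_le_mul_min_sq_div hY hL (hκ _ hp'.1) (hκ _ hp'.2)
  have hfiber (m : ℕ) (hm : m ∈ A) :
      ∑ p ∈ P with p.1 * p.2 = m, min (Y ^ 2) ((d : ℝ) ^ 2 / (p.1 * p.2 : ℕ)) ≤
        D * min (Y ^ 2) ((d : ℝ) ^ 2 / m) := by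
    have hmIcc := (mem_filter.mp hm).1
    have hm0 : m ≠ 0 := by have := (mem_Icc.mp hmIcc).1; omega
    rw [sum_congr rfl fun p hp => by rw [(mem_filter.mp hp).2], sum_const, nsmul_eq_mul]
    gcongr
    refine le_trans ?_ (hD m hmIcc)
    exact_mod_cast card_filter_mul_eq_le_card_divisors (Function.injective_id.injOn) hm0
  calc ∑ p ∈ P, ‖κ p.1 * κ p.2‖
      ≤ ∑ p ∈ P, L ^ 2 * min (Y ^ 2) ((d : ℝ) ^ 2 / (p.1 * p.2 : ℕ)) := sum_le_sum hpair
    _ = L ^ 2 * ∑ m ∈ A, ∑ p ∈ P with p.1 * p.2 = m,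
          min (Y ^ 2) ((d : ℝ) ^ 2 / (p.1 * p.2 : ℕ)) := by
        rw [← mul_sum, sum_fiberwise_of_maps_to hmaps]
    _ ≤ L ^ 2 * ∑ m ∈ A, D * min (Y ^ 2) ((d : ℝ) ^ 2 / m) := by
        gcongr with m hm
        exact hfiber m hm
    _ ≤ L ^ 2 * (D * (Y ^ 2 + d * (1 + Real.log d))) := by
        rw [← mul_sum]
        gcongr
        exact sum_min_sq_div_le (sq_nonneg Y) r

lemma sum_norm_le_of_norm_le_min_div (hH : H ≤ d) (hL : 0 ≤ L)
    (hκ : ∀ h ∈ Icc 1 H, ‖κ h‖ ≤ L * min Y (d / h)) :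
    ∑ h ∈ Icc 1 H, ‖κ h‖ ≤ L * d * (1 + Real.log d) :=
  calc ∑ h ∈ Icc 1 H, ‖κ h‖ ≤ ∑ h ∈ Icc 1 H, L * d * (h : ℝ)⁻¹ := by
        refine sum_le_sum fun h hh => (hκ h hh).trans ?_
        rw [mul_assoc, ← div_eq_mul_inv]
        gcongr
        exact min_le_right _ _
    _ ≤ ∑ h ∈ Icc 1 d, L * d * (h : ℝ)⁻¹ :=
        sum_le_sum_of_subset_of_nonneg (Icc_subset_Icc_right hH) fun _ _ _ => by positivity
    _ ≤ L * d * (1 + Real.log d) := by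
        rw [← mul_sum]
        gcongr
        exact sum_Icc_inv_le_one_add_log d

lemma sum_norm_pow_four_dirichletCharacter_le [NeZero d] (hH : H ≤ d) (hL : 0 ≤ L) (hY : 0 ≤ Y)
    (hD : ∀ m ∈ Icc 1 (d ^ 2), (#m.divisors : ℝ) ≤ D)
    (hκ : ∀ h ∈ Icc 1 H, ‖κ h‖ ≤ L * min Y (d / h)) :
    ∑ χ : DirichletCharacter ℂ d, ‖∑ h ∈ Icc 1 H, κ h * χ (h : ZMod d)‖ ^ 4 ≤
      d * (L ^ 2 * (D * (Y ^ 2 + d * (1 + Real.log d))) * (L * d * (1 + Real.log d)) ^ 2) := by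
  set V := L ^ 2 * (D * (Y ^ 2 + d * (1 + Real.log d)))
  set Q := Icc 1 H ×ˢ Icc 1 H
  have hV (r : ZMod d) : ∑ p ∈ Q with ((p.1 * p.2 : ℕ) : ZMod d) = r, ‖κ p.1 * κ p.2‖ ≤ V :=
    sum_norm_mul_filter_natCast_mul_eq_le hH hY hD hκ hL r
  have hV0 : 0 ≤ V := (sum_nonneg fun _ _ => norm_nonneg _).trans (hV 0)
  have square (χ : DirichletCharacter ℂ d) : ‖∑ h ∈ Icc 1 H, κ h * χ (h : ZMod d)‖ ^ 4 =
      ‖∑ p ∈ Q, κ p.1 * κ p.2 * χ ((p.1 * p.2 : ℕ) : ZMod d)‖ ^ 2 := by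
    rw [show (4 : ℕ) = 2 * 2 from rfl, pow_mul, ← norm_pow, sq (∑ h ∈ Icc 1 H, _), sum_mul_sum,
      ← sum_product']
    congr 2
    refine sum_congr rfl fun p _ => ?_
    rw [Nat.cast_mul, map_mul]
    ring
  simp_rw [square]
  refine (sum_norm_sq_dirichletCharacter_le Q (fun p => κ p.1 * κ p.2)
    fun p => p.1 * p.2).trans ?_
  gcongr
  calc ∑ r : ZMod d, (∑ p ∈ Q with ((p.1 * p.2 : ℕ) : ZMod d) = r, ‖κ p.1 * κ p.2‖) ^ 2
      ≤ ∑ r : ZMod d, V * ∑ p ∈ Q with ((p.1 * p.2 : ℕ) : ZMod d) = r, ‖κ p.1 * κ p.2‖ := by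
        gcongr with r
        rw [sq]
        gcongr
        exact hV r
    _ = V * (∑ h ∈ Icc 1 H, ‖κ h‖) ^ 2 := by
        rw [← mul_sum, sum_fiberwise, sq, sum_mul_sum, ← sum_product']
        simp_rw [Q, norm_mul]
    _ ≤ V * (L * d * (1 + Real.log d)) ^ 2 := by
        gcongr
        exact sum_norm_le_of_norm_le_min_div hH hL hκ

lemma sum_zmod_eq_sum_Icc_add_sum_Icc_neg [NeZero d] {F : ZMod d → ℂ} (hF : F 0 = 0) :
    ∑ x, F x = ∑ h ∈ Icc 1 (d / 2), F h + ∑ h ∈ Icc 1 ((d - 1) / 2), F (-(h : ZMod d)) := by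
  have hd : 0 < d := NeZero.pos d
  have hrange : ∑ x, F x = ∑ n ∈ range d, F n :=
    (sum_nbij' (fun n : ℕ => (n : ZMod d)) ZMod.val (by simp) (fun x _ => by simp [x.val_lt])
      (fun n hn => ZMod.val_cast_of_lt (mem_range.mp hn)) (by simp) (by simp)).symm
  have hsplit : range d = insert 0 (Icc 1 (d / 2)) ∪ Ioo (d / 2) d := by
    ext n
    simp only [mem_range, mem_union, mem_insert, mem_Icc, mem_Ioo]
    omega
  have hdisj : Disjoint (insert 0 (Icc 1 (d / 2))) (Ioo (d / 2) d) := by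
    rw [disjoint_left]
    intro n
    simp only [mem_insert, mem_Icc, mem_Ioo]
    omega
  have hreflect : ∑ n ∈ Ioo (d / 2) d, F n = ∑ h ∈ Icc 1 ((d - 1) / 2), F (-(h : ZMod d)) := by
    refine sum_nbij' (d - ·) (d - ·) ?_ ?_ ?_ ?_ fun n hn => ?_
    any_goals simp only [mem_Ioo, mem_Icc]; omega
    rw [Nat.cast_sub (mem_Ioo.mp hn).2.le, ZMod.natCast_self, zero_sub, neg_neg]
  rw [hrange, hsplit, sum_union hdisj, sum_insert (by simp), hreflect, Nat.cast_zero, hF, zero_add]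

lemma norm_add_pow_four_le (z z' : ℂ) : ‖z + z'‖ ^ 4 ≤ 8 * (‖z‖ ^ 4 + ‖z'‖ ^ 4) :=
  calc ‖z + z'‖ ^ 4 ≤ (‖z‖ + ‖z'‖) ^ 4 := by
        gcongr
        exact norm_add_le z z'
    _ ≤ 2 ^ (4 - 1) * (‖z‖ ^ 4 + ‖z'‖ ^ 4) := add_pow_le (norm_nonneg z) (norm_nonneg z') 4
    _ = 8 * (‖z‖ ^ 4 + ‖z'‖ ^ 4) := by norm_num

lemma norm_sum_dirichletCharacter_pow_four_le [NeZero d] (hd : d ≠ 1)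
    (ψ : DirichletCharacter ℂ d) (κ : ZMod d → ℂ) :
    ‖∑ x, ψ x * κ x‖ ^ 4 ≤ 8 * (‖∑ h ∈ Icc 1 (d / 2), κ (h : ZMod d) * ψ (h : ZMod d)‖ ^ 4 +
      ‖∑ h ∈ Icc 1 ((d - 1) / 2), κ (-(h : ZMod d)) * ψ (h : ZMod d)‖ ^ 4) := by
  have : Nontrivial (ZMod d) := ZMod.nontrivial_iff.mpr hd
  have hneg : ‖∑ h ∈ Icc 1 ((d - 1) / 2), ψ (-(h : ZMod d)) * κ (-(h : ZMod d))‖ ≤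
      ‖∑ h ∈ Icc 1 ((d - 1) / 2), κ (-(h : ZMod d)) * ψ (h : ZMod d)‖ := by
    have hfactor (h : ℕ) : ψ (-(h : ZMod d)) * κ (-(h : ZMod d)) =
        ψ (-1) * (κ (-(h : ZMod d)) * ψ (h : ZMod d)) := by
      rw [neg_eq_neg_one_mul (h : ZMod d), map_mul]
      ring
    simp_rw [hfactor, ← mul_sum, norm_mul]
    exact mul_le_of_le_one_left (norm_nonneg _) (DirichletCharacter.norm_le_one _ _)
  rw [sum_zmod_eq_sum_Icc_add_sum_Icc_neg (F := fun x => ψ x * κ x)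
    (by rw [MulChar.map_nonunit _ not_isUnit_zero, zero_mul])]
  refine (norm_add_pow_four_le _ _).trans ?_
  simp_rw [mul_comm (κ (Nat.cast _)) (ψ _)]
  gcongr

lemma sum_norm_pow_four_monotone_mul_dirichletCharacter_le [NeZero d] (hd : d ≠ 1)
    (hD : ∀ m ∈ Icc 1 (d ^ 2), (#m.divisors : ℝ) ≤ D) {T : Finset (DirichletCharacter ℂ d)}
    (hT : ∀ χ ∈ T, χ.IsPrimitive) {w : ℕ → ℝ} (hw : Monotone w) (hw0 : 0 ≤ w 0) (a b : ℕ) :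
    (∑ χ ∈ T, ‖∑ n ∈ Ioc a b, (w n : ℂ) * χ (n : ZMod d)‖ ^ 4) * d ^ 2 ≤
      16 * (d * (w b ^ 2 * (D * (((b - a : ℕ) : ℝ) ^ 2 + d * (1 + Real.log d))) *
        (w b * d * (1 + Real.log d)) ^ 2)) := by
  set V := d * (w b ^ 2 * (D * (((b - a : ℕ) : ℝ) ^ 2 + d * (1 + Real.log d))) *
        (w b * d * (1 + Real.log d)) ^ 2)
  set κ : ZMod d → ℂ := fun x =>
    ∑ n ∈ Ioc a b, (w n : ℂ) * ZMod.stdAddChar (-(x * (n : ZMod d)))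
  have hfourier (χ : DirichletCharacter ℂ d) (hχ : χ ∈ T) :
      ‖∑ n ∈ Ioc a b, (w n : ℂ) * χ (n : ZMod d)‖ ^ 4 * d ^ 2 = ‖∑ x, χ⁻¹ x * κ x‖ ^ 4 := by
    rw [show (4 : ℕ) = 2 * 2 from rfl, pow_mul, pow_mul, ← mul_pow,
      norm_sq_sum_mul_dirichletCharacter_mul_natCast (hT χ hχ) _ _ fun n : ℕ => (n : ZMod d)]
  have hκ (h : ℕ) (h1 : 1 ≤ h) (hle : h ≤ d / 2) (x : ZMod d) (hx : x = h ∨ x = -h) :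
      ‖κ x‖ ≤ w b * min ((b - a : ℕ) : ℝ) (d / h) :=
    norm_sum_Ioc_monotone_mul_stdAddChar_le_of_le_half h1 hle hx hw hw0 a b
  have hwb : 0 ≤ w b := hw0.trans (hw b.zero_le)
  have hpos := sum_norm_pow_four_dirichletCharacter_le (κ := fun h => κ h) (Nat.div_le_self d 2)
    hwb (Nat.cast_nonneg (b - a)) hD fun h hh =>
      hκ h (mem_Icc.mp hh).1 (mem_Icc.mp hh).2 _ (.inl rfl)
  have hneg := sum_norm_pow_four_dirichletCharacter_le (κ := fun h => κ (-h))
    (by omega : (d - 1) / 2 ≤ d) hwb (Nat.cast_nonneg (b - a)) hD fun h hh =>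
      hκ h (mem_Icc.mp hh).1 (by have := (mem_Icc.mp hh).2; omega) _ (.inr rfl)
  calc (∑ χ ∈ T, ‖∑ n ∈ Ioc a b, (w n : ℂ) * χ (n : ZMod d)‖ ^ 4) * d ^ 2
      = ∑ χ ∈ T, ‖∑ x, χ⁻¹ x * κ x‖ ^ 4 := by rw [sum_mul, sum_congr rfl hfourier]
    _ ≤ ∑ χ : DirichletCharacter ℂ d, ‖∑ x, χ⁻¹ x * κ x‖ ^ 4 :=
        sum_le_sum_of_subset_of_nonneg (subset_univ T) fun _ _ _ => by positivity
    _ = ∑ ψ : DirichletCharacter ℂ d, ‖∑ x, ψ x * κ x‖ ^ 4 :=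
        Equiv.sum_comp (Equiv.inv _) fun ψ : DirichletCharacter ℂ d => ‖∑ x, ψ x * κ x‖ ^ 4
    _ ≤ ∑ ψ : DirichletCharacter ℂ d,
          8 * (‖∑ h ∈ Icc 1 (d / 2), κ (h : ZMod d) * ψ (h : ZMod d)‖ ^ 4 +
            ‖∑ h ∈ Icc 1 ((d - 1) / 2), κ (-(h : ZMod d)) * ψ (h : ZMod d)‖ ^ 4) := by
        gcongr with ψ
        exact norm_sum_dirichletCharacter_pow_four_le hd ψ κ
    _ ≤ 8 * (V + V) := by
        rw [← mul_sum, sum_add_distrib]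
        gcongr
    _ = 16 * V := by ring

lemma exists_sum_norm_pow_four_dirichletCharacter_le {η : ℝ} (hη : 0 < η) :
    ∃ C : ℝ, 1 ≤ C ∧ ∀ d : ℕ, 2 ≤ d →
      ∀ T : Finset (DirichletCharacter ℂ d), (∀ χ ∈ T, χ.IsPrimitive) →
      ∀ w : ℕ → ℝ, Monotone w → 0 ≤ w 0 → ∀ a b : ℕ,
      ∑ χ ∈ T, ‖∑ n ∈ Ioc a b, (w n : ℂ) * χ (n : ZMod d)‖ ^ 4 ≤
        C * (d : ℝ) ^ η * w b ^ 4 * ((d : ℝ) ^ 2 + d * ((b - a : ℕ) : ℝ) ^ 2) := by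
  have hη' : 0 < η / 5 := by positivity
  obtain ⟨C, hC1, hC⟩ := card_divisors_le_rpow hη'
  set K := 1 + 1 / (η / 5) with hK
  have hK1 : 1 ≤ K := by
    rw [hK]
    exact le_add_of_nonneg_right (by positivity)
  refine ⟨16 * C * K ^ 3, one_le_mul_of_one_le_of_one_le (by linarith) (one_le_pow₀ hK1),
    fun d hd T hT w hw hw0 a b => ?_⟩
  have : NeZero d := ⟨by omega⟩
  have hd1 : (1 : ℝ) ≤ d := by exact_mod_cast (by omega : 1 ≤ d)
  set D := (d : ℝ) ^ (η / 5) with hD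
  have hD1 : 1 ≤ D := Real.one_le_rpow hd1 hη'.le
  have hdiv (m : ℕ) (hm : m ∈ Icc 1 (d ^ 2)) : (#m.divisors : ℝ) ≤ C * D ^ 2 := by
    obtain ⟨hm1, hm2⟩ := mem_Icc.mp hm
    calc (#m.divisors : ℝ) ≤ C * (m : ℝ) ^ (η / 5) := hC m hm1
      _ ≤ C * ((d : ℝ) ^ 2) ^ (η / 5) := by
          gcongr
          exact_mod_cast hm2
      _ = C * D ^ 2 := by rw [hD, ← Real.rpow_natCast_mul d.cast_nonneg, mul_comm _ (η / 5),
          Real.rpow_mul_natCast d.cast_nonneg]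
  have hlog : 1 + Real.log d ≤ K * D := one_add_log_le_mul_rpow hη' hd1
  have := Real.log_natCast_nonneg d
  have hKD : 1 ≤ K * D := one_le_mul_of_one_le_of_one_le hK1 hD1
  have hD5 : (d : ℝ) ^ η = D ^ 5 := by
    rw [hD, ← Real.rpow_mul_natCast d.cast_nonneg]
    congr 1
    push_cast
    ring
  have hwb : 0 ≤ w b := hw0.trans (hw b.zero_le)
  refine le_of_mul_le_mul_right ((sum_norm_pow_four_monotone_mul_dirichletCharacter_le (by omega)
    hdiv hT hw hw0 a b).trans ?_) (by positivity : (0 : ℝ) < (d : ℝ) ^ 2)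
  rw [hD5]
  set Y := ((b - a : ℕ) : ℝ)
  calc 16 * (d * (w b ^ 2 * (C * D ^ 2 * (Y ^ 2 + d * (1 + Real.log d))) *
        (w b * d * (1 + Real.log d)) ^ 2))
      ≤ 16 * (d * (w b ^ 2 * (C * D ^ 2 * (Y ^ 2 * (K * D) + d * (K * D))) *
          (w b * d * (K * D)) ^ 2)) := by
        gcongr
        exact le_mul_of_one_le_right (by positivity) hKD
    _ = 16 * C * K ^ 3 * D ^ 5 * w b ^ 4 * ((d : ℝ) ^ 2 + d * Y ^ 2) * (d : ℝ) ^ 2 := by ring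

end FourthMoment

/-! ### Dyadic decomposition of the region under a hyperbola -/

/-- The sum of `f n * g m` over the curvilinear triangle `a < n ≤ b`, `V b < m ≤ V n`, which lies
between the graph of the decreasing function `V` and its value at the right end point. -/
noncomputable def triangleSum {R : Type*} [CommRing R] (f g : ℕ → R) (V : ℝ → ℕ) (a b : ℝ) : R :=
  ∑ n ∈ Ioc ⌊a⌋₊ ⌊b⌋₊, f n * ∑ m ∈ Ioc (V b) (V n), g m

/-- The `i`-th of the points that cut `[X, 2 * X]` into `2 ^ l` intervals of equal length. -/
noncomputable def dyadicPoint (X : ℝ) (l i : ℕ) : ℝ :=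
  X + i * (X / 2 ^ l)

/-- The sum of `f n * g m` over the `i`-th rectangle of level `l` removed from the region under
the graph of `V` over `[X, 2 * X]`: bisecting the `i`-th dyadic interval of level `l` at its
midpoint splits a curvilinear triangle into two smaller ones and this rectangle. -/
noncomputable def rectangleSum {R : Type*} [CommRing R] (f g : ℕ → R) (V : ℝ → ℕ) (X : ℝ)
    (l i : ℕ) : R :=
  (∑ n ∈ Ioc ⌊dyadicPoint X (l + 1) (2 * i)⌋₊ ⌊dyadicPoint X (l + 1) (2 * i + 1)⌋₊, f n) *
    ∑ m ∈ Ioc (V (dyadicPoint X (l + 1) (2 * i + 2))) (V (dyadicPoint X (l + 1) (2 * i + 1))), g m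

/-- The integral point `⌊u / x⌋` of the hyperbola `x * y = u`, clamped to `[a, b]`. -/
noncomputable def clampedHyperbola (a b u : ℕ) (x : ℝ) : ℕ :=
  max a (min b ⌊u / x⌋₊)

section DyadicPoint

variable {X : ℝ}

lemma dyadicPoint_succ_two_mul (X : ℝ) (l i : ℕ) :
    dyadicPoint X (l + 1) (2 * i) = dyadicPoint X l i := by
  simp only [dyadicPoint, Nat.cast_mul, Nat.cast_ofNat, pow_succ]
  field_simp

lemma dyadicPoint_zero (X : ℝ) (l : ℕ) : dyadicPoint X l 0 = X := by
  simp [dyadicPoint]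

lemma dyadicPoint_two_pow (X : ℝ) (l : ℕ) : dyadicPoint X l (2 ^ l) = 2 * X := by
  simp only [dyadicPoint, Nat.cast_pow, Nat.cast_ofNat]
  field_simp
  ring

lemma dyadicPoint_add_one (X : ℝ) (l i : ℕ) :
    dyadicPoint X l (i + 1) = dyadicPoint X l i + X / 2 ^ l := by
  simp only [dyadicPoint, Nat.cast_add_one]
  ring

lemma monotone_dyadicPoint (hX : 0 ≤ X) (l : ℕ) : Monotone (dyadicPoint X l) := fun i j hij => by
  unfold dyadicPoint
  gcongr

lemma le_dyadicPoint (hX : 0 ≤ X) (l i : ℕ) : X ≤ dyadicPoint X l i :=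
  (dyadicPoint_zero X l).symm.trans_le (monotone_dyadicPoint hX l (Nat.zero_le i))

lemma dyadicPoint_le_two_mul (hX : 0 ≤ X) {l i : ℕ} (hi : i ≤ 2 ^ l) :
    dyadicPoint X l i ≤ 2 * X :=
  (monotone_dyadicPoint hX l hi).trans_eq (dyadicPoint_two_pow X l)

end DyadicPoint

section Decomposition

variable {R : Type*} [CommRing R] (f g : ℕ → R) {V : ℝ → ℕ}

lemma triangleSum_eq_add_add (hV : AntitoneOn V (Set.Ioi 0)) {a m b : ℝ} (ha : 0 < a)
    (ham : a ≤ m) (hmb : m ≤ b) :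
    triangleSum f g V a b = triangleSum f g V a m + triangleSum f g V m b +
      (∑ n ∈ Ioc ⌊a⌋₊ ⌊m⌋₊, f n) * ∑ k ∈ Ioc (V b) (V m), g k := by
  have hm : 0 < m := ha.trans_le ham
  have hinner : ∀ n ∈ Ioc ⌊a⌋₊ ⌊m⌋₊, f n * ∑ k ∈ Ioc (V b) (V n), g k =
      f n * ∑ k ∈ Ioc (V m) (V n), g k + f n * ∑ k ∈ Ioc (V b) (V m), g k := fun n hn => by
    have hn' := mem_Ioc.mp hn
    have hn0 : (0 : ℝ) < n := Nat.cast_pos.mpr (by omega)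
    have hnm : (n : ℝ) ≤ m := (Nat.le_floor_iff hm.le).mp hn'.2
    rw [← sum_Ioc_consecutive g (hV hm (hm.trans_le hmb) hmb) (hV hn0 hm hnm)]
    ring
  unfold triangleSum
  rw [← sum_Ioc_consecutive _ (Nat.floor_le_floor ham) (Nat.floor_le_floor hmb), sum_mul,
    sum_congr rfl hinner, sum_add_distrib]
  ring

lemma sum_range_two_mul (h : ℕ → R) (n : ℕ) :
    ∑ j ∈ range (2 * n), h j = ∑ i ∈ range n, (h (2 * i) + h (2 * i + 1)) := by
  induction n with
  | zero => simp
  | succ n ih =>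
    rw [show 2 * (n + 1) = 2 * n + 1 + 1 by ring, sum_range_succ, sum_range_succ, ih,
      sum_range_succ]
    ring

lemma triangleSum_eq_sum_rectangleSum_add (hV : AntitoneOn V (Set.Ioi 0)) {X : ℝ} (hX : 0 < X)
    (L : ℕ) :
    triangleSum f g V X (2 * X) = ∑ l ∈ range L, ∑ i ∈ range (2 ^ l), rectangleSum f g V X l i +
      ∑ i ∈ range (2 ^ L), triangleSum f g V (dyadicPoint X L i) (dyadicPoint X L (i + 1)) := by
  induction L with
  | zero => simp [dyadicPoint, two_mul]
  | succ L ih =>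
    rw [ih, sum_range_succ, add_assoc, pow_succ, mul_comm (2 ^ L) 2, sum_range_two_mul,
      ← sum_add_distrib]
    refine congr_arg _ (sum_congr rfl fun i _ => ?_)
    have hmono := monotone_dyadicPoint hX.le (L + 1)
    rw [← dyadicPoint_succ_two_mul X L i, ← dyadicPoint_succ_two_mul X L (i + 1),
      triangleSum_eq_add_add f g hV (hX.trans_le (le_dyadicPoint hX.le (L + 1) (2 * i)))
        (hmono (show 2 * i ≤ 2 * i + 1 by omega))
        (hmono (show 2 * i + 1 ≤ 2 * (i + 1) by omega)), rectangleSum,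
      show 2 * (i + 1) = 2 * i + 1 + 1 by ring]
    ring

end Decomposition

section ClampedHyperbola

variable {a b u : ℕ}

lemma antitoneOn_clampedHyperbola (a b u : ℕ) :
    AntitoneOn (clampedHyperbola a b u) (Set.Ioi 0) := fun x (hx : 0 < x) y _ hxy => by
  unfold clampedHyperbola
  gcongr

lemma le_clampedHyperbola (a b u : ℕ) (x : ℝ) : a ≤ clampedHyperbola a b u x :=
  le_max_left ..

lemma clampedHyperbola_le (hab : a ≤ b) (u : ℕ) (x : ℝ) : clampedHyperbola a b u x ≤ b :=
  max_le hab (min_le_left ..)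

lemma mul_le_and_lt_mul_of_mem_Ioc_clampedHyperbola {x y : ℝ} (hx : 0 < x) (hy : 0 < y) {m : ℕ}
    (hm : m ∈ Ioc (clampedHyperbola a b u y) (clampedHyperbola a b u x)) :
    x * m ≤ u ∧ u < y * m := by
  simp only [clampedHyperbola, mem_Ioc, max_lt_iff, le_max_iff, le_min_iff, min_lt_iff] at hm
  have hle : m ≤ ⌊u / x⌋₊ := by omega
  have hlt : ⌊u / y⌋₊ < m := by omega
  exact ⟨(le_div_iff₀' hx).mp ((Nat.le_floor_iff (by positivity)).mp hle),
    (div_lt_iff₀' hy).mp ((Nat.floor_lt (by positivity)).mp hlt)⟩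

lemma floor_sub_floor_le {x y : ℝ} (hx : 0 ≤ x) (hxy : x ≤ y) :
    ((⌊y⌋₊ - ⌊x⌋₊ : ℕ) : ℝ) ≤ y - x + 1 := by
  rw [Nat.cast_sub (Nat.floor_le_floor hxy)]
  linarith [Nat.floor_le (hx.trans hxy), Nat.lt_floor_add_one x]

lemma clampedHyperbola_sub_le {x y : ℝ} (hx : 0 < x) (hxy : x ≤ y) :
    ((clampedHyperbola a b u x - clampedHyperbola a b u y : ℕ) : ℝ) ≤ b * (y - x) / x + 1 := by
  have hy : 0 < y := hx.trans_le hxy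
  have hyx : 0 ≤ y - x := sub_nonneg.mpr hxy
  rcases le_or_gt b ⌊u / y⌋₊ with hb | hb
  · have hzero : clampedHyperbola a b u x - clampedHyperbola a b u y = 0 := by
      unfold clampedHyperbola
      omega
    rw [hzero, Nat.cast_zero]
    positivity
  · have hub : u / y ≤ b := ((Nat.floor_lt (by positivity)).mp hb).le
    have hle : clampedHyperbola a b u x - clampedHyperbola a b u y ≤ ⌊u / x⌋₊ - ⌊u / y⌋₊ := by
      unfold clampedHyperbola
      omega
    calc ((clampedHyperbola a b u x - clampedHyperbola a b u y : ℕ) : ℝ)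
        ≤ ((⌊u / x⌋₊ - ⌊u / y⌋₊ : ℕ) : ℝ) := Nat.cast_le.mpr hle
      _ ≤ u / x - u / y + 1 := floor_sub_floor_le (by positivity) (by gcongr)
      _ = u / y * (y - x) / x + 1 := by field_simp
      _ ≤ b * (y - x) / x + 1 := by gcongr

lemma sum_filter_mul_le_eq_add_triangleSum {R : Type*} [CommRing R] (f g : ℕ → R) {X : ℝ}
    (hX : 0 ≤ X) (a b u : ℕ) :
    ∑ p ∈ Ioc ⌊X⌋₊ ⌊2 * X⌋₊ ×ˢ Ioc a b with p.1 * p.2 ≤ u, f p.1 * g p.2 =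
      (∑ n ∈ Ioc ⌊X⌋₊ ⌊2 * X⌋₊, f n) * (∑ m ∈ Ioc a (clampedHyperbola a b u (2 * X)), g m) +
        triangleSum f g (clampedHyperbola a b u) X (2 * X) := by
  rw [sum_filter, sum_product, triangleSum, sum_mul, ← sum_add_distrib]
  refine sum_congr rfl fun n hn => ?_
  rw [mem_Ioc] at hn
  have hn0 : (0 : ℝ) < n := Nat.cast_pos.mpr (by omega)
  have hn2 : (n : ℝ) ≤ 2 * X := (Nat.le_floor_iff (by positivity)).mp hn.2
  rw [← mul_add, sum_Ioc_consecutive g (le_clampedHyperbola ..)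
    (antitoneOn_clampedHyperbola a b u hn0 (hn0.trans_le hn2) hn2), mul_sum, ← sum_filter]
  refine sum_congr (ext fun m => ?_) fun _ _ => rfl
  have hfloor : n * m ≤ u ↔ m ≤ ⌊(u / n : ℝ)⌋₊ := by
    rw [Nat.le_floor_iff (by positivity), le_div_iff₀' hn0]
    norm_cast
  rw [mem_filter, mem_Ioc, mem_Ioc, hfloor, clampedHyperbola]
  omega

end ClampedHyperbola

/-! ### Mean squares of truncated bilinear character sums -/

/-- The triples `(i, n, m)` such that `(n, m)` lies in the curvilinear triangle of `triangleSum`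
over the `i`-th interval of the partition `c`, for `i < k`. -/
noncomputable def triangleIndex (V : ℝ → ℕ) (c : ℕ → ℝ) (k : ℕ) : Finset (Σ _ : ℕ, Σ _ : ℕ, ℕ) :=
  (range k).sigma fun i => (Ioc ⌊c i⌋₊ ⌊c (i + 1)⌋₊).sigma fun n => Ioc (V (c (i + 1))) (V n)

section TriangleIndex

variable {V : ℝ → ℕ} {c : ℕ → ℝ} {k : ℕ}

lemma mem_triangleIndex {x : Σ _ : ℕ, Σ _ : ℕ, ℕ} :
    x ∈ triangleIndex V c k ↔ x.1 < k ∧ x.2.1 ∈ Ioc ⌊c x.1⌋₊ ⌊c (x.1 + 1)⌋₊ ∧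
      x.2.2 ∈ Ioc (V (c (x.1 + 1))) (V x.2.1) := by
  simp only [triangleIndex, mem_sigma, mem_range]

lemma sum_triangleSum_eq_sum_triangleIndex {R : Type*} [CommRing R] (f g : ℕ → R) (V : ℝ → ℕ)
    (c : ℕ → ℝ) (k : ℕ) :
    ∑ i ∈ range k, triangleSum f g V (c i) (c (i + 1)) =
      ∑ x ∈ triangleIndex V c k, f x.2.1 * g x.2.2 := by
  simp only [triangleIndex, sum_sigma, triangleSum, mul_sum]

lemma injOn_triangleIndex (hc : Monotone c) :
    Set.InjOn (fun x => (x.2.1, x.2.2)) (triangleIndex V c k : Set (Σ _ : ℕ, Σ _ : ℕ, ℕ)) := by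
  rintro ⟨i, n, m⟩ hx ⟨j, n', m'⟩ hy hxy
  obtain ⟨rfl, rfl⟩ := Prod.mk.inj hxy
  have hi := (mem_triangleIndex.mp hx).2.1
  have hj := (mem_triangleIndex.mp hy).2.1
  simp only [mem_Ioc] at hi hj
  have hle : ∀ p q : ℕ, p < q → ⌊c (p + 1)⌋₊ ≤ ⌊c q⌋₊ := fun p q hpq =>
    Nat.floor_le_floor (hc hpq)
  obtain hij | rfl | hij := lt_trichotomy i j
  · have := hle i j hij
    omega
  · rfl
  · have := hle j i hij
    omega

end TriangleIndex

section Remainder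

variable {X₁ X₂ : ℝ} {u L : ℕ}

lemma of_mem_triangleIndex_clampedHyperbola (hX₁ : 0 < X₁) (hX₂ : 0 ≤ X₂)
    {x : Σ _ : ℕ, Σ _ : ℕ, ℕ}
    (hx : x ∈ triangleIndex (clampedHyperbola ⌊X₂⌋₊ ⌊2 * X₂⌋₊ u) (dyadicPoint X₁ L) (2 ^ L)) :
    x.2.1 ∈ Ioc 0 ⌊2 * X₁⌋₊ ∧ x.2.2 ∈ Ioc 0 ⌊2 * X₂⌋₊ ∧ x.2.1 * x.2.2 ≤ u ∧
      (u : ℝ) < x.2.1 * x.2.2 + 2 * (X₁ * X₂) / 2 ^ L := by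
  obtain ⟨i, n, m⟩ := x
  obtain ⟨hi, hn, hm⟩ := mem_triangleIndex.mp hx
  simp only at hi hn hm ⊢
  have hci := le_dyadicPoint hX₁.le L i
  have hci' := le_dyadicPoint hX₁.le L (i + 1)
  rw [mem_Ioc, Nat.floor_lt (hX₁.le.trans hci)] at hn
  have hn0 : (0 : ℝ) < n := (hX₁.trans_le hci).trans hn.1
  obtain ⟨hle, hlt⟩ :=
    mul_le_and_lt_mul_of_mem_Ioc_clampedHyperbola hn0 (hX₁.trans_le hci') hm
  have hm' := mem_Ioc.mp hm
  have hmX : m ≤ ⌊2 * X₂⌋₊ :=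
    hm'.2.trans (clampedHyperbola_le (Nat.floor_le_floor (by linarith)) u n)
  have hmX' : (m : ℝ) ≤ 2 * X₂ := (Nat.le_floor_iff (by positivity)).mp hmX
  refine ⟨mem_Ioc.mpr ⟨Nat.cast_pos.mp hn0, hn.2.trans (Nat.floor_le_floor
    (dyadicPoint_le_two_mul hX₁.le hi))⟩, mem_Ioc.mpr ⟨by omega, hmX⟩,
    by exact_mod_cast hle, ?_⟩
  calc (u : ℝ) < dyadicPoint X₁ L (i + 1) * m := hlt
    _ = dyadicPoint X₁ L i * m + X₁ / 2 ^ L * m := by rw [dyadicPoint_add_one]; ring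
    _ ≤ n * m + X₁ / 2 ^ L * (2 * X₂) := by
        have := hn.1.le
        gcongr
    _ = n * m + 2 * (X₁ * X₂) / 2 ^ L := by ring

lemma sum_norm_filter_mul_eq_triangleIndex_le (hX₁ : 0 < X₁) (hX₂ : 0 ≤ X₂) {w₁ w₂ : ℕ → ℝ}
    (hw₁ : Monotone w₁) (hw₂ : Monotone w₂) (hw₁0 : 0 ≤ w₁ 0) (hw₂0 : 0 ≤ w₂ 0) {η C : ℝ}
    (hη : 0 ≤ η) (hC : 0 ≤ C) (hdiv : ∀ n : ℕ, 1 ≤ n → (#n.divisors : ℝ) ≤ C * (n : ℝ) ^ η)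
    (m : ℕ) :
    ∑ x ∈ triangleIndex (clampedHyperbola ⌊X₂⌋₊ ⌊2 * X₂⌋₊ u) (dyadicPoint X₁ L) (2 ^ L)
        with x.2.1 * x.2.2 = m, ‖(w₁ x.2.1 : ℂ) * w₂ x.2.2‖ ≤
      w₁ ⌊2 * X₁⌋₊ * w₂ ⌊2 * X₂⌋₊ * (C * (4 * (X₁ * X₂)) ^ η) := by
  have hnn₁ : ∀ n, 0 ≤ w₁ n := fun n => hw₁0.trans (hw₁ n.zero_le)
  have hnn₂ : ∀ n, 0 ≤ w₂ n := fun n => hw₂0.trans (hw₂ n.zero_le)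
  set S := triangleIndex (clampedHyperbola ⌊X₂⌋₊ ⌊2 * X₂⌋₊ u) (dyadicPoint X₁ L) (2 ^ L)
  have hS : ∀ x ∈ S, _ := fun x hx => of_mem_triangleIndex_clampedHyperbola hX₁ hX₂ hx
  have hbound := mul_nonneg (mul_nonneg (hnn₁ ⌊2 * X₁⌋₊) (hnn₂ ⌊2 * X₂⌋₊))
    (show 0 ≤ C * (4 * (X₁ * X₂)) ^ η by positivity)
  obtain hempty | ⟨x₀, hx₀⟩ := (S.filter fun x => x.2.1 * x.2.2 = m).eq_empty_or_nonempty
  · rwa [hempty, sum_empty]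
  obtain ⟨hx₀S, hx₀m⟩ := mem_filter.mp hx₀
  obtain ⟨hn₀, hm₀, -, -⟩ := hS x₀ hx₀S
  simp only [mem_Ioc, Nat.le_floor_iff (show 0 ≤ 2 * X₁ by positivity),
    Nat.le_floor_iff (show 0 ≤ 2 * X₂ by positivity)] at hn₀ hm₀
  have hm1 : 1 ≤ m := hx₀m ▸ Nat.mul_pos hn₀.1 hm₀.1
  have hmle : (m : ℝ) ≤ 4 * (X₁ * X₂) := by
    rw [← hx₀m, Nat.cast_mul, show 4 * (X₁ * X₂) = 2 * X₁ * (2 * X₂) by ring]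
    exact mul_le_mul hn₀.2 hm₀.2 (by positivity) (by positivity)
  calc _ ≤ ∑ x ∈ S with x.2.1 * x.2.2 = m, w₁ ⌊2 * X₁⌋₊ * w₂ ⌊2 * X₂⌋₊ := by
        refine sum_le_sum fun x hx => ?_
        obtain ⟨hn, hm, -, -⟩ := hS x (mem_filter.mp hx).1
        rw [norm_mul, norm_real, norm_real, norm_of_nonneg (hnn₁ _), norm_of_nonneg (hnn₂ _)]
        exact mul_le_mul (hw₁ (mem_Ioc.mp hn).2) (hw₂ (mem_Ioc.mp hm).2) (hnn₂ _) (hnn₁ _)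
    _ = w₁ ⌊2 * X₁⌋₊ * w₂ ⌊2 * X₂⌋₊ * #{x ∈ S | x.2.1 * x.2.2 = m} := by
        rw [sum_const, nsmul_eq_mul, mul_comm]
    _ ≤ w₁ ⌊2 * X₁⌋₊ * w₂ ⌊2 * X₂⌋₊ * (C * (4 * (X₁ * X₂)) ^ η) := by
        refine mul_le_mul_of_nonneg_left ?_ (mul_nonneg (hnn₁ _) (hnn₂ _))
        calc (#{x ∈ S | x.2.1 * x.2.2 = m} : ℝ) ≤ #m.divisors := Nat.cast_le.mpr
              (card_filter_mul_eq_le_card_divisors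
                (injOn_triangleIndex (monotone_dyadicPoint hX₁.le L)) (by omega))
          _ ≤ C * (m : ℝ) ^ η := hdiv m hm1
          _ ≤ C * (4 * (X₁ * X₂)) ^ η := by gcongr

lemma sum_norm_sq_sum_triangleSum_le {d : ℕ} [NeZero d] (hX₁ : 0 < X₁) (hX₂ : 0 ≤ X₂)
    {w₁ w₂ : ℕ → ℝ} (hw₁ : Monotone w₁) (hw₂ : Monotone w₂) (hw₁0 : 0 ≤ w₁ 0) (hw₂0 : 0 ≤ w₂ 0)
    {η C : ℝ} (hη : 0 ≤ η) (hC : 0 ≤ C)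
    (hdiv : ∀ n : ℕ, 1 ≤ n → (#n.divisors : ℝ) ≤ C * (n : ℝ) ^ η) :
    ∑ χ : DirichletCharacter ℂ d, ‖∑ i ∈ range (2 ^ L),
        triangleSum (fun n => (w₁ n : ℂ) * χ n) (fun n => (w₂ n : ℂ) * χ n)
          (clampedHyperbola ⌊X₂⌋₊ ⌊2 * X₂⌋₊ u) (dyadicPoint X₁ L i)
          (dyadicPoint X₁ L (i + 1))‖ ^ 2 ≤
      (w₁ ⌊2 * X₁⌋₊ * w₂ ⌊2 * X₂⌋₊ * (C * (4 * (X₁ * X₂)) ^ η)) ^ 2 *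
        ((⌊2 * (X₁ * X₂) / 2 ^ L⌋₊ + 1 : ℕ) + d) * (⌊2 * (X₁ * X₂) / 2 ^ L⌋₊ + 1 : ℕ) := by
  set Z := ⌊2 * (X₁ * X₂) / 2 ^ L⌋₊ + 1 with hZ
  have hcollect : ∀ χ : DirichletCharacter ℂ d, ∀ x : Σ _ : ℕ, Σ _ : ℕ, ℕ,
      (w₁ x.2.1 : ℂ) * χ x.2.1 * (w₂ x.2.2 * χ x.2.2) =
        w₁ x.2.1 * w₂ x.2.2 * χ ((x.2.1 * x.2.2 : ℕ) : ZMod d) := fun χ x => by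
    rw [Nat.cast_mul, map_mul]
    ring
  simp only [sum_triangleSum_eq_sum_triangleIndex, hcollect]
  refine sum_norm_sq_dirichletCharacter_le_of_fiber_le (A := u - Z) (fun x hx => ?_)
    (mul_nonneg (mul_nonneg (hw₁0.trans (hw₁ (Nat.zero_le _)))
      (hw₂0.trans (hw₂ (Nat.zero_le _)))) (by positivity))
    fun m _ => sum_norm_filter_mul_eq_triangleIndex_le hX₁ hX₂ hw₁ hw₂ hw₁0 hw₂0 hη hC hdiv m
  obtain ⟨hn, hm, hle, hlt⟩ := of_mem_triangleIndex_clampedHyperbola hX₁ hX₂ hx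
  have hpos := Nat.mul_pos (mem_Ioc.mp hn).1 (mem_Ioc.mp hm).1
  have hlt' : u < x.2.1 * x.2.2 + Z := by
    have hfloor := Nat.lt_floor_add_one (2 * (X₁ * X₂) / 2 ^ L)
    have : (u : ℝ) < ((x.2.1 * x.2.2 + Z : ℕ) : ℝ) := by
      rw [hZ]
      push_cast
      linarith
    exact_mod_cast this
  exact mem_Ioc.mpr ⟨by omega, by omega⟩

end Remainder

section Rectangles

/-- The sums of `f χ` over subintervals of `[1, b]` satisfy the fourth-moment bound
`B * (D ^ 2 + D * Y ^ 2)`, `Y` being the length of the interval; for a family `T` of primitive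
characters, `D` is the modulus. -/
def FourthMomentLE {κ : Type*} (T : Finset κ) (f : κ → ℕ → ℂ) (b : ℕ) (B D : ℝ) : Prop :=
  ∀ p q : ℕ, q ≤ b →
    ∑ χ ∈ T, ‖∑ n ∈ Ioc p q, f χ n‖ ^ 4 ≤ B * (D ^ 2 + D * ((q - p : ℕ) : ℝ) ^ 2)

variable {κ : Type*} {T : Finset κ} {f g : κ → ℕ → ℂ} {B₁ B₂ D : ℝ}

lemma FourthMomentLE.sum_norm_sq_mul_le {b₁ b₂ : ℕ} (hf : FourthMomentLE T f b₁ B₁ D)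
    (hg : FourthMomentLE T g b₂ B₂ D) (hB₁ : 0 ≤ B₁) (hB₂ : 0 ≤ B₂) (hD : 0 ≤ D) {p q r s : ℕ}
    (hq : q ≤ b₁) (hs : s ≤ b₂) {Y₁ Y₂ : ℝ} (hY₁ : ((q - p : ℕ) : ℝ) ≤ Y₁)
    (hY₂ : ((s - r : ℕ) : ℝ) ≤ Y₂) :
    ∑ χ ∈ T, ‖(∑ n ∈ Ioc p q, f χ n) * ∑ m ∈ Ioc r s, g χ m‖ ^ 2 ≤
      √(B₁ * B₂) * ((D + √D * Y₁) * (D + √D * Y₂)) := by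
  have hsq : ∀ {B Y Y' : ℝ}, 0 ≤ B → 0 ≤ Y' → Y' ≤ Y →
      √(B * (D ^ 2 + D * Y' ^ 2)) ≤ √B * (D + √D * Y) := fun {B Y Y'} hB hY' hYY' => by
    have hY : 0 ≤ Y := hY'.trans hYY'
    rw [sqrt_mul hB]
    gcongr
    refine (sqrt_le_left (by positivity)).mpr ?_
    calc D ^ 2 + D * Y' ^ 2 ≤ D ^ 2 + D * Y ^ 2 := by gcongr
      _ ≤ D ^ 2 + √D ^ 2 * Y ^ 2 + 2 * (D * (√D * Y)) := by
          rw [sq_sqrt hD]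
          exact le_add_of_nonneg_right (by positivity)
      _ = (D + √D * Y) ^ 2 := by ring
  calc _ = ∑ χ ∈ T, ‖∑ n ∈ Ioc p q, f χ n‖ ^ 2 * ‖∑ m ∈ Ioc r s, g χ m‖ ^ 2 := by
        simp only [norm_mul, mul_pow]
    _ ≤ √(∑ χ ∈ T, ‖∑ n ∈ Ioc p q, f χ n‖ ^ 4) * √(∑ χ ∈ T, ‖∑ m ∈ Ioc r s, g χ m‖ ^ 4) := by
        simpa only [show 4 = 2 * 2 from rfl, pow_mul] using sum_mul_le_sqrt_mul_sqrt T
          (fun χ => ‖∑ n ∈ Ioc p q, f χ n‖ ^ 2) (fun χ => ‖∑ m ∈ Ioc r s, g χ m‖ ^ 2)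
    _ ≤ √B₁ * (D + √D * Y₁) * (√B₂ * (D + √D * Y₂)) := mul_le_mul
        ((sqrt_le_sqrt (hf p q hq)).trans (hsq hB₁ (Nat.cast_nonneg _) hY₁))
        ((sqrt_le_sqrt (hg r s hs)).trans (hsq hB₂ (Nat.cast_nonneg _) hY₂)) (sqrt_nonneg _)
        (mul_nonneg (sqrt_nonneg _)
          (add_nonneg hD (mul_nonneg (sqrt_nonneg _) ((Nat.cast_nonneg _).trans hY₁))))
    _ = √(B₁ * B₂) * ((D + √D * Y₁) * (D + √D * Y₂)) := by
        rw [sqrt_mul hB₁]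
        ring

lemma sum_norm_sq_sum_le_card_sq_mul {ι : Type*} {I : Finset ι} {F : κ → ι → ℂ} {B : ℝ}
    (hB : ∀ i ∈ I, ∑ χ ∈ T, ‖F χ i‖ ^ 2 ≤ B) :
    ∑ χ ∈ T, ‖∑ i ∈ I, F χ i‖ ^ 2 ≤ (#I : ℝ) ^ 2 * B :=
  calc ∑ χ ∈ T, ‖∑ i ∈ I, F χ i‖ ^ 2 ≤ ∑ χ ∈ T, (#I : ℝ) * ∑ i ∈ I, ‖F χ i‖ ^ 2 := by
        gcongr with χ
        calc ‖∑ i ∈ I, F χ i‖ ^ 2 ≤ (∑ i ∈ I, ‖F χ i‖) ^ 2 := by gcongr; exact norm_sum_le _ _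
          _ ≤ #I * ∑ i ∈ I, ‖F χ i‖ ^ 2 := sq_sum_le_card_mul_sum_sq
    _ = #I * ∑ i ∈ I, ∑ χ ∈ T, ‖F χ i‖ ^ 2 := by rw [← mul_sum, sum_comm]
    _ ≤ #I * ∑ _i ∈ I, B := by gcongr with i hi; exact hB i hi
    _ = (#I : ℝ) ^ 2 * B := by rw [sum_const, nsmul_eq_mul]; ring

lemma norm_add_add_sq_le (x y z : ℂ) : ‖x + (y + z)‖ ^ 2 ≤ 3 * (‖x‖ ^ 2 + ‖y‖ ^ 2 + ‖z‖ ^ 2) :=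
  calc ‖x + (y + z)‖ ^ 2 ≤ (‖x‖ + (‖y‖ + ‖z‖)) ^ 2 := by
        gcongr
        exact (norm_add_le _ _).trans (by gcongr; exact norm_add_le _ _)
    _ ≤ 3 * (‖x‖ ^ 2 + ‖y‖ ^ 2 + ‖z‖ ^ 2) := by
        linarith [sq_nonneg (‖x‖ - ‖y‖), sq_nonneg (‖x‖ - ‖z‖), sq_nonneg (‖y‖ - ‖z‖)]

lemma two_pow_mul_add_sqrt_mul_le (hD : 1 ≤ D) {l L : ℕ} (hl : l ≤ L) {X Y : ℝ}
    (hX : 0 ≤ X) (hY : 2 ^ l * Y ≤ X) :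
    2 ^ l * (D + √D * (Y + 1)) ≤ 2 * (2 ^ L * D + √D * X) := by
  have hsqrt : √D ≤ D := (sqrt_le_left (by positivity)).mpr (le_self_pow₀ hD two_ne_zero)
  have hpow : (2 : ℝ) ^ l ≤ 2 ^ L := pow_le_pow_right₀ one_le_two hl
  have hsqrtX : 0 ≤ √D * X := by positivity
  have hsqrtY : √D * (2 ^ l * Y) ≤ √D * X := by gcongr
  calc 2 ^ l * (D + √D * (Y + 1)) = 2 ^ l * D + 2 ^ l * √D + √D * (2 ^ l * Y) := by ring
    _ ≤ 2 ^ L * D + 2 ^ L * D + √D * X := by gcongr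
    _ ≤ 2 * (2 ^ L * D + √D * X) := by linarith

variable {X₁ X₂ : ℝ} {L : ℕ}

lemma clampedHyperbola_dyadicPoint_sub_le (hX₁ : 0 < X₁) (hX₂ : 0 ≤ X₂) (u l j : ℕ) :
    ((clampedHyperbola ⌊X₂⌋₊ ⌊2 * X₂⌋₊ u (dyadicPoint X₁ (l + 1) j) -
      clampedHyperbola ⌊X₂⌋₊ ⌊2 * X₂⌋₊ u (dyadicPoint X₁ (l + 1) (j + 1)) : ℕ) : ℝ) ≤
      X₂ / 2 ^ l + 1 := by
  have hc := le_dyadicPoint hX₁.le (l + 1) j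
  refine (clampedHyperbola_sub_le (hX₁.trans_le hc)
    (monotone_dyadicPoint hX₁.le (l + 1) j.le_succ)).trans ?_
  rw [dyadicPoint_add_one, add_sub_cancel_left]
  refine add_le_add_left ((div_le_iff₀ (hX₁.trans_le hc)).mpr ?_) 1
  calc (⌊2 * X₂⌋₊ : ℝ) * (X₁ / 2 ^ (l + 1)) ≤ 2 * X₂ * (X₁ / 2 ^ (l + 1)) := by
        gcongr
        exact Nat.floor_le (by positivity)
    _ = X₂ / 2 ^ l * X₁ := by rw [pow_succ]; field_simp
    _ ≤ X₂ / 2 ^ l * dyadicPoint X₁ (l + 1) j := by gcongr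

lemma FourthMomentLE.sum_norm_sq_sum_rectangleSum_le
    (hf : FourthMomentLE T f ⌊2 * X₁⌋₊ B₁ D) (hg : FourthMomentLE T g ⌊2 * X₂⌋₊ B₂ D)
    (hB₁ : 0 ≤ B₁) (hB₂ : 0 ≤ B₂) (hD : 1 ≤ D) (hX₁ : 0 < X₁) (hX₂ : 0 ≤ X₂) (u : ℕ) {l : ℕ}
    (hl : l ≤ L) :
    ∑ χ ∈ T, ‖∑ i ∈ range (2 ^ l),
        rectangleSum (f χ) (g χ) (clampedHyperbola ⌊X₂⌋₊ ⌊2 * X₂⌋₊ u) X₁ l i‖ ^ 2 ≤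
      4 * (√(B₁ * B₂) * ((2 ^ L * D + √D * X₁) * (2 ^ L * D + √D * X₂))) := by
  have hD0 : 0 ≤ D := zero_le_one.trans hD
  have hfloor : ⌊X₂⌋₊ ≤ ⌊2 * X₂⌋₊ := Nat.floor_le_floor (by linarith)
  have hrect : ∀ i ∈ range (2 ^ l),
      ∑ χ ∈ T, ‖rectangleSum (f χ) (g χ) (clampedHyperbola ⌊X₂⌋₊ ⌊2 * X₂⌋₊ u) X₁ l i‖ ^ 2 ≤
        √(B₁ * B₂) * ((D + √D * (X₁ / 2 ^ (l + 1) + 1)) * (D + √D * (X₂ / 2 ^ l + 1))) := by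
    intro i hi
    refine hf.sum_norm_sq_mul_le hg hB₁ hB₂ hD0 (Nat.floor_le_floor
      (dyadicPoint_le_two_mul hX₁.le ?_)) (clampedHyperbola_le hfloor u _) ?_ ?_
    · rw [pow_succ]
      have := mem_range.mp hi
      omega
    · refine (floor_sub_floor_le (hX₁.le.trans (le_dyadicPoint hX₁.le _ _))
        (monotone_dyadicPoint hX₁.le (l + 1) (Nat.le_succ _))).trans_eq ?_
      rw [dyadicPoint_add_one, add_sub_cancel_left]
    · exact clampedHyperbola_dyadicPoint_sub_le hX₁ hX₂ u l (2 * i + 1)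
  calc _ ≤ ((2 ^ l : ℕ) : ℝ) ^ 2 * (√(B₁ * B₂) *
          ((D + √D * (X₁ / 2 ^ (l + 1) + 1)) * (D + √D * (X₂ / 2 ^ l + 1)))) := by
        simpa only [card_range] using sum_norm_sq_sum_le_card_sq_mul hrect
    _ = √(B₁ * B₂) * (2 ^ l * (D + √D * (X₁ / 2 ^ (l + 1) + 1)) *
          (2 ^ l * (D + √D * (X₂ / 2 ^ l + 1)))) := by
        push_cast
        ring
    _ ≤ √(B₁ * B₂) * (2 * (2 ^ L * D + √D * X₁) * (2 * (2 ^ L * D + √D * X₂))) := by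
        gcongr √(B₁ * B₂) * (?_ * ?_)
        · refine two_pow_mul_add_sqrt_mul_le hD hl hX₁.le ?_
          rw [pow_succ]
          field_simp
          linarith
        · exact two_pow_mul_add_sqrt_mul_le hD hl hX₂ (mul_div_cancel₀ _ (by positivity)).le
    _ = _ := by ring

lemma FourthMomentLE.sum_norm_sq_sum_filter_mul_le_le
    (hf : FourthMomentLE T f ⌊2 * X₁⌋₊ B₁ D) (hg : FourthMomentLE T g ⌊2 * X₂⌋₊ B₂ D)
    (hB₁ : 0 ≤ B₁) (hB₂ : 0 ≤ B₂) (hD : 1 ≤ D) (hX₁ : 0 < X₁) (hX₂ : 0 ≤ X₂) {u : ℕ} {R : ℝ}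
    (hR : ∑ χ ∈ T, ‖∑ i ∈ range (2 ^ L),
      triangleSum (f χ) (g χ) (clampedHyperbola ⌊X₂⌋₊ ⌊2 * X₂⌋₊ u) (dyadicPoint X₁ L i)
        (dyadicPoint X₁ L (i + 1))‖ ^ 2 ≤ R) :
    ∑ χ ∈ T, ‖∑ p ∈ Ioc ⌊X₁⌋₊ ⌊2 * X₁⌋₊ ×ˢ Ioc ⌊X₂⌋₊ ⌊2 * X₂⌋₊ with p.1 * p.2 ≤ u,
        f χ p.1 * g χ p.2‖ ^ 2 ≤
      12 * (L + 1) ^ 2 *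
        (√(B₁ * B₂) * ((2 ^ L * D + √D * X₁) * (2 ^ L * D + √D * X₂))) + 3 * R := by
  set V := clampedHyperbola ⌊X₂⌋₊ ⌊2 * X₂⌋₊ u
  set Q := √(B₁ * B₂) * ((2 ^ L * D + √D * X₁) * (2 ^ L * D + √D * X₂))
  have hQ : 0 ≤ Q := by positivity
  have hfloor : ⌊X₂⌋₊ ≤ ⌊2 * X₂⌋₊ := Nat.floor_le_floor (by linarith)
  have hfull : ∑ χ ∈ T, ‖(∑ n ∈ Ioc ⌊X₁⌋₊ ⌊2 * X₁⌋₊, f χ n) *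
      ∑ m ∈ Ioc ⌊X₂⌋₊ (V (2 * X₁)), g χ m‖ ^ 2 ≤ 4 * Q := by
    refine (hf.sum_norm_sq_mul_le hg hB₁ hB₂ (by positivity) le_rfl
      (clampedHyperbola_le hfloor u _) (Y₁ := X₁ + 1) (Y₂ := X₂ + 1)
      ((floor_sub_floor_le hX₁.le (by linarith)).trans_eq (by ring)) ?_).trans ?_
    · refine le_trans (Nat.cast_le.mpr (Nat.sub_le_sub_right (clampedHyperbola_le hfloor u _) _))
        ((floor_sub_floor_le hX₂ (by linarith)).trans_eq (by ring))
    · have hlevel : ∀ X : ℝ, 0 ≤ X → D + √D * (X + 1) ≤ 2 * (2 ^ L * D + √D * X) := fun X hX => by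
        simpa only [pow_zero, one_mul] using
          two_pow_mul_add_sqrt_mul_le hD (Nat.zero_le L) hX (show 2 ^ 0 * X ≤ X by simp)
      calc _ ≤ √(B₁ * B₂) * (2 * (2 ^ L * D + √D * X₁) * (2 * (2 ^ L * D + √D * X₂))) := by
            gcongr √(B₁ * B₂) * (?_ * ?_)
            · exact hlevel X₁ hX₁.le
            · exact hlevel X₂ hX₂
        _ = 4 * Q := by ring
  have hrects := sum_norm_sq_sum_le_card_sq_mul (I := range L) fun l hl =>
    hf.sum_norm_sq_sum_rectangleSum_le hg hB₁ hB₂ hD hX₁ hX₂ u (mem_range.mp hl).le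
  rw [card_range] at hrects
  simp only [sum_filter_mul_le_eq_add_triangleSum _ _ hX₁.le,
    triangleSum_eq_sum_rectangleSum_add _ _ (antitoneOn_clampedHyperbola _ _ _) hX₁ L]
  refine (sum_le_sum fun χ _ => norm_add_add_sq_le _ _ _).trans ?_
  rw [← mul_sum, sum_add_distrib, sum_add_distrib]
  nlinarith [mul_nonneg (Nat.cast_nonneg (α := ℝ) L) hQ]

end Rectangles

section Characters

lemma FourthMomentLE.of_dirichletCharacter {d : ℕ} {T : Finset (DirichletCharacter ℂ d)}
    {w : ℕ → ℝ} (hw : Monotone w) (hw0 : 0 ≤ w 0) {K : ℝ} (hK : 0 ≤ K)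
    (h : ∀ a b, ∑ χ ∈ T, ‖∑ n ∈ Ioc a b, (w n : ℂ) * χ n‖ ^ 4 ≤
      K * w b ^ 4 * ((d : ℝ) ^ 2 + d * ((b - a : ℕ) : ℝ) ^ 2)) (b : ℕ) :
    FourthMomentLE T (fun χ n => (w n : ℂ) * χ n) b (K * w b ^ 4) d := fun p q hq =>
  (h p q).trans (by
    gcongr
    · exact hw0.trans (hw q.zero_le)
    · exact hw hq)

lemma sq_mul_floor_add_one_le {M C P Y η D : ℝ} (hP : 0 ≤ P) (hY : 0 ≤ Y) (hD : 0 ≤ D) :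
    (M * (C * (4 * P) ^ (η / 2))) ^ 2 * ((⌊2 * P / Y⌋₊ + 1 : ℕ) + D) * (⌊2 * P / Y⌋₊ + 1 : ℕ) ≤
      4 * (C ^ 2 * 4 ^ η) * P ^ η * M ^ 2 * ((P / Y + 1 + D) * (P / Y + 1)) := by
  have hfloor : ((⌊2 * P / Y⌋₊ + 1 : ℕ) : ℝ) ≤ 2 * (P / Y + 1) := by
    have := Nat.floor_le (a := 2 * P / Y) (by positivity)
    rw [mul_div_assoc] at this ⊢
    push_cast
    linarith
  have hsq : ((4 * P) ^ (η / 2)) ^ 2 = 4 ^ η * P ^ η := by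
    rw [← rpow_mul_natCast (by positivity), Nat.cast_ofNat, div_mul_cancel₀ η two_ne_zero,
      mul_rpow zero_le_four hP]
  calc _ ≤ (M * (C * (4 * P) ^ (η / 2))) ^ 2 * (2 * (P / Y + 1) + 2 * D) *
        (2 * (P / Y + 1)) := by
        gcongr
        linarith
    _ = _ := by
        rw [mul_pow, mul_pow, hsq]
        ring

lemma twelve_mul_add_three_mul_le {C K G H S M q r : ℝ} (hC : 0 ≤ C) (hK : 0 ≤ K) (hG : 1 ≤ G)
    (hH : 1 ≤ H) (hS : 1 ≤ S) (hM : 0 ≤ M) (hq : 0 ≤ q) (hr : 0 ≤ r) :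
    12 * S * (C * G * M * q) + 3 * (4 * K * H * M * r) ≤
      (12 * C + 12 * K) * G * H * S * M * (q + r) := by
  have : H ≤ G * H * S := by
    rw [mul_right_comm]
    exact le_mul_of_one_le_left (by positivity) (one_le_mul_of_one_le_of_one_le hG hS)
  calc _ = 12 * C * (G * S) * M * q + 12 * K * H * M * r := by ring
    _ ≤ 12 * C * (G * H * S) * M * (q + r) + 12 * K * (G * H * S) * M * (q + r) := by
        gcongr
        exacts [le_mul_of_one_le_right (by positivity) hH, le_add_of_nonneg_right hr,
          le_add_of_nonneg_left hq]
    _ = _ := by ring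

lemma exists_sum_norm_sq_bilinear_dirichletCharacter_le {η : ℝ} (hη : 0 < η) :
    ∃ C : ℝ, 1 ≤ C ∧ ∀ d : ℕ, 2 ≤ d → ∀ T : Finset (DirichletCharacter ℂ d),
      (∀ χ ∈ T, χ.IsPrimitive) → ∀ w₁ w₂ : ℕ → ℝ, Monotone w₁ → Monotone w₂ → 0 ≤ w₁ 0 →
      0 ≤ w₂ 0 → ∀ X₁ X₂ : ℝ, 1 ≤ X₁ → 1 ≤ X₂ → ∀ L u : ℕ,
      ∑ χ ∈ T, ‖∑ p ∈ Ioc ⌊X₁⌋₊ ⌊2 * X₁⌋₊ ×ˢ Ioc ⌊X₂⌋₊ ⌊2 * X₂⌋₊ with p.1 * p.2 ≤ u,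
          (w₁ p.1 * w₂ p.2 : ℂ) * χ ((p.1 * p.2 : ℕ) : ZMod d)‖ ^ 2 ≤
        C * (d : ℝ) ^ η * (X₁ * X₂) ^ η * (L + 1) ^ 2 *
          (w₁ ⌊2 * X₁⌋₊ ^ 2 * w₂ ⌊2 * X₂⌋₊ ^ 2) *
          ((2 ^ L * d + √d * X₁) * (2 ^ L * d + √d * X₂) +
            (X₁ * X₂ / 2 ^ L + 1 + d) * (X₁ * X₂ / 2 ^ L + 1)) := by
  obtain ⟨C₁, hC₁, hfourth⟩ := exists_sum_norm_pow_four_dirichletCharacter_le hη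
  obtain ⟨C₂, hC₂, hdiv⟩ := card_divisors_le_rpow (half_pos hη)
  have hK : (0 : ℝ) ≤ 12 * (C₂ ^ 2 * 4 ^ η) := by positivity
  refine ⟨12 * C₁ + 12 * (C₂ ^ 2 * 4 ^ η), by linarith, ?_⟩
  intro d hd T hT w₁ w₂ hw₁ hw₂ hw₁0 hw₂0 X₁ X₂ hX₁ hX₂ L u
  have : NeZero d := ⟨by omega⟩
  have hd1 : (1 : ℝ) ≤ d := Nat.one_le_cast.mpr (by omega)
  set M := w₁ ⌊2 * X₁⌋₊ ^ 2 * w₂ ⌊2 * X₂⌋₊ ^ 2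
  have hf := FourthMomentLE.of_dirichletCharacter hw₁ hw₁0 (by positivity)
    (fun a b => hfourth d hd T hT w₁ hw₁ hw₁0 a b) ⌊2 * X₁⌋₊
  have hg := FourthMomentLE.of_dirichletCharacter hw₂ hw₂0 (by positivity)
    (fun a b => hfourth d hd T hT w₂ hw₂ hw₂0 a b) ⌊2 * X₂⌋₊
  have hrem := (sum_le_univ_sum_of_nonneg (s := T) fun _ => by positivity).trans
    (sum_norm_sq_sum_triangleSum_le (d := d) (u := u) (L := L) (zero_lt_one.trans_le hX₁)
      (zero_le_one.trans hX₂) hw₁ hw₂ hw₁0 hw₂0 (half_pos hη).le (zero_le_one.trans hC₂) hdiv)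
  have hmain := hf.sum_norm_sq_sum_filter_mul_le_le hg (by positivity) (by positivity) hd1
    (zero_lt_one.trans_le hX₁) (zero_le_one.trans hX₂) hrem
  have hcollect : ∀ χ : DirichletCharacter ℂ d, ∀ p : ℕ × ℕ,
      (w₁ p.1 * w₂ p.2 : ℂ) * χ ((p.1 * p.2 : ℕ) : ZMod d) =
        w₁ p.1 * χ p.1 * (w₂ p.2 * χ p.2) := fun χ p => by
    rw [Nat.cast_mul, map_mul]
    ring
  have hsqrt : √(C₁ * (d : ℝ) ^ η * w₁ ⌊2 * X₁⌋₊ ^ 4 * (C₁ * (d : ℝ) ^ η * w₂ ⌊2 * X₂⌋₊ ^ 4)) =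
      C₁ * (d : ℝ) ^ η * M := by
    rw [← sqrt_sq (show 0 ≤ C₁ * (d : ℝ) ^ η * M by positivity)]
    congr 1
    ring
  simp only [hcollect]
  refine hmain.trans ?_
  rw [hsqrt]
  refine (add_le_add_right (mul_le_mul_of_nonneg_left (sq_mul_floor_add_one_le
    (by positivity) (by positivity) (by positivity)) zero_le_three) _).trans ?_
  rw [mul_pow]
  exact twelve_mul_add_three_mul_le (by positivity) (by positivity) (one_le_rpow hd1 hη.le)
    (one_le_rpow (one_le_mul_of_one_le_of_one_le hX₁ hX₂) hη.le)
    (one_le_pow₀ (le_add_of_nonneg_left L.cast_nonneg)) (by positivity) (by positivity)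
    (by positivity)

end Characters

/-! ### Dirichlet polynomials twisted by characters -/

section DirichletPolynomials

variable {d : ℕ}

lemma FourthMomentLE.sum_norm_sq_le {κ : Type*} {T : Finset κ} {f : κ → ℕ → ℂ} {b : ℕ} {B D : ℝ}
    (hf : FourthMomentLE T f b B D) (hB : 0 ≤ B) (hT : (#T : ℝ) ≤ D) {p q : ℕ} (hq : q ≤ b) :
    ∑ χ ∈ T, ‖∑ n ∈ Ioc p q, f χ n‖ ^ 2 ≤ √B * (D * √D + D * ((q - p : ℕ) : ℝ)) := by
  have hD : 0 ≤ D := (Nat.cast_nonneg _).trans hT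
  set l := ((q - p : ℕ) : ℝ)
  refine (sq_le_sq₀ (by positivity) (by positivity)).mp ?_
  calc _ ≤ (#T : ℝ) * ∑ χ ∈ T, (‖∑ n ∈ Ioc p q, f χ n‖ ^ 2) ^ 2 := sq_sum_le_card_mul_sum_sq
    _ ≤ D * (B * (D ^ 2 + D * l ^ 2)) := by
        simp only [← pow_mul]
        gcongr
        exact hf p q hq
    _ ≤ B * (D ^ 2 * D + D ^ 2 * l ^ 2 + 2 * (D * √D * (D * l))) := by
        nlinarith [show 0 ≤ B * (D * √D * (D * l)) by positivity]
    _ = (√B * (D * √D + D * l)) ^ 2 := by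
        rw [mul_pow, sq_sqrt hB, add_sq, mul_pow D, sq_sqrt hD]
        ring

lemma card_dirichletCharacter_le (T : Finset (DirichletCharacter ℂ d)) [NeZero d] : #T ≤ d :=
  (card_le_univ T).trans <| by
    rw [← Nat.card_eq_fintype_card, DirichletCharacter.card_eq_totient_of_hasEnoughRootsOfUnity]
    exact Nat.totient_le d

lemma exists_sum_norm_sq_dirichletCharacter_le {η : ℝ} (hη : 0 < η) :
    ∃ C : ℝ, 1 ≤ C ∧ ∀ d : ℕ, 2 ≤ d → ∀ T : Finset (DirichletCharacter ℂ d),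
      (∀ χ ∈ T, χ.IsPrimitive) → ∀ w : ℕ → ℝ, Monotone w → 0 ≤ w 0 → ∀ X : ℝ, 1 ≤ X → ∀ u : ℕ,
      ∑ χ ∈ T, ‖∑ n ∈ Ioc ⌊X⌋₊ ⌊2 * X⌋₊ with n ≤ u, (w n : ℂ) * χ n‖ ^ 2 ≤
        C * (d : ℝ) ^ η * w ⌊2 * X⌋₊ ^ 2 * (d * √d + d * X) := by
  obtain ⟨C, hC, hfourth⟩ := exists_sum_norm_pow_four_dirichletCharacter_le hη
  refine ⟨2 * C, by linarith, fun d hd T hT w hw hw0 X hX u => ?_⟩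
  have : NeZero d := ⟨by omega⟩
  have hK : 1 ≤ C * (d : ℝ) ^ η :=
    one_le_mul_of_one_le_of_one_le hC (one_le_rpow (Nat.one_le_cast.mpr (by omega)) hη.le)
  have hIoc : {n ∈ Ioc ⌊X⌋₊ ⌊2 * X⌋₊ | n ≤ u} = Ioc ⌊X⌋₊ (min ⌊2 * X⌋₊ u) := by
    ext n
    simp only [mem_filter, mem_Ioc, le_min_iff, and_assoc]
  have hlen : ((min ⌊2 * X⌋₊ u - ⌊X⌋₊ : ℕ) : ℝ) ≤ 2 * X :=
    (Nat.cast_le.mpr (Nat.sub_le_sub_right (min_le_left _ _) _)).trans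
      ((floor_sub_floor_le (zero_le_one.trans hX) (by linarith)).trans (by linarith))
  have hsqrt : √(C * (d : ℝ) ^ η * w ⌊2 * X⌋₊ ^ 4) ≤ C * (d : ℝ) ^ η * w ⌊2 * X⌋₊ ^ 2 := by
    rw [sqrt_le_left (by positivity), mul_pow, ← pow_mul]
    gcongr
    exact le_self_pow₀ hK two_ne_zero
  calc _ ≤ √(C * (d : ℝ) ^ η * w ⌊2 * X⌋₊ ^ 4) *
        (d * √d + d * ((min ⌊2 * X⌋₊ u - ⌊X⌋₊ : ℕ) : ℝ)) := by
        rw [hIoc]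
        exact (FourthMomentLE.of_dirichletCharacter hw hw0 (zero_le_one.trans hK)
          (fun a b => hfourth d hd T hT w hw hw0 a b) ⌊2 * X⌋₊).sum_norm_sq_le (by positivity)
          (Nat.cast_le.mpr (card_dirichletCharacter_le T)) (min_le_left _ _)
    _ ≤ C * (d : ℝ) ^ η * w ⌊2 * X⌋₊ ^ 2 * (2 * (d * √d) + d * (2 * X)) := by
        gcongr ?_ * (?_ + _ * ?_)
        exact le_mul_of_one_le_left (by positivity) one_le_two
    _ = _ := by ring

/-- `F χ` is, on the line `s = 1/2 + it` and for every `χ`, the Dirichlet polynomial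
`∑ n, c n * χ n * n ^ (-s)` with coefficients `c`, independent of `χ`, which are bounded by `W` and
supported in `[Z, R]`. -/
def IsDirichletPoly (F : DirichletCharacter ℂ d → ℝ → ℂ) (Z R W : ℝ) : Prop :=
  ∃ (S : Finset ℕ) (c : ℕ → ℂ), (∀ n ∈ S, 1 ≤ n ∧ Z ≤ n ∧ n ≤ R ∧ ‖c n‖ ≤ W) ∧
    ∀ χ t, F χ t = halfLinePoly S (fun n => c n * χ n) id t

namespace IsDirichletPoly

variable {F F₁ F₂ : DirichletCharacter ℂ d → ℝ → ℂ} {Z Z₁ Z₂ R R₁ R₂ W W₁ W₂ : ℝ}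

lemma mono (h : IsDirichletPoly F Z R W₁) (hW : W₁ ≤ W₂) : IsDirichletPoly F Z R W₂ := by
  obtain ⟨S, c, hc, hF⟩ := h
  exact ⟨S, c, fun n hn => (hc n hn).imp_right (.imp_right (.imp_right (le_trans · hW))), hF⟩

lemma one : IsDirichletPoly (fun (_ : DirichletCharacter ℂ d) _ => 1) 1 1 1 :=
  ⟨{1}, fun _ => 1, by simp, fun χ t => by simp [halfLinePoly]⟩

lemma of_fiber_le {ι : Type*} {S : Finset ι} {w : ι → ℂ} {f : ι → ℕ}
    (hf : ∀ i ∈ S, 1 ≤ f i ∧ Z ≤ f i ∧ f i ≤ R)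
    (hfib : ∀ i ∈ S, ∑ j ∈ S with f j = f i, ‖w j‖ ≤ W) :
    IsDirichletPoly (fun χ : DirichletCharacter ℂ d =>
      halfLinePoly S (fun i => w i * χ (f i)) f) Z R W := by
  classical
  refine ⟨S.image f, fun n => ∑ i ∈ S with f i = n, w i, forall_mem_image.mpr fun i hi => ?_,
    fun χ t => ?_⟩
  · exact ⟨(hf i hi).1, (hf i hi).2.1, (hf i hi).2.2, (norm_sum_le _ _).trans (hfib i hi)⟩
  · simp only [halfLinePoly]
    rw [← sum_fiberwise_of_maps_to (fun i hi => mem_image_of_mem f hi)]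
    refine sum_congr rfl fun n _ => ?_
    simp only [sum_mul]
    refine sum_congr rfl fun i hi => ?_
    rw [(mem_filter.mp hi).2, id]

lemma mul (h₁ : IsDirichletPoly F₁ Z₁ R₁ W₁) (h₂ : IsDirichletPoly F₂ Z₂ R₂ W₂) (hZ₂ : 0 ≤ Z₂)
    (hW₁ : 0 ≤ W₁) (hW₂ : 0 ≤ W₂) {τ : ℝ}
    (hτ : ∀ n : ℕ, 1 ≤ n → n ≤ R₁ * R₂ → (#n.divisors : ℝ) ≤ τ) :
    IsDirichletPoly (fun χ t => F₁ χ t * F₂ χ t) (Z₁ * Z₂) (R₁ * R₂) (τ * (W₁ * W₂)) := by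
  obtain ⟨S₁, c₁, hc₁, hF₁⟩ := h₁
  obtain ⟨S₂, c₂, hc₂, hF₂⟩ := h₂
  have hmem : ∀ p ∈ S₁ ×ˢ S₂, 1 ≤ p.1 * p.2 ∧ Z₁ * Z₂ ≤ (p.1 * p.2 : ℕ) ∧
      (p.1 * p.2 : ℕ) ≤ R₁ * R₂ := fun p hp => by
    obtain ⟨hp₁, hZp₁, hpR₁, -⟩ := hc₁ _ (mem_product.mp hp).1
    obtain ⟨hp₂, hZp₂, hpR₂, -⟩ := hc₂ _ (mem_product.mp hp).2
    rw [Nat.cast_mul]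
    exact ⟨Nat.mul_pos hp₁ hp₂, mul_le_mul hZp₁ hZp₂ hZ₂ (Nat.cast_nonneg _),
      mul_le_mul hpR₁ hpR₂ (Nat.cast_nonneg _) ((Nat.cast_nonneg _).trans hpR₁)⟩
  have key := of_fiber_le (d := d) (W := τ * (W₁ * W₂)) (w := fun p => c₁ p.1 * c₂ p.2) hmem
    fun p hp => ?_
  · convert key using 3 with χ t
    rw [hF₁, hF₂, halfLinePoly_mul_halfLinePoly]
    refine sum_congr rfl fun p _ => ?_
    have hχ : χ ((p.1 * p.2 : ℕ) : ZMod d) = χ p.1 * χ p.2 := by rw [Nat.cast_mul, map_mul]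
    simp only [id, hχ]
    ring
  · calc _ ≤ ∑ q ∈ S₁ ×ˢ S₂ with q.1 * q.2 = p.1 * p.2, W₁ * W₂ := by
          refine sum_le_sum fun q hq => ?_
          obtain ⟨hq₁, hq₂⟩ := mem_product.mp (mem_filter.mp hq).1
          rw [norm_mul]
          exact mul_le_mul (hc₁ _ hq₁).2.2.2 (hc₂ _ hq₂).2.2.2 (norm_nonneg _) hW₁
      _ ≤ τ * (W₁ * W₂) := by
          rw [sum_const, nsmul_eq_mul]
          gcongr
          exact (Nat.cast_le.mpr (card_filter_mul_eq_le_card_divisors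
            Function.injective_id.injOn (Nat.one_le_iff_ne_zero.mp (hmem p hp).1))).trans
            (hτ _ (hmem p hp).1 (hmem p hp).2.2)

lemma prod {ι : Type*} {F : ι → DirichletCharacter ℂ d → ℝ → ℂ} {Z R : ι → ℝ} {τ : ℝ}
    (J : Finset ι) (hF : ∀ j ∈ J, IsDirichletPoly (F j) (Z j) (R j) W)
    (hZ : ∀ j ∈ J, 0 ≤ Z j) (hR : ∀ j ∈ J, 1 ≤ R j) (hW : 0 ≤ W) (hτ0 : 0 ≤ τ)
    (hτ : ∀ n : ℕ, 1 ≤ n → n ≤ ∏ j ∈ J, R j → (#n.divisors : ℝ) ≤ τ) :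
    IsDirichletPoly (fun χ t => ∏ j ∈ J, F j χ t) (∏ j ∈ J, Z j) (∏ j ∈ J, R j)
      ((τ * W) ^ #J) := by
  induction J using Finset.cons_induction with
  | empty => simpa only [prod_empty, card_empty, pow_zero] using one
  | cons a J ha ih =>
    simp only [mem_cons, forall_eq_or_imp, prod_cons] at hF hZ hR hτ
    have hRJ : 0 ≤ ∏ j ∈ J, R j := prod_nonneg fun j hj => zero_le_one.trans (hR.2 j hj)
    have key := hF.1.mul (ih hF.2 hZ.2 hR.2 fun n hn hnR =>
      hτ n hn (hnR.trans (le_mul_of_one_le_left hRJ hR.1))) (prod_nonneg hZ.2) hW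
      (by positivity) hτ
    simpa only [prod_cons, card_cons, pow_succ', mul_assoc] using key

lemma lorentzMeanSquareLE [NeZero d] (h : IsDirichletPoly F Z R W) (hZ : 0 < Z) (hR : 0 ≤ R)
    (hW : 0 ≤ W) (T : Finset (DirichletCharacter ℂ d)) :
    LorentzMeanSquareLE T F (2 * π * (W ^ 2 * (R + d) * R / Z)) := by
  obtain ⟨S, c, hc, hF⟩ := h
  refine (lorentzMeanSquareLE_halfLinePoly T (S := S) (f := id) hZ (fun n hn => (hc n hn).2.1)
    fun k => ?_).congr fun χ _ t => hF χ t
  refine (sum_le_univ_sum_of_nonneg fun _ => by positivity).trans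
    ((sum_norm_sq_dirichletCharacter_le_of_fiber_le (A := 0) (Z := ⌊R⌋₊) (f := id) (fun n hn => ?_)
      hW fun m _ => ?_).trans ?_)
  · obtain ⟨hn1, -, hnR, -⟩ := hc n (mem_filter.mp hn).1
    exact mem_Ioc.mpr ⟨hn1, (Nat.le_floor hnR).trans_eq (zero_add _).symm⟩
  · simp only [id, filter_eq']
    split_ifs with hm
    · rw [sum_singleton]
      exact (hc m (mem_filter.mp hm).1).2.2.2
    · rwa [sum_empty]
  · have := Nat.floor_le hR
    gcongr

end IsDirichletPoly

end DirichletPolynomials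

/-! ### Splitting a product into balanced parts -/

section Factorization

variable {ι : Type*} [Fintype ι] {Z : ι → ℝ} {Λ : ℝ}

lemma exists_prod_le_and_le_prod_or_eq_univ {J₀ : Finset ι} {a b : ℝ} (hZ : ∀ j, 0 ≤ Z j)
    (hJ₀ : ∏ j ∈ J₀, Z j ≤ b) (hab : ∀ j ∉ J₀, Z j * a ≤ b) :
    ∃ J : Finset ι, ∏ j ∈ J, Z j ≤ b ∧ (a ≤ ∏ j ∈ J, Z j ∨ J = univ) := by
  obtain ⟨J, hJ₀J, hJ⟩ :=
    (Set.toFinite {J : Finset ι | J₀ ⊆ J ∧ ∏ j ∈ J, Z j ≤ b}).exists_le_maximal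
      (show J₀ ∈ _ from ⟨subset_rfl, hJ₀⟩)
  refine ⟨J, hJ.prop.2, or_iff_not_imp_left.mpr fun ha => eq_univ_iff_forall.mpr fun j => ?_⟩
  by_contra hj
  have hcons : ∏ i ∈ cons j J hj, Z i ≤ b := by
    rw [prod_cons]
    exact (mul_le_mul_of_nonneg_left (not_le.mp ha).le (hZ j)).trans
      (hab j fun hj₀ => hj (hJ₀J hj₀))
  exact hj (hJ.le_of_ge ⟨hJ₀J.trans (subset_cons hj), hcons⟩ (subset_cons hj) (mem_cons_self j J))

variable [DecidableEq ι]

lemma prod_compl_le_of_le_prod {J : Finset ι} {a b : ℝ} (ha : 0 < a) (hZ : ∀ j, 0 ≤ Z j)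
    (hab : ∏ j, Z j ≤ a * b) (hJ : a ≤ ∏ j ∈ J, Z j) : ∏ j ∈ Jᶜ, Z j ≤ b := by
  refine le_of_mul_le_mul_left ?_ ha
  calc a * ∏ j ∈ Jᶜ, Z j ≤ (∏ j ∈ J, Z j) * ∏ j ∈ Jᶜ, Z j := by
        gcongr
        exact prod_nonneg fun j _ => hZ j
    _ ≤ a * b := (prod_mul_prod_compl J Z).trans_le hab

lemma exists_balanced_of_unique_large (hZ : ∀ j, 0 ≤ Z j) (hΛ : 1 ≤ Λ)
    (hprod : ∏ j, Z j ≤ Λ ^ 5) (hsmall : ∀ j, Z j ≤ Λ ^ 3)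
    (hunique : ∀ i j, i ≠ j → Λ < Z i → Z j ≤ Λ) :
    ∃ J : Finset ι, ∏ j ∈ J, Z j ≤ Λ ^ 3 ∧ ∏ j ∈ Jᶜ, Z j ≤ Λ ^ 3 := by
  obtain ⟨J₀, hJ₀, hout⟩ : ∃ J₀ : Finset ι, ∏ j ∈ J₀, Z j ≤ Λ ^ 3 ∧ ∀ j ∉ J₀, Z j ≤ Λ := by
    by_cases hlarge : ∃ i, Λ < Z i
    · obtain ⟨i, hi⟩ := hlarge
      exact ⟨{i}, by simpa only [prod_singleton] using hsmall i,
        fun j hj => hunique i j (Ne.symm (by simpa only [mem_singleton] using hj)) hi⟩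
    · exact ⟨∅, by simpa only [prod_empty] using one_le_pow₀ hΛ,
        fun j _ => not_lt.mp (not_exists.mp hlarge j)⟩
  obtain ⟨J, hJ, hge | rfl⟩ := exists_prod_le_and_le_prod_or_eq_univ (a := Λ ^ 2) hZ hJ₀
    fun j hj => (mul_le_mul_of_nonneg_right (hout j hj) (by positivity)).trans_eq (by ring)
  · exact ⟨J, hJ, prod_compl_le_of_le_prod (by positivity) hZ (hprod.trans_eq (by ring)) hge⟩
  · exact ⟨univ, hJ, by simpa only [compl_univ, prod_empty] using one_le_pow₀ hΛ⟩

lemma exists_balanced_or_exists_large (hZ : ∀ j, 0 ≤ Z j) (hΛ : 1 ≤ Λ)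
    (hprod : ∏ j, Z j ≤ Λ ^ 5) :
    (∃ J : Finset ι, ∏ j ∈ J, Z j ≤ Λ ^ 3 ∧ ∏ j ∈ Jᶜ, Z j ≤ Λ ^ 3) ∨ (∃ j, Λ ^ 3 < Z j) ∨
      ∃ i j, i ≠ j ∧ Λ < Z i ∧ Z i ≤ Z j ∧ Z j < Λ ^ 2 ∧ Λ ^ 3 < Z i * Z j := by
  have hcompl : ∀ J : Finset ι, Λ ^ 2 ≤ ∏ j ∈ J, Z j → ∏ j ∈ Jᶜ, Z j ≤ Λ ^ 3 := fun J =>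
    prod_compl_le_of_le_prod (by positivity) hZ (hprod.trans_eq (by ring))
  by_cases hhuge : ∃ j, Λ ^ 3 < Z j
  · exact .inr (.inl hhuge)
  push Not at hhuge
  by_cases hlarge : ∃ j, Λ ^ 2 ≤ Z j
  · obtain ⟨j, hj⟩ := hlarge
    exact .inl ⟨{j}, by simpa only [prod_singleton] using hhuge j,
      hcompl _ (by simpa only [prod_singleton] using hj)⟩
  push Not at hlarge
  by_cases hpair : ∃ i j, i ≠ j ∧ Λ < Z i ∧ Λ < Z j
  · obtain ⟨i, j, hij, hi, hj⟩ := hpair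
    rcases le_or_gt (Z i * Z j) (Λ ^ 3) with hle | hlt
    · refine .inl ⟨{i, j}, by rwa [prod_pair hij], hcompl _ ?_⟩
      rw [prod_pair hij, sq]
      exact mul_le_mul hi.le hj.le (by positivity) (hZ i)
    · right; right
      rcases le_total (Z i) (Z j) with h | h
      · exact ⟨i, j, hij, hi, h, hlarge j, hlt⟩
      · exact ⟨j, i, hij.symm, hj, h, hlarge i, by rwa [mul_comm]⟩
  · push Not at hpair
    exact .inl (exists_balanced_of_unique_large hZ hΛ hprod hhuge hpair)

end Factorization

/-! ### Factors with monotone weights -/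

section MonotoneFactors

variable {d : ℕ}

/-- `F χ` is, on the line `s = 1/2 + it`, the Dirichlet polynomial `∑ n, w n * χ n * n ^ (-s)` over
`X < n ≤ 2 * X`, with a nonnegative monotone weight `w` bounded by `W`. Such factors have small
fourth moments. -/
def IsMonotoneDirichletPoly (F : DirichletCharacter ℂ d → ℝ → ℂ) (X W : ℝ) : Prop :=
  ∃ w : ℕ → ℝ, Monotone w ∧ 0 ≤ w 0 ∧ w ⌊2 * X⌋₊ ≤ W ∧
    ∀ χ t, F χ t = halfLinePoly (Ioc ⌊X⌋₊ ⌊2 * X⌋₊) (fun n => w n * χ n) id t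

lemma exists_lorentzMeanSquareLE_of_isMonotoneDirichletPoly {η : ℝ} (hη : 0 < η) :
    ∃ C : ℝ, 1 ≤ C ∧ ∀ d : ℕ, 2 ≤ d → ∀ T : Finset (DirichletCharacter ℂ d),
      (∀ χ ∈ T, χ.IsPrimitive) → ∀ (F : DirichletCharacter ℂ d → ℝ → ℂ) (X W : ℝ),
      IsMonotoneDirichletPoly F X W → 1 ≤ X →
      LorentzMeanSquareLE T F (C * ((d : ℝ) ^ η * W ^ 2) * ((d * √d + d * X) / X)) := by
  obtain ⟨C, hC, hsum⟩ := exists_sum_norm_sq_dirichletCharacter_le hη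
  refine ⟨2 * π * C, one_le_mul_of_one_le_of_one_le (by linarith [pi_gt_three]) hC, ?_⟩
  rintro d hd T hT F X W ⟨w, hw, hw0, hwW, hF⟩ hX
  have hX0 := zero_lt_one.trans_le hX
  have hW0 : 0 ≤ w ⌊2 * X⌋₊ := hw0.trans (hw (Nat.zero_le _))
  refine ((lorentzMeanSquareLE_halfLinePoly T hX0
    (fun n hn => (Nat.lt_of_floor_lt (mem_Ioc.mp hn).1).le)
    fun u => hsum d hd T hT w hw hw0 X hX u).congr fun χ _ t => hF χ t).mono ?_
  calc _ = 2 * π * C * ((d : ℝ) ^ η * w ⌊2 * X⌋₊ ^ 2) * ((d * √d + d * X) / X) := by ring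
    _ ≤ _ := by gcongr

lemma exists_lorentzMeanSquareLE_mul_of_isMonotoneDirichletPoly {η : ℝ} (hη : 0 < η) :
    ∃ C : ℝ, 1 ≤ C ∧ ∀ d : ℕ, 2 ≤ d → ∀ T : Finset (DirichletCharacter ℂ d),
      (∀ χ ∈ T, χ.IsPrimitive) → ∀ (F₁ F₂ : DirichletCharacter ℂ d → ℝ → ℂ) (X₁ X₂ W₁ W₂ : ℝ),
      IsMonotoneDirichletPoly F₁ X₁ W₁ → IsMonotoneDirichletPoly F₂ X₂ W₂ → 1 ≤ X₁ → 1 ≤ X₂ →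
      ∀ L : ℕ, LorentzMeanSquareLE T (fun χ t => F₁ χ t * F₂ χ t)
        (C * ((d : ℝ) ^ η * (X₁ * X₂) ^ η * (L + 1) ^ 2 * (W₁ ^ 2 * W₂ ^ 2)) *
          (((2 ^ L * d + √d * X₁) * (2 ^ L * d + √d * X₂) +
            (X₁ * X₂ / 2 ^ L + 1 + d) * (X₁ * X₂ / 2 ^ L + 1)) / (X₁ * X₂))) := by
  obtain ⟨C, hC, hsum⟩ := exists_sum_norm_sq_bilinear_dirichletCharacter_le hη
  refine ⟨2 * π * C, one_le_mul_of_one_le_of_one_le (by linarith [pi_gt_three]) hC, ?_⟩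
  rintro d hd T hT F₁ F₂ X₁ X₂ W₁ W₂ ⟨w₁, hw₁, hw₁0, hwW₁, hF₁⟩ ⟨w₂, hw₂, hw₂0, hwW₂, hF₂⟩ hX₁ hX₂ L
  have hW₁0 : 0 ≤ w₁ ⌊2 * X₁⌋₊ := hw₁0.trans (hw₁ (Nat.zero_le _))
  have hW₂0 : 0 ≤ w₂ ⌊2 * X₂⌋₊ := hw₂0.trans (hw₂ (Nat.zero_le _))
  have hlow : ∀ p ∈ Ioc ⌊X₁⌋₊ ⌊2 * X₁⌋₊ ×ˢ Ioc ⌊X₂⌋₊ ⌊2 * X₂⌋₊,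
      X₁ * X₂ ≤ ((p.1 * p.2 : ℕ) : ℝ) := fun p hp => by
    rw [mem_product, mem_Ioc, mem_Ioc] at hp
    rw [Nat.cast_mul]
    exact mul_le_mul (Nat.lt_of_floor_lt hp.1.1).le (Nat.lt_of_floor_lt hp.2.1).le (by linarith)
      (Nat.cast_nonneg _)
  refine ((lorentzMeanSquareLE_halfLinePoly T (by positivity) hlow
    fun u => hsum d hd T hT w₁ w₂ hw₁ hw₂ hw₁0 hw₂0 X₁ X₂ hX₁ hX₂ L u).congr
    fun χ _ t => ?_).mono ?_
  · rw [hF₁, hF₂, halfLinePoly_mul_halfLinePoly]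
    refine sum_congr rfl fun p _ => ?_
    have hχ : χ ((p.1 * p.2 : ℕ) : ZMod d) = χ p.1 * χ p.2 := by rw [Nat.cast_mul, map_mul]
    simp only [id, hχ]
    ring
  · set Q := (2 ^ L * d + √d * X₁) * (2 ^ L * d + √d * X₂) +
      (X₁ * X₂ / 2 ^ L + 1 + d) * (X₁ * X₂ / 2 ^ L + 1)
    calc _ = 2 * π * C * ((d : ℝ) ^ η * (X₁ * X₂) ^ η * (L + 1) ^ 2 *
          (w₁ ⌊2 * X₁⌋₊ ^ 2 * w₂ ⌊2 * X₂⌋₊ ^ 2)) * (Q / (X₁ * X₂)) := by ring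
      _ ≤ _ := by gcongr

end MonotoneFactors

/-! ### Mean squares up to powers of `N ^ δ` -/

lemma exists_rpow_le_and_one_add_log_le {δ c : ℝ} (hδ : 0 < δ) (hc : 1 ≤ c) (m : ℕ) :
    ∃ η : ℝ, 0 < η ∧ ∃ A : ℝ, 1 ≤ A ∧ ∀ N : ℝ, 1 ≤ N → ∃ E : ℝ, 1 ≤ E ∧ E ^ m ≤ A * N ^ δ ∧
      ∀ x : ℝ, 1 ≤ x → x ≤ c * N ^ 2 → x ^ η ≤ E ∧ 1 + Real.log x ≤ E := by
  obtain ⟨η, hη⟩ : ∃ η, η = δ / (2 * (m + 1)) := ⟨_, rfl⟩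
  have hη0 : 0 < η := by rw [hη]; positivity
  have hηm : 2 * η * m ≤ δ := by
    calc 2 * η * m ≤ 2 * η * (m + 1) := by gcongr; exact (lt_add_one _).le
      _ = δ := by rw [hη]; field_simp
  have hη1 : 1 ≤ 1 + 1 / η := le_add_of_nonneg_right (by positivity)
  refine ⟨η, hη0, ((1 + 1 / η) * c ^ η) ^ m,
    one_le_pow₀ (one_le_mul_of_one_le_of_one_le hη1 (one_le_rpow hc hη0.le)), fun N hN => ?_⟩
  have hcN : 1 ≤ c * N ^ 2 := one_le_mul_of_one_le_of_one_le hc (one_le_pow₀ hN)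
  refine ⟨(1 + 1 / η) * (c * N ^ 2) ^ η,
    one_le_mul_of_one_le_of_one_le hη1 (one_le_rpow hcN hη0.le), ?_, fun x hx hxN => ?_⟩
  · calc _ = ((1 + 1 / η) * c ^ η) ^ m * N ^ (2 * η * m) := by
          rw [mul_rpow (by positivity) (by positivity), ← mul_assoc, mul_pow,
            ← rpow_natCast_mul (by positivity), ← rpow_mul_natCast (by positivity), Nat.cast_ofNat]
      _ ≤ _ := by gcongr
  · have hxE : x ^ η ≤ (c * N ^ 2) ^ η := by gcongr
    exact ⟨hxE.trans (le_mul_of_one_le_left (by positivity) hη1),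
      (one_add_log_le_mul_rpow hη0 hx).trans (by gcongr)⟩

lemma IsDirichletPoly.lorentzMeanSquareLE_prod {ι : Type*} [Fintype ι] {d : ℕ} [NeZero d]
    {F : ι → DirichletCharacter ℂ d → ℝ → ℂ} {Z : ι → ℝ} {W τ : ℝ} (hZ : ∀ j, 1 ≤ Z j)
    (hF : ∀ j, IsDirichletPoly (F j) (Z j) (2 * Z j) W) (hW : 1 ≤ W) (hτ1 : 1 ≤ τ)
    (hτ : ∀ n : ℕ, 1 ≤ n → n ≤ ∏ j, 2 * Z j → (#n.divisors : ℝ) ≤ τ)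
    (T : Finset (DirichletCharacter ℂ d)) (J : Finset ι) :
    LorentzMeanSquareLE T (fun χ t => ∏ j ∈ J, F j χ t)
      (2 * π * (τ * W) ^ (2 * Fintype.card ι) * 4 ^ Fintype.card ι * (d + ∏ j ∈ J, Z j)) := by
  have hR (j : ι) : 1 ≤ 2 * Z j := by linarith [hZ j]
  have hle : ∏ j ∈ J, 2 * Z j ≤ ∏ j, 2 * Z j :=
    prod_le_prod_of_subset_of_one_le (subset_univ J) (fun j _ => zero_le_one.trans (hR j))
      fun j _ _ => hR j
  have hZJ : 0 < ∏ j ∈ J, Z j := prod_pos fun j _ => zero_lt_one.trans_le (hZ j)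
  have hτW : 1 ≤ τ * W := one_le_mul_of_one_le_of_one_le hτ1 hW
  refine ((IsDirichletPoly.prod J (fun j _ => hF j) (fun j _ => zero_le_one.trans (hZ j))
    (fun j _ => hR j) (zero_le_one.trans hW) (zero_le_one.trans hτ1) fun n hn hnR =>
      hτ n hn (hnR.trans hle)).lorentzMeanSquareLE hZJ
        (prod_nonneg fun j _ => zero_le_one.trans (hR j)) (by positivity) T).mono ?_
  have hJ : #J ≤ Fintype.card ι := card_le_univ J
  have h2J : (2 : ℝ) ^ #J ≤ 2 ^ Fintype.card ι := pow_le_pow_right₀ one_le_two hJ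
  have hd : (d : ℝ) ≤ 2 ^ Fintype.card ι * d :=
    le_mul_of_one_le_left (by positivity) (one_le_pow₀ one_le_two)
  calc _ = 2 * π * ((τ * W) ^ #J) ^ 2 * ((2 ^ #J * ∏ j ∈ J, Z j + d) * 2 ^ #J) := by
        rw [prod_mul_distrib, prod_const]
        field_simp
    _ ≤ 2 * π * ((τ * W) ^ Fintype.card ι) ^ 2 * ((2 ^ Fintype.card ι * ∏ j ∈ J, Z j +
          2 ^ Fintype.card ι * d) * 2 ^ Fintype.card ι) := by gcongr
    _ = _ := by
        rw [show (4 : ℝ) = 2 * 2 by norm_num, mul_pow 2 2]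
        ring

lemma exists_lorentzMeanSquareLE_prod {ι : Type*} [Fintype ι] {δ c : ℝ} (hδ : 0 < δ) (hc : 1 ≤ c) :
    ∃ K : ℝ, 1 ≤ K ∧ ∀ d : ℕ, 2 ≤ d → ∀ N : ℝ, 1 ≤ N → ∀ (T : Finset (DirichletCharacter ℂ d))
      (F : ι → DirichletCharacter ℂ d → ℝ → ℂ) (Z : ι → ℝ), (∀ j, 1 ≤ Z j) →
      ∏ j, 2 * Z j ≤ c * N ^ 2 →
      (∀ j, IsDirichletPoly (F j) (Z j) (2 * Z j) (1 + Real.log (2 * Z j))) → ∀ J : Finset ι,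
      LorentzMeanSquareLE T (fun χ t => ∏ j ∈ J, F j χ t) (K * N ^ δ * (d + ∏ j ∈ J, Z j)) := by
  obtain ⟨η, hη, A, hA, hE⟩ := exists_rpow_le_and_one_add_log_le hδ hc (4 * Fintype.card ι)
  obtain ⟨C, hC, hdiv⟩ := card_divisors_le_rpow hη
  refine ⟨2 * π * C ^ (2 * Fintype.card ι) * 4 ^ Fintype.card ι * A,
    one_le_mul_of_one_le_of_one_le (one_le_mul_of_one_le_of_one_le
      (one_le_mul_of_one_le_of_one_le (by linarith [pi_gt_three]) (one_le_pow₀ hC))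
      (one_le_pow₀ (by norm_num))) hA, fun d hd N hN T F Z hZ hprod hF J => ?_⟩
  have : NeZero d := ⟨by omega⟩
  obtain ⟨E, hE1, hEN, hEx⟩ := hE N hN
  have hFE (j : ι) : IsDirichletPoly (F j) (Z j) (2 * Z j) E := by
    refine (hF j).mono (hEx _ (by linarith [hZ j]) (le_trans ?_ hprod)).2
    rw [← prod_singleton (fun j => 2 * Z j) j]
    exact prod_le_prod_of_subset_of_one_le (subset_univ _) (fun i _ => by linarith [hZ i])
      fun i _ _ => by linarith [hZ i]
  have hZJ : 0 < ∏ j ∈ J, Z j := prod_pos fun j _ => zero_lt_one.trans_le (hZ j)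
  refine (IsDirichletPoly.lorentzMeanSquareLE_prod hZ hFE hE1
    (one_le_mul_of_one_le_of_one_le hC hE1) (fun n hn hnZ => (hdiv n hn).trans ?_) T J).mono ?_
  · gcongr
    exact (hEx n (Nat.one_le_cast.mpr hn) (hnZ.trans hprod)).1
  · calc _ = 2 * π * C ^ (2 * Fintype.card ι) * 4 ^ Fintype.card ι * (d + ∏ j ∈ J, Z j) *
          E ^ (4 * Fintype.card ι) := by ring
      _ ≤ 2 * π * C ^ (2 * Fintype.card ι) * 4 ^ Fintype.card ι * (d + ∏ j ∈ J, Z j) *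
          (A * N ^ δ) := by gcongr
      _ = _ := by ring

lemma exists_lorentzMeanSquareLE_of_le_mul {δ c : ℝ} (hδ : 0 < δ) (hc : 1 ≤ c) :
    ∃ K : ℝ, 1 ≤ K ∧ ∀ d : ℕ, 2 ≤ d → ∀ N : ℝ, 1 ≤ N → d ≤ N ^ 2 →
      ∀ T : Finset (DirichletCharacter ℂ d), (∀ χ ∈ T, χ.IsPrimitive) →
      ∀ (F : DirichletCharacter ℂ d → ℝ → ℂ) (X s : ℝ),
      IsMonotoneDirichletPoly F X (1 + Real.log (2 * X)) → 1 ≤ X → 2 * X ≤ c * N ^ 2 → 1 ≤ s →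
      N ≤ s * X → LorentzMeanSquareLE T F (K * N ^ δ * (d * s)) := by
  obtain ⟨η, hη, A, hA, hE⟩ := exists_rpow_le_and_one_add_log_le hδ hc 3
  obtain ⟨C, hC, hmean⟩ := exists_lorentzMeanSquareLE_of_isMonotoneDirichletPoly hη
  refine ⟨2 * C * A, one_le_mul_of_one_le_of_one_le (by linarith) hA,
    fun d hd N hN hdN T hT F X s hF hX hXN hs hNs => (hmean d hd T hT F X _ hF hX).mono ?_⟩
  obtain ⟨E, hE1, hEN, hEx⟩ := hE N hN
  have hdE : (d : ℝ) ^ η ≤ E := (hEx d (Nat.one_le_cast.mpr (by omega))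
    (hdN.trans (le_mul_of_one_le_left (by positivity) hc))).1
  have hWE : 1 + Real.log (2 * X) ≤ E := (hEx _ (by linarith) hXN).2
  have hlog : 0 ≤ 1 + Real.log (2 * X) := by linarith [Real.log_nonneg (by linarith : 1 ≤ 2 * X)]
  have hratio : (d * √d + d * X) / X ≤ 2 * (d * s) := by
    have hsqrt : √(d : ℝ) ≤ s * X := (Real.sqrt_le_left (by linarith)).mpr hdN |>.trans hNs
    have hsX : X ≤ s * X := le_mul_of_one_le_left (by linarith) hs
    rw [div_le_iff₀ (by linarith)]
    calc d * √d + d * X ≤ d * (s * X) + d * (s * X) := by gcongr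
      _ = _ := by ring
  calc C * ((d : ℝ) ^ η * (1 + Real.log (2 * X)) ^ 2) * ((d * √d + d * X) / X)
      ≤ C * (E * E ^ 2) * (2 * (d * s)) := by gcongr
    _ = 2 * C * E ^ 3 * (d * s) := by ring
    _ ≤ 2 * C * (A * N ^ δ) * (d * s) := by gcongr
    _ = _ := by ring

lemma exists_two_pow_sq_le_le {y : ℝ} (hy : 1 ≤ y) :
    ∃ L : ℕ, ((2 : ℝ) ^ L) ^ 2 ≤ y ∧ y ≤ 4 * ((2 : ℝ) ^ L) ^ 2 := by
  obtain ⟨L, hL, hL'⟩ := exists_nat_pow_near hy (by norm_num : (1 : ℝ) < 4)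
  have hsq : ((2 : ℝ) ^ L) ^ 2 = 4 ^ L := by rw [pow_right_comm]; norm_num
  exact ⟨L, hsq.trans_le hL, by rw [hsq, ← pow_succ']; exact hL'.le⟩

lemma mul_sqrt_mul_le {c d s D X₁ X₂ : ℝ} (hc : 1 ≤ c) (hd : 0 ≤ d) (hs : 0 < s) (hX₁ : 0 ≤ X₁)
    (hX₂ : 0 ≤ X₂) (h₂₁ : X₂ ≤ c * s ^ 3 * X₁) (hle : D ^ 2 * (d * s) ≤ X₁ * X₂) :
    D * √d * X₂ ≤ c * s * (X₁ * X₂) := by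
  refine abs_le_of_sq_le_sq' ?_ (by positivity) |>.2
  refine le_of_mul_le_mul_right ?_ hs
  calc (D * √d * X₂) ^ 2 * s = D ^ 2 * (d * s) * X₂ * X₂ := by
        rw [mul_pow, mul_pow, Real.sq_sqrt hd]
        ring
    _ ≤ X₁ * X₂ * X₂ * (c * s ^ 3 * X₁) := by gcongr
    _ = c * (s ^ 3 * (X₁ * X₂) ^ 2) := by ring
    _ ≤ c ^ 2 * (s ^ 3 * (X₁ * X₂) ^ 2) := by gcongr; exact le_self_pow₀ hc two_ne_zero
    _ = (c * s * (X₁ * X₂)) ^ 2 * s := by ring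

lemma bilinear_ratio_le {c d s D X₁ X₂ : ℝ} (hc : 1 ≤ c) (hd : 1 ≤ d) (hs : 1 ≤ s) (hD : 1 ≤ D)
    (hX₁ : 1 ≤ X₁) (h₁₂ : X₁ ≤ X₂) (h₂₁ : X₂ ≤ c * s ^ 3 * X₁) (hle : D ^ 2 * (d * s) ≤ X₁ * X₂)
    (hge : X₁ * X₂ ≤ 4 * D ^ 2 * (d * s)) :
    ((D * d + √d * X₁) * (D * d + √d * X₂) + (X₁ * X₂ / D + 1 + d) * (X₁ * X₂ / D + 1)) /
      (X₁ * X₂) ≤ 13 * c * (d * s) := by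
  obtain ⟨P, hP⟩ : ∃ P, P = X₁ * X₂ := ⟨_, rfl⟩
  have hP1 : 1 ≤ P := hP ▸ one_le_mul_of_one_le_of_one_le hX₁ (hX₁.trans h₁₂)
  have hX₂ : 0 ≤ X₂ := by linarith
  have hcross : D * √d * X₂ ≤ c * s * P :=
    hP ▸ mul_sqrt_mul_le hc (by linarith) (by linarith) (by linarith) hX₂ h₂₁ hle
  have hdP : d * P ≤ d * s * P := by gcongr; exact le_mul_of_one_le_right (by linarith) hs
  have hsquare : D ^ 2 * d ^ 2 ≤ d * s * P := by
    calc D ^ 2 * d ^ 2 = d * (D ^ 2 * d) := by ring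
      _ ≤ d * (D ^ 2 * (d * s)) := by gcongr; exact le_mul_of_one_le_right (by linarith) hs
      _ ≤ d * P := by gcongr; exact hP ▸ hle
      _ ≤ _ := hdP
  have hmixed : D * d * √d * (X₁ + X₂) ≤ 2 * c * (d * s * P) := by
    calc D * d * √d * (X₁ + X₂) ≤ D * d * √d * (X₂ + X₂) := by gcongr
      _ = 2 * d * (D * √d * X₂) := by ring
      _ ≤ 2 * d * (c * s * P) := by gcongr
      _ = _ := by ring
  have hquot : (P / D) ^ 2 ≤ 4 * (d * s * P) := by
    rw [div_pow, div_le_iff₀ (by positivity)]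
    calc P ^ 2 = P * P := sq P
      _ ≤ P * (4 * D ^ 2 * (d * s)) := by gcongr; exact hP.trans_le hge
      _ = _ := by ring
  have hlin : P / D * (2 + d) + (1 + d) ≤ 5 * (d * s * P) := by
    calc P / D * (2 + d) + (1 + d) ≤ P * (2 * d + d) + (d + d) * P := by
          gcongr ?_ * (?_ + d) + ?_
          · exact div_le_self (by linarith) hD
          · linarith
          · exact (by linarith : 1 + d ≤ d + d).trans (le_mul_of_one_le_right (by linarith) hP1)
      _ = 5 * (d * P) := by ring
      _ ≤ _ := by gcongr
  rw [← hP, div_le_iff₀ (by linarith)]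
  calc _ = D ^ 2 * d ^ 2 + D * d * √d * (X₁ + X₂) + √d ^ 2 * (X₁ * X₂) + (P / D) ^ 2 +
        (P / D * (2 + d) + (1 + d)) := by ring
    _ ≤ d * s * P + 2 * c * (d * s * P) + d * s * P + 4 * (d * s * P) + 5 * (d * s * P) := by
        rw [Real.sq_sqrt (by linarith), ← hP]
        gcongr
    _ = (11 + 2 * c) * (d * s * P) := by ring
    _ ≤ 13 * c * (d * s * P) := by gcongr; linarith
    _ = _ := by ring

lemma exists_lorentzMeanSquareLE_mul_of_le_mul {δ c : ℝ} (hδ : 0 < δ) (hc : 1 ≤ c) :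
    ∃ K : ℝ, 1 ≤ K ∧ ∀ d : ℕ, 2 ≤ d → ∀ N : ℝ, 1 ≤ N → d ≤ N ^ 2 →
      ∀ T : Finset (DirichletCharacter ℂ d), (∀ χ ∈ T, χ.IsPrimitive) →
      ∀ (F₁ F₂ : DirichletCharacter ℂ d → ℝ → ℂ) (X₁ X₂ s : ℝ),
      IsMonotoneDirichletPoly F₁ X₁ (1 + Real.log (2 * X₁)) →
      IsMonotoneDirichletPoly F₂ X₂ (1 + Real.log (2 * X₂)) → 1 ≤ s → 1 ≤ X₁ → X₁ ≤ X₂ →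
      X₂ ≤ c * s ^ 3 * X₁ → d * s ≤ X₁ * X₂ → 2 * X₂ ≤ c * N ^ 2 → X₁ * X₂ ≤ c * N ^ 2 →
      LorentzMeanSquareLE T (fun χ t => F₁ χ t * F₂ χ t) (K * N ^ δ * (d * s)) := by
  obtain ⟨η, hη, A, hA, hE⟩ := exists_rpow_le_and_one_add_log_le hδ hc 8
  obtain ⟨C, hC, hmean⟩ := exists_lorentzMeanSquareLE_mul_of_isMonotoneDirichletPoly hη
  refine ⟨52 * c * C * A, one_le_mul_of_one_le_of_one_le (by nlinarith) hA, ?_⟩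
  intro d hd N hN hdN T hT F₁ F₂ X₁ X₂ s hF₁ hF₂ hs hX₁ h₁₂ h₂₁ hge hX₂N hPN
  have hX₂ : 1 ≤ X₂ := hX₁.trans h₁₂
  have hd1 : (1 : ℝ) ≤ d := Nat.one_le_cast.mpr (by omega)
  have hds : 1 ≤ d * s := one_le_mul_of_one_le_of_one_le hd1 hs
  obtain ⟨L, hL, hL'⟩ := exists_two_pow_sq_le_le ((one_le_div (by linarith)).mpr hge)
  rw [le_div_iff₀ (by linarith)] at hL
  rw [div_le_iff₀ (by linarith)] at hL'
  obtain ⟨E, hE1, hEN, hEx⟩ := hE N hN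
  refine (hmean d hd T hT F₁ F₂ X₁ X₂ _ _ hF₁ hF₂ hX₁ hX₂ L).mono ?_
  have hratio := bilinear_ratio_le hc hd1 hs (one_le_pow₀ one_le_two) hX₁ h₁₂ h₂₁ hL hL'
  have hdE : (d : ℝ) ^ η ≤ E :=
    (hEx d hd1 (hdN.trans (le_mul_of_one_le_left (by positivity) hc))).1
  have hP : 1 ≤ X₁ * X₂ := one_le_mul_of_one_le_of_one_le hX₁ hX₂
  have hPE := hEx _ hP hPN
  have hLE : (L : ℝ) + 1 ≤ 2 * E := by
    have h2P : (2 : ℝ) ^ L ≤ X₁ * X₂ :=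
      (le_self_pow₀ (one_le_pow₀ one_le_two) two_ne_zero).trans
        ((le_mul_of_one_le_right (by positivity) hds).trans hL)
    have hlog : L * Real.log 2 ≤ Real.log (X₁ * X₂) := by
      rw [← Real.log_pow]
      exact Real.log_le_log (by positivity) h2P
    have hlog2 : (L : ℝ) * (1 / 2) ≤ L * Real.log 2 := by
      gcongr
      linarith [Real.log_two_gt_d9]
    linarith [hPE.2]
  have hW₁ : 0 ≤ 1 + Real.log (2 * X₁) := by linarith [Real.log_nonneg (by linarith : 1 ≤ 2 * X₁)]
  have hW₂ : 0 ≤ 1 + Real.log (2 * X₂) := by linarith [Real.log_nonneg (by linarith : 1 ≤ 2 * X₂)]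
  have hW₁E : 1 + Real.log (2 * X₁) ≤ E := (hEx _ (by linarith) (by linarith)).2
  have hW₂E : 1 + Real.log (2 * X₂) ≤ E := (hEx _ (by linarith) hX₂N).2
  calc _ ≤ C * (E * E * (2 * E) ^ 2 * (E ^ 2 * E ^ 2)) * (13 * c * (d * s)) := by
        gcongr
        exact hPE.1
    _ = 52 * c * C * E ^ 8 * (d * s) := by ring
    _ ≤ 52 * c * C * (A * N ^ δ) * (d * s) := by gcongr
    _ = _ := by ring

/-! ### Splitting a product at a scale -/

section Splitting

/-- The comparisons, up to the constant `c`, between the length parameter `N`, the scale `Λ` such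
that the product to be split has total length `Λ ^ 5`, and the factor `s` by which the mean square
of a long factor exceeds the modulus. -/
structure ScaleCondition (c N Λ s : ℝ) : Prop where
  one_le_scale : 1 ≤ Λ
  one_le_loss : 1 ≤ s
  scale_sq_le : Λ ^ 2 ≤ c * N
  scale_pow_three_le : Λ ^ 3 ≤ c * (N * s)
  scale_pow_five_le : Λ ^ 5 ≤ c * N ^ 2
  scale_le_loss_pow_three : Λ ≤ c * s ^ 3
  le_loss_mul_scale_pow_three : N ≤ s * Λ ^ 3

lemma scaleCondition_rpow {α ε b N : ℝ} (hα : 3 / 8 ≤ α) (hα' : α < 2 / 5) (hε : 0 < ε)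
    (hε' : ε ≤ 1 / 100) (hb : 1 ≤ b) (hN : 1 ≤ N) :
    ScaleCondition (b ^ 5) N (b * N ^ (α - ε / 5)) (N ^ (3 * α - 1 - ε / 50)) := by
  have hN0 : 0 < N := by linarith
  have hpow (x : ℝ) (m : ℕ) : (b * N ^ x) ^ m = b ^ m * N ^ (x * m) := by
    rw [mul_pow, rpow_mul_natCast hN0.le]
  have hle {m : ℕ} {x y : ℝ} (hm : m ≤ 5) (hxy : x ≤ y) : b ^ m * N ^ x ≤ b ^ 5 * N ^ y := by
    gcongr
  refine ⟨one_le_mul_of_one_le_of_one_le hb (one_le_rpow hN (by linarith)),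
    one_le_rpow hN (by linarith), ?_, ?_, ?_, ?_, ?_⟩
  · rw [hpow]
    refine (hle (y := 1) (by norm_num) (by push_cast; linarith)).trans_eq (by rw [rpow_one])
  · rw [hpow]
    refine (hle (y := 1 + (3 * α - 1 - ε / 50)) (by norm_num) (by push_cast; linarith)).trans_eq ?_
    rw [rpow_add hN0, rpow_one]
  · rw [hpow]
    refine (hle (y := 2) (by norm_num) (by push_cast; linarith)).trans_eq (by rw [rpow_two])
  · rw [← rpow_mul_natCast hN0.le]
    refine le_trans (by rw [pow_one]) (hle (m := 1) (by norm_num) (by push_cast; linarith))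
  · rw [hpow, mul_left_comm, ← rpow_add hN0]
    exact (self_le_rpow_of_one_le hN (by push_cast; linarith)).trans
      (le_mul_of_one_le_left (by positivity) (one_le_pow₀ hb))

lemma ScaleCondition.le_mul {c N Λ s X₁ X₂ : ℝ} (hS : ScaleCondition c N Λ s) (hX₁ : Λ ≤ X₁)
    (hX₂ : X₂ ≤ Λ ^ 2) : X₂ ≤ c * s ^ 3 * X₁ := by
  have hΛ := hS.one_le_scale
  calc X₂ ≤ Λ * Λ := hX₂.trans_eq (sq Λ)
    _ ≤ c * s ^ 3 * X₁ := by
        gcongr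
        · exact (zero_le_one.trans hΛ).trans hS.scale_le_loss_pow_three
        · exact hS.scale_le_loss_pow_three

variable {ι κ : Type*} [Fintype ι] {T : Finset κ} {F : ι → κ → ℝ → ℂ} {Z : ι → ℝ}
  {c N Λ s D P : ℝ}

lemma integral_norm_prod_le_of_split [DecidableEq ι] {J : Finset ι} {A B Q : ℝ} (hP : 0 < P)
    (hA : 0 < A) (hB : 0 < B) (hFA : LorentzMeanSquareLE T (fun χ t => ∏ j ∈ J, F j χ t) (P * A))
    (hFB : LorentzMeanSquareLE T (fun χ t => ∏ j ∈ Jᶜ, F j χ t) (P * B)) (hAB : A * B ≤ Q) :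
    ∫ t : ℝ, (∑ χ ∈ T, ‖∏ j, F j χ t‖) / (t ^ 2 + 1) ≤ P * √Q := by
  have hint := hFA.integral_norm_mul_le (by positivity) (by positivity) hFB
  simp only [prod_mul_prod_compl] at hint
  calc _ ≤ √(P * A * (P * B)) := hint
    _ = P * √(A * B) := by
        rw [mul_mul_mul_comm, Real.sqrt_mul (by positivity), Real.sqrt_mul_self hP.le]
    _ ≤ P * √Q := by gcongr

lemma LorentzMeanSquareLE.of_mul_add {G : κ → ℝ → ℂ} {X q : ℝ} (hP : 0 ≤ P) (hD : 0 ≤ D)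
    (hs : 1 ≤ s) (hq : 2 * P * (D * s) ≤ q) (hG : LorentzMeanSquareLE T G (P * (D + X)))
    (hlt : D * s < X → LorentzMeanSquareLE T G q) : LorentzMeanSquareLE T G q := by
  rcases lt_or_ge (D * s) X with hX | hX
  · exact hlt hX
  · refine hG.mono (le_trans ?_ hq)
    have hDs : D ≤ D * s := le_mul_of_one_le_right hD hs
    calc P * (D + X) ≤ P * (D * s + D * s) := by gcongr
      _ = 2 * P * (D * s) := by ring

lemma integral_norm_prod_le_of_sq_lt (hS : ScaleCondition c N Λ s) (hc : 1 ≤ c) (hD : 1 ≤ D)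
    (hN : 1 ≤ N) (hP : 0 < P) (hZ : ∀ j, 1 ≤ Z j) (hprod : ∏ j, Z j ≤ Λ ^ 5) (hND : N ^ 2 < D)
    (hF : ∀ J : Finset ι, LorentzMeanSquareLE T (fun χ t => ∏ j ∈ J, F j χ t)
      (P * (D + ∏ j ∈ J, Z j))) :
    ∫ t : ℝ, (∑ χ ∈ T, ‖∏ j, F j χ t‖) / (t ^ 2 + 1) ≤ P * √(4 * c * s * (N + D) ^ 2) := by
  classical
  have hpos (J : Finset ι) : 0 < D + ∏ j ∈ J, Z j :=
    add_pos (by linarith) (prod_pos fun j _ => by linarith [hZ j])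
  refine integral_norm_prod_le_of_split hP (hpos univ) (hpos univᶜ) (hF univ) (hF univᶜ) ?_
  have hs := hS.one_le_loss
  have hcs : c ≤ c * s := le_mul_of_one_le_right (by linarith) hs
  have hZD : ∏ j, Z j ≤ c * D := by
    calc ∏ j, Z j ≤ c * N ^ 2 := hprod.trans hS.scale_pow_five_le
      _ ≤ c * D := by gcongr
  rw [compl_univ, prod_empty]
  calc (D + ∏ j, Z j) * (D + 1) ≤ (c * D + c * D) * (D + D) := by
        gcongr
        exact le_mul_of_one_le_left (by linarith) hc
    _ = 4 * c * D ^ 2 := by ring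
    _ ≤ 4 * (c * s) * (N + D) ^ 2 := by gcongr; linarith
    _ = _ := by ring

lemma integral_norm_prod_le_of_balanced [DecidableEq ι] (hS : ScaleCondition c N Λ s) (hc : 1 ≤ c)
    (hD : 1 ≤ D) (hP : 0 < P) (hZ : ∀ j, 1 ≤ Z j) (hprod : ∏ j, Z j ≤ Λ ^ 5)
    (hF : ∀ J : Finset ι, LorentzMeanSquareLE T (fun χ t => ∏ j ∈ J, F j χ t)
      (P * (D + ∏ j ∈ J, Z j))) {J : Finset ι} (hJ : ∏ j ∈ J, Z j ≤ Λ ^ 3)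
    (hJc : ∏ j ∈ Jᶜ, Z j ≤ Λ ^ 3) :
    ∫ t : ℝ, (∑ χ ∈ T, ‖∏ j, F j χ t‖) / (t ^ 2 + 1) ≤ P * √(4 * c * s * (N + D) ^ 2) := by
  have hpos (J : Finset ι) : 0 < D + ∏ j ∈ J, Z j :=
    add_pos (by linarith) (prod_pos fun j _ => by linarith [hZ j])
  refine integral_norm_prod_le_of_split hP (hpos J) (hpos Jᶜ) (hF J) (hF Jᶜ) ?_
  have hcs : 1 ≤ c * s := one_le_mul_of_one_le_of_one_le hc hS.one_le_loss
  calc (D + ∏ j ∈ J, Z j) * (D + ∏ j ∈ Jᶜ, Z j)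
      = D ^ 2 + D * (∏ j ∈ J, Z j + ∏ j ∈ Jᶜ, Z j) + ∏ j, Z j := by
        rw [← prod_mul_prod_compl J Z]
        ring
    _ ≤ D ^ 2 + D * (c * (N * s) + c * (N * s)) + c * N ^ 2 := by
        gcongr
        · exact hJ.trans hS.scale_pow_three_le
        · exact hJc.trans hS.scale_pow_three_le
        · exact hprod.trans hS.scale_pow_five_le
    _ ≤ c * s * D ^ 2 + D * (c * (N * s) + c * (N * s)) + c * s * N ^ 2 := by
        gcongr
        · exact le_mul_of_one_le_left (by positivity) hcs
        · exact le_mul_of_one_le_right (by linarith) hS.one_le_loss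
    _ = c * s * (N + D) ^ 2 := by ring
    _ ≤ 4 * (c * s * (N + D) ^ 2) := le_mul_of_one_le_left (by positivity) (by norm_num)
    _ = _ := by ring

lemma integral_norm_prod_le_of_long_factor (hS : ScaleCondition c N Λ s) (hc : 1 ≤ c)
    (hD : 1 ≤ D) (hN : 0 ≤ N) (hP : 0 < P) (hZ : ∀ j, 1 ≤ Z j) (hprod : ∏ j, Z j ≤ Λ ^ 5)
    (hF : ∀ J : Finset ι, LorentzMeanSquareLE T (fun χ t => ∏ j ∈ J, F j χ t)
      (P * (D + ∏ j ∈ J, Z j))) {J : Finset ι} (hJ : Λ ^ 3 ≤ ∏ j ∈ J, Z j)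
    (hFJ : LorentzMeanSquareLE T (fun χ t => ∏ j ∈ J, F j χ t) (P * (D * s))) :
    ∫ t : ℝ, (∑ χ ∈ T, ‖∏ j, F j χ t‖) / (t ^ 2 + 1) ≤ P * √(4 * c * s * (N + D) ^ 2) := by
  classical
  have hs := hS.one_le_loss
  have hΛ := hS.one_le_scale
  have hpos : 0 < D + ∏ j ∈ Jᶜ, Z j :=
    add_pos (by linarith) (prod_pos fun j _ => by linarith [hZ j])
  refine integral_norm_prod_le_of_split hP (by positivity) hpos hFJ (hF Jᶜ) ?_
  have hJc : ∏ j ∈ Jᶜ, Z j ≤ c * N := by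
    refine (prod_compl_le_of_le_prod (by positivity) (fun j => by linarith [hZ j]) ?_ hJ).trans
      hS.scale_sq_le
    rwa [← pow_add]
  calc D * s * (D + ∏ j ∈ Jᶜ, Z j) ≤ (N + D) * s * (c * D + c * N) := by
        gcongr
        · linarith
        · exact le_mul_of_one_le_left (by linarith) hc
    _ = c * s * (N + D) ^ 2 := by ring
    _ ≤ 4 * (c * s * (N + D) ^ 2) := le_mul_of_one_le_left (by positivity) (by norm_num)
    _ = _ := by ring

lemma integral_norm_prod_le_of_scaleCondition (hS : ScaleCondition c N Λ s) (hc : 1 ≤ c)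
    (hD : 1 ≤ D) (hN : 0 ≤ N) (hP : 0 < P) (hZ : ∀ j, 1 ≤ Z j) (hprod : ∏ j, Z j ≤ Λ ^ 5)
    (hF : ∀ J : Finset ι, LorentzMeanSquareLE T (fun χ t => ∏ j ∈ J, F j χ t)
      (P * (D + ∏ j ∈ J, Z j)))
    (hlong : ∀ j, Λ ^ 3 < Z j → LorentzMeanSquareLE T (F j) (P * (D * s)))
    (hpair : ∀ i j, Λ < Z i → Z i ≤ Z j → Z j < Λ ^ 2 → i ≠ j →
      LorentzMeanSquareLE T (fun χ t => F i χ t * F j χ t) (P * (D * s))) :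
    ∫ t : ℝ, (∑ χ ∈ T, ‖∏ j, F j χ t‖) / (t ^ 2 + 1) ≤ P * √(4 * c * s * (N + D) ^ 2) := by
  classical
  rcases exists_balanced_or_exists_large (fun j => zero_le_one.trans (hZ j)) hS.one_le_scale hprod
    with ⟨J, hJ, hJc⟩ | ⟨j, hj⟩ | ⟨i, j, hij, hi, hle, hj, hmul⟩
  · exact integral_norm_prod_le_of_balanced hS hc hD hP hZ hprod hF hJ hJc
  · refine integral_norm_prod_le_of_long_factor hS hc hD hN hP hZ hprod hF (J := {j}) ?_ ?_
    · simpa only [prod_singleton] using hj.le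
    · simpa only [prod_singleton] using hlong j hj
  · refine integral_norm_prod_le_of_long_factor hS hc hD hN hP hZ hprod hF (J := {i, j}) ?_ ?_
    · simpa only [prod_pair hij] using hmul.le
    · simpa only [prod_pair hij] using hpair i j hi hle hj hij

end Splitting

/-! ### The first moment of a product -/

lemma exists_integral_norm_prod_le_of_scaleCondition {ι : Type*} [Fintype ι] {δ c : ℝ} (hδ : 0 < δ)
    (hc : 1 ≤ c) : ∃ K : ℝ, 1 ≤ K ∧ ∀ d : ℕ, 2 ≤ d → ∀ N : ℝ, 1 ≤ N →
      ∀ T : Finset (DirichletCharacter ℂ d), (∀ χ ∈ T, χ.IsPrimitive) →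
      ∀ (F : ι → DirichletCharacter ℂ d → ℝ → ℂ) (Z : ι → ℝ) (Λ s : ℝ), ScaleCondition c N Λ s →
      (∀ j, 1 ≤ Z j) → ∏ j, 2 * Z j ≤ c * N ^ 2 → ∏ j, Z j ≤ Λ ^ 5 →
      (∀ j, IsDirichletPoly (F j) (Z j) (2 * Z j) (1 + Real.log (2 * Z j))) →
      (∀ j, Λ < Z j → IsMonotoneDirichletPoly (F j) (Z j) (1 + Real.log (2 * Z j))) →
      ∫ t : ℝ, (∑ χ ∈ T, ‖∏ j, F j χ t‖) / (t ^ 2 + 1) ≤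
        K * N ^ δ * √(4 * c * s * (N + d) ^ 2) := by
  classical
  obtain ⟨K₁, hK₁, hprods⟩ := exists_lorentzMeanSquareLE_prod (ι := ι) hδ hc
  obtain ⟨K₂, hK₂, hlong⟩ := exists_lorentzMeanSquareLE_of_le_mul hδ hc
  obtain ⟨K₃, hK₃, hpair⟩ := exists_lorentzMeanSquareLE_mul_of_le_mul hδ hc
  refine ⟨2 * K₁ + K₂ + K₃, by linarith, ?_⟩
  intro d hd N hN T hT F Z Λ s hS hZ hZN hZΛ hF hmono
  have hd1 : (1 : ℝ) ≤ d := Nat.one_le_cast.mpr (by omega)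
  have hN0 : 0 < N := by linarith
  have hs := hS.one_le_loss
  have hP : 0 < (2 * K₁ + K₂ + K₃) * N ^ δ := by positivity
  have hZJ (J : Finset ι) : 0 < ∏ j ∈ J, Z j := prod_pos fun j _ => by linarith [hZ j]
  have hsub (J : Finset ι) : ∏ j ∈ J, 2 * Z j ≤ c * N ^ 2 :=
    (prod_le_prod_of_subset_of_one_le (subset_univ J) (fun j _ => by linarith [hZ j])
      fun j _ _ => by linarith [hZ j]).trans hZN
  have hprod (J : Finset ι) := hprods d hd N hN T F Z hZ hZN hF J
  have hprod' (J : Finset ι) : LorentzMeanSquareLE T (fun χ t => ∏ j ∈ J, F j χ t)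
      ((2 * K₁ + K₂ + K₃) * N ^ δ * (d + ∏ j ∈ J, Z j)) := by
    refine (hprod J).mono ?_
    have := hZJ J
    gcongr
    linarith
  rcases lt_or_ge (N ^ 2) (d : ℝ) with hND | hdN
  · exact integral_norm_prod_le_of_sq_lt hS hc hd1 hN hP hZ hZΛ hND hprod'
  have hZ₁ (j : ι) : 2 * Z j ≤ c * N ^ 2 := by simpa only [prod_singleton] using hsub {j}
  refine integral_norm_prod_le_of_scaleCondition hS hc hd1 hN0.le hP hZ hZΛ hprod'
    (fun j hj => ?_) fun i j hi hle hj hij => ?_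
  · have hΛZ : Λ < Z j := (le_self_pow₀ hS.one_le_scale three_ne_zero).trans_lt hj
    refine (hlong d hd N hN hdN T hT (F j) (Z j) s (hmono j hΛZ) (hZ j) (hZ₁ j) hs
      (hS.le_loss_mul_scale_pow_three.trans (by gcongr))).mono ?_
    gcongr
    linarith
  · have hZij : 2 * Z i * (2 * Z j) ≤ c * N ^ 2 := by simpa only [prod_pair hij] using hsub {i, j}
    refine LorentzMeanSquareLE.of_mul_add (P := K₁ * N ^ δ) (D := d) (X := Z i * Z j)
      (by positivity) (by positivity) hs ?_
      (by simpa only [prod_pair hij] using hprod {i, j}) fun hds => ?_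
    · rw [← mul_assoc 2]
      gcongr
      linarith
    · refine (hpair d hd N hN hdN T hT (F i) (F j) (Z i) (Z j) s (hmono i hi)
        (hmono j (hi.trans_le hle)) hs (hZ i) hle (hS.le_mul hi.le hj.le) hds.le (hZ₁ j)
        (le_trans (by nlinarith [hZ i, hZ j]) hZij)).mono ?_
      gcongr
      linarith

lemma exists_integral_norm_prod_le {ι : Type*} [Fintype ι] {α ε b : ℝ} (hα : 3 / 8 ≤ α)
    (hα' : α < 2 / 5) (hε : 0 < ε) (hε' : ε ≤ 1 / 100) (hb : 1 ≤ b) :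
    ∃ C : ℝ, 0 < C ∧ ∀ d : ℕ, 2 ≤ d → ∀ N : ℝ, 1 ≤ N →
      ∀ T : Finset (DirichletCharacter ℂ d), (∀ χ ∈ T, χ.IsPrimitive) →
      ∀ (F : ι → DirichletCharacter ℂ d → ℝ → ℂ) (Z : ι → ℝ), (∀ j, 1 ≤ Z j) →
      ∏ j, 2 * Z j ≤ b * N ^ (5 * α - ε) →
      (∀ j, IsDirichletPoly (F j) (Z j) (2 * Z j) (1 + Real.log (2 * Z j))) →
      (∀ j, N ^ (1 / 3 : ℝ) < Z j →
        IsMonotoneDirichletPoly (F j) (Z j) (1 + Real.log (2 * Z j))) →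
      ∫ t : ℝ, (∑ χ ∈ T, ‖∏ j, F j χ t‖) / (t ^ 2 + 1) ≤
        C * ((N + d) * N ^ ((3 * α - 1) / 2)) := by
  have hb5 : 1 ≤ b ^ 5 := one_le_pow₀ hb
  obtain ⟨K, hK, hmain⟩ := exists_integral_norm_prod_le_of_scaleCondition (ι := ι)
    (by positivity : 0 < ε / 100) hb5
  refine ⟨K * √(4 * b ^ 5), by positivity, fun d hd N hN T hT F Z hZ hZN hF hmono => ?_⟩
  have hN0 : 0 < N := by linarith
  have hS := scaleCondition_rpow hα hα' hε hε' hb hN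
  have hlength : b * N ^ (5 * α - ε) ≤ (b * N ^ (α - ε / 5)) ^ 5 := by
    rw [mul_pow, ← rpow_mul_natCast hN0.le]
    gcongr
    · exact le_self_pow₀ hb (by norm_num)
    · push_cast
      linarith
  have hZ2 : ∏ j, Z j ≤ ∏ j, 2 * Z j :=
    prod_le_prod (fun j _ => by linarith [hZ j]) fun j _ => by linarith [hZ j]
  have hcutoff : N ^ (1 / 3 : ℝ) ≤ b * N ^ (α - ε / 5) :=
    (rpow_le_rpow_of_exponent_le hN (by linarith)).trans (le_mul_of_one_le_left (by positivity) hb)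
  refine (hmain d hd N hN T hT F Z _ _ hS hZ ((hZN.trans hlength).trans hS.scale_pow_five_le)
    (hZ2.trans (hZN.trans hlength)) hF fun j hj => hmono j (hcutoff.trans_lt hj)).trans_eq ?_
  have hexp : N ^ (ε / 100) * √(N ^ (3 * α - 1 - ε / 50)) = N ^ ((3 * α - 1) / 2) := by
    rw [Real.sqrt_eq_rpow, ← rpow_mul hN0.le, ← rpow_add hN0]
    ring_nf
  rw [Real.sqrt_mul (by positivity), Real.sqrt_mul (by positivity), Real.sqrt_sq (by positivity),
    ← hexp]
  ring

lemma add_mul_rpow_le_add_rpow_mul_rpow_div {k α N D : ℝ} (hk : 2 ≤ k)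
    (hα : α * (5 * k - 2) = 2 * k - 1) (hN : 0 < N) (hD : 0 < D) :
    (N + D) * N ^ ((3 * α - 1) / 2) ≤ (N + D) ^ k * N ^ (1 - (k - 1) * (5 * α) / 2) / D := by
  rw [show (3 * α - 1) / 2 = (k - 2) + (1 - (k - 1) * (5 * α) / 2) by linarith, rpow_add hN,
    le_div_iff₀ hD]
  calc (N + D) * (N ^ (k - 2) * N ^ (1 - (k - 1) * (5 * α) / 2)) * D
      = (N + D) * D * N ^ (k - 2) * N ^ (1 - (k - 1) * (5 * α) / 2) := by ring
    _ ≤ (N + D) * (N + D) * (N + D) ^ (k - 2) * N ^ (1 - (k - 1) * (5 * α) / 2) := by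
        gcongr <;> linarith
    _ = _ := by
        rw [rpow_sub (by positivity), rpow_two]
        field_simp

lemma isDirichletPoly_sum_Ioc {d : ℕ} {X : ℝ} (hX : 0 ≤ X) {a : ℕ → ℂ}
    (ha : ∀ n : ℕ, 1 ≤ n → ‖a n‖ ≤ 1 + Real.log n) :
    IsDirichletPoly (fun (χ : DirichletCharacter ℂ d) t => ∑ n ∈ Ioc ⌊X⌋₊ ⌊2 * X⌋₊,
      a n * χ n * (n : ℂ) ^ (-(1 / 2 : ℂ) - I * t)) (max X 1) (2 * max X 1)
      (1 + Real.log (2 * max X 1)) := by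
  refine ⟨Ioc ⌊X⌋₊ ⌊2 * X⌋₊, a, fun n hn => ?_, fun χ t => rfl⟩
  obtain ⟨hXn, hnX⟩ := mem_Ioc.mp hn
  have hn1 : 1 ≤ n := by omega
  have hn2 : (n : ℝ) ≤ 2 * max X 1 :=
    ((Nat.le_floor_iff (by linarith)).mp hnX).trans (by gcongr; exact le_max_left X 1)
  refine ⟨hn1, max_le (Nat.lt_of_floor_lt hXn).le (Nat.one_le_cast.mpr hn1), hn2,
    (ha n hn1).trans ?_⟩
  gcongr

lemma isMonotoneDirichletPoly_sum_Ioc {d : ℕ} {X : ℝ} (hX : 1 ≤ X) {a : ℕ → ℂ}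
    (ha : ∀ n : ℕ, 1 ≤ n → ‖a n‖ ≤ 1 + Real.log n)
    (hmono : ∃ w : ℕ → ℝ, Monotone w ∧ 0 ≤ w 0 ∧ ∀ n, a n = w n) :
    IsMonotoneDirichletPoly (fun (χ : DirichletCharacter ℂ d) t => ∑ n ∈ Ioc ⌊X⌋₊ ⌊2 * X⌋₊,
      a n * χ n * (n : ℂ) ^ (-(1 / 2 : ℂ) - I * t)) X (1 + Real.log (2 * X)) := by
  obtain ⟨w, hw, hw0, haw⟩ := hmono
  have h1 : 1 ≤ ⌊2 * X⌋₊ := (Nat.one_le_floor_iff _).mpr (by linarith)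
  refine ⟨w, hw, hw0, ?_, fun χ t => by simp only [haw, halfLinePoly, id]⟩
  calc w ⌊2 * X⌋₊ ≤ ‖a ⌊2 * X⌋₊‖ := by
        rw [haw, norm_real]
        exact le_abs_self _
    _ ≤ 1 + Real.log ⌊2 * X⌋₊ := ha _ h1
    _ ≤ 1 + Real.log (2 * X) := by
        gcongr
        exact Nat.floor_le (by linarith)

lemma sumPrimitive_eq_sum {d : ℕ} [NeZero d] (f : DirichletCharacter ℂ d → ℝ) :
    sumPrimitive d f =
      ∑ χ ∈ (Set.toFinite {χ : DirichletCharacter ℂ d | χ.IsPrimitive}).toFinset, f χ :=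
  finsum_mem_eq_finite_toFinset_sum f _

lemma norm_le_one_add_log_of_eq_one_or_moebius_or_log {a : ℕ → ℂ}
    (ha : a = (fun _ => 1) ∨ a = (fun n => ((ArithmeticFunction.moebius n : ℤ) : ℂ)) ∨
      a = fun n : ℕ => (Real.log n : ℂ)) (n : ℕ) : ‖a n‖ ≤ 1 + Real.log n := by
  have hlog := Real.log_natCast_nonneg n
  rcases ha with rfl | rfl | rfl
  · simpa using hlog
  · have hμ : (|ArithmeticFunction.moebius n| : ℝ) ≤ 1 :=
      mod_cast ArithmeticFunction.abs_moebius_le_one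
    rw [norm_intCast]
    linarith
  · rw [norm_real, Real.norm_of_nonneg hlog]
    linarith

lemma exists_monotone_of_eq_one_or_log {a : ℕ → ℂ}
    (ha : a = (fun _ => 1) ∨ a = fun n : ℕ => (Real.log n : ℂ)) :
    ∃ w : ℕ → ℝ, Monotone w ∧ 0 ≤ w 0 ∧ ∀ n, a n = w n := by
  rcases ha with rfl | rfl
  · exact ⟨fun _ => 1, monotone_const, zero_le_one, fun _ => ofReal_one.symm⟩
  · refine ⟨fun n => Real.log n, fun m n hmn => ?_, Real.log_natCast_nonneg 0, fun _ => rfl⟩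
    rcases m.eq_zero_or_pos with rfl | hm
    · simpa using Real.log_natCast_nonneg n
    · dsimp only
      gcongr

lemma one_le_log_mul {x y : ℝ} (hx : 2 ≤ x) (hy : 2 ≤ y) : 1 ≤ Real.log (x * y) := by
  rw [Real.le_log_iff_exp_le (by positivity)]
  nlinarith [Real.exp_one_lt_three]

theorem dirichlet_polynomial_decomposition_bound_general_general {ι : Type*} [Fintype ι] {ε k : ℝ}
    (hε : 0 < ε) (hk : 2 ≤ k) :
    ∃ C > (0 : ℝ), ∀ d : ℕ, 2 ≤ d → ∀ N : ℝ, 1 ≤ N →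
      ∀ Nf : ι → ℝ, (∀ j, 1 / 2 ≤ Nf j) →
      ∏ j, Nf j ≤ N ^ ((2 - 1 / (5 * k - 2)) - ε) →
      ∀ a : ι → ℕ → ℂ, (∀ j, ∀ n : ℕ, 1 ≤ n → ‖a j n‖ ≤ 1 + Real.log n) →
      (∀ j, N ^ (1 / 3 : ℝ) < Nf j →
        ∃ w : ℕ → ℝ, Monotone w ∧ 0 ≤ w 0 ∧ ∀ n, a j n = w n) →
      ∫ t : ℝ, sumPrimitive d (fun χ => ‖∏ j, ∑ n ∈ Ioc ⌊Nf j⌋₊ ⌊2 * Nf j⌋₊,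
          a j n * χ (n : ZMod d) * (n : ℂ) ^ (-(1 / 2 : ℂ) - I * t)‖) / (t ^ 2 + 1) ≤
        C * ((N + d) ^ k * N ^ (1 - (k - 1) * (2 - 1 / (5 * k - 2)) / 2) / d) := by
  obtain ⟨α, hΘ⟩ : ∃ α, 2 - 1 / (5 * k - 2) = 5 * α := ⟨(2 - 1 / (5 * k - 2)) / 5, by ring⟩
  have hk0 : 0 < 5 * k - 2 := by linarith
  have hα : α * (5 * k - 2) = 2 * k - 1 := by
    have hinv : 1 / (5 * k - 2) * (5 * k - 2) = 1 := one_div_mul_cancel hk0.ne'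
    linear_combination (-1 / 5) * (5 * k - 2) * hΘ - (1 / 5) * hinv
  obtain ⟨C, hC, hmain⟩ := exists_integral_norm_prod_le (ι := ι) (α := α) (ε := min ε (1 / 100))
    (b := 4 ^ Fintype.card ι) (by nlinarith) (by nlinarith) (lt_min hε (by norm_num))
    (min_le_right _ _) (one_le_pow₀ (by norm_num))
  refine ⟨C, hC, fun d hd N hN Nf hNf hprod a ha hmono => ?_⟩
  have : NeZero d := ⟨by omega⟩
  have hlength : ∏ j, 2 * max (Nf j) 1 ≤ 4 ^ Fintype.card ι * N ^ (5 * α - min ε (1 / 100)) := by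
    calc ∏ j, 2 * max (Nf j) 1 ≤ ∏ j, 4 * Nf j :=
          prod_le_prod (fun j _ => by positivity) fun j _ => by
            have : max (Nf j) 1 ≤ 2 * Nf j := max_le (by linarith [hNf j]) (by linarith [hNf j])
            linarith
      _ = 4 ^ Fintype.card ι * ∏ j, Nf j := by rw [prod_mul_distrib, prod_const, card_univ]
      _ ≤ _ := by
          rw [hΘ] at hprod
          gcongr
          exact hprod.trans (rpow_le_rpow_of_exponent_le hN (by linarith [min_le_left ε (1 / 100)]))
  simp only [sumPrimitive_eq_sum]
  refine (hmain d hd N hN _ (fun χ hχ => by simpa using hχ) _ _ (fun j => le_max_right (Nf j) 1)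
    hlength (fun j => isDirichletPoly_sum_Ioc (by linarith [hNf j]) (ha j)) fun j hj => ?_).trans ?_
  · have hNj : 1 ≤ Nf j := by
      have := (one_le_rpow hN (by norm_num : (0 : ℝ) ≤ 1 / 3)).trans_lt hj
      exact ((lt_max_iff.mp this).resolve_right (lt_irrefl _)).le
    rw [max_eq_left hNj] at hj ⊢
    exact isMonotoneDirichletPoly_sum_Ioc hNj (ha j) (hmono j hj)
  · rw [hΘ]
    gcongr
    exact add_mul_rpow_le_add_rpow_mul_rpow_div hk hα (by linarith) (by positivity)

/-- Mean value bound for products of 40 Dirichlet polynomials with total length at most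
`N^{Θ_k-ε}` where `Θ_k = 2 - 1/(5k-2)`, with coefficients `1`, `μ(n)` or `log n` (Möbius
coefficients only allowed for short polynomials): the first moment over primitive characters
mod `d` and `t`-average is `≪ ((N+d)^k N^{1-(k-1)Θ_k/2} / d) (log dN)^{O(1)}`. -/
theorem dirichlet_polynomial_decomposition_bound_general (ε : ℝ) (hε : 0 < ε)
    (k : ℕ) (hk2 : 2 ≤ k) (hkeven : Even k) :
    ∃ C > (0 : ℝ), ∃ B > (0 : ℝ), ∀ d : ℕ, 2 ≤ d → ∀ N : ℝ, 2 ≤ N →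
      ∀ Nf : Fin 40 → ℝ, (∀ j, 1 / 2 ≤ Nf j) →
      (∏ j, Nf j) ≤ N ^ ((2 - 1 / (5 * (k : ℝ) - 2)) - ε) →
      ∀ a : Fin 40 → ℕ → ℂ,
      (∀ j, a j = (fun _ => (1 : ℂ)) ∨
            a j = (fun n => ((ArithmeticFunction.moebius n : ℤ) : ℂ)) ∨
            a j = (fun n : ℕ => (Real.log n : ℂ))) →
      (∀ j, N ^ (1 / 10 : ℝ) < Nf j →
            a j = (fun _ => (1 : ℂ)) ∨ a j = (fun n : ℕ => (Real.log n : ℂ))) →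
      (∫ t : ℝ, sumPrimitive d (fun χ =>
          ‖∏ j : Fin 40, ∑ n ∈ Finset.Ioc ⌊Nf j⌋₊ ⌊2 * Nf j⌋₊,
              a j n * χ (n : ZMod d) * (n : ℂ) ^ (-(1 / 2 : ℂ) - Complex.I * t)‖) / (t ^ 2 + 1))
        ≤ C * ((N + d) ^ k * N ^ (1 - ((k : ℝ) - 1) * (2 - 1 / (5 * (k : ℝ) - 2)) / 2) / d) *
            Real.log (d * N) ^ (B : ℝ) := by
  obtain ⟨C, hC, hmain⟩ := dirichlet_polynomial_decomposition_bound_general_general (ι := Fin 40)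
    hε (k := k) (mod_cast hk2)
  refine ⟨C, hC, 1, one_pos, fun d hd N hN Nf hNf hprod a ha hlarge => ?_⟩
  have hN1 : 1 ≤ N := by linarith
  have hlog : 1 ≤ Real.log (d * N) := one_le_log_mul (mod_cast hd) hN
  have hcutoff : N ^ (1 / 10 : ℝ) ≤ N ^ (1 / 3 : ℝ) :=
    rpow_le_rpow_of_exponent_le hN1 (by norm_num)
  have hbound := hmain d hd N hN1 Nf hNf hprod a
    (fun j n _ => norm_le_one_add_log_of_eq_one_or_moebius_or_log (ha j) n)
    fun j hj => exists_monotone_of_eq_one_or_log (hlarge j (hcutoff.trans_lt hj))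
  rw [rpow_natCast] at hbound
  rw [rpow_one]
  exact hbound.trans (le_mul_of_one_le_right (by positivity) hlog)
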